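/- For all integers 0 < d < n and every M < +∞, there exist ε > 0 (depending only on n, d) and C ≥ 1 (depending only on n, d, M) with the following property. Let E ⊆ ℝ^n be a closed set containing the origin such that for every x ∈ E ∩ B(0,10) and every 0 < r ≤ 10 there is a d-dimensional affine plane P(x,r) containing x with dist(y,P(x,r)) ≤ εr for all y ∈ E ∩ B(x,r) and dist(y,E) ≤ εr for all y ∈ P(x,r) ∩ B(x,r). Assume in addition that J₁(x) := Σ_{k ≥ 0} β₁(x,10^{-k})² ≤ M for all x ∈ E ∩ B(0,10). Then there is a bijective map g : ℝ^n → ℝ^n such that E ∩ B(0,1) = g(P(0,10)) ∩ B(0,1) and C⁻¹|x−y| ≤ |g(x) − g(y)| ≤ C|x−y| for all x, y ∈ ℝ^n. (Theorem 1.18.) -/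

import Mathlib

open Metric Set MeasureTheory
open scoped ENNReal

noncomputable section

/-- `ℝⁿ`. -/
abbrev V (n : ℕ) := EuclideanSpace ℝ (Fin n)

/-- `P` is a `d`-dimensional affine plane of `ℝⁿ`. -/
def IsAffinePlane (n d : ℕ) (P : Set (V n)) : Prop :=
  ∃ Q : AffineSubspace ℝ (V n), (Q : Set (V n)) = P ∧
    Module.finrank ℝ Q.direction = d ∧ (Q : Set (V n)).Nonempty

/-- The Jones number `β₁(x,r) = inf_P r^{-d} ∫_{E ∩ B(x,r)} dist(y,P)/r dH^d(y)`,
the infimum being over `d`-planes `P` meeting `B(x,r)`; valued in `ℝ≥0∞`. -/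
def beta1 (n d : ℕ) (E : Set (V n)) (x : V n) (r : ℝ) : ℝ≥0∞ :=
  ⨅ P ∈ {P : Set (V n) | IsAffinePlane n d P ∧ (P ∩ ball x r).Nonempty},
    (∫⁻ y in E ∩ ball x r, ENNReal.ofReal (infDist y P / r) ∂(μH[(d : ℝ)])) /
      ENNReal.ofReal (r ^ d)

section Brouwer

variable {H : Type*} [NormedAddCommGroup H] [InnerProductSpace ℝ H] [FiniteDimensional ℝ H]

/-- `det (1 + t A)` is a polynomial in `t` of degree at most `dim H`, hence its value at `1` is
given by Lagrange interpolation. -/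
theorem det_one_add_eq_lagrange (v : ℕ → ℝ) (hv : Function.Injective v) (A : H →L[ℝ] H) :
    (ContinuousLinearMap.id ℝ H + A).det =
      ∑ i ∈ Finset.range (Module.finrank ℝ H + 1),
        (Lagrange.basis (Finset.range (Module.finrank ℝ H + 1)) v i).eval 1 *
          (ContinuousLinearMap.id ℝ H + v i • A).det := by
  classical
  set m := Module.finrank ℝ H
  let bs := Module.finBasis ℝ H
  let B : Matrix (Fin m) (Fin m) ℝ := LinearMap.toMatrix bs bs (A : H →ₗ[ℝ] H)
  let p : Polynomial ℝ :=
    Matrix.det ((Polynomial.X : Polynomial ℝ) • B.map Polynomial.C +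
      (1 : Matrix (Fin m) (Fin m) ℝ).map Polynomial.C)
  have hp : ∀ t : ℝ, p.eval t = (ContinuousLinearMap.id ℝ H + t • A).det := by
    intro t
    have h1 : (ContinuousLinearMap.id ℝ H + t • A).det =
        Matrix.det (LinearMap.toMatrix bs bs
          ((ContinuousLinearMap.id ℝ H + t • A : H →L[ℝ] H) : H →ₗ[ℝ] H)) := by
      rw [LinearMap.det_toMatrix]
    rw [h1]
    have h2 : LinearMap.toMatrix bs bs
        ((ContinuousLinearMap.id ℝ H + t • A : H →L[ℝ] H) : H →ₗ[ℝ] H) = 1 + t • B := by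
      have : ((ContinuousLinearMap.id ℝ H + t • A : H →L[ℝ] H) : H →ₗ[ℝ] H) =
        LinearMap.id + t • (A : H →ₗ[ℝ] H) := rfl
      rw [this, map_add, map_smul, LinearMap.toMatrix_id]
    rw [h2]
    change Polynomial.evalRingHom t (Matrix.det _) = _
    rw [RingHom.map_det]
    congr 1
    ext i j
    simp [Matrix.one_apply, apply_ite (Polynomial.eval t), add_comm]
    ring
  have hdeg : p.degree < (Finset.range (m + 1)).card := by
    have h := Polynomial.natDegree_det_X_add_C_le B (1 : Matrix (Fin m) (Fin m) ℝ)
    rw [Finset.card_range]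
    refine lt_of_le_of_lt Polynomial.degree_le_natDegree ?_
    rw [Fintype.card_fin] at h
    exact_mod_cast Nat.lt_succ_of_le h
  have h := Lagrange.eq_interpolate (s := Finset.range (m + 1)) (v := v) hv.injOn hdeg
  have h3 := congrArg (Polynomial.eval 1) h
  rw [hp 1, one_smul, Lagrange.interpolate_apply, Polynomial.eval_finsetSum] at h3
  rw [h3]
  refine Finset.sum_congr rfl fun i _ => ?_
  rw [Polynomial.eval_mul, Polynomial.eval_C, hp, mul_comm]

theorem sum_lagrange_basis_eval_one (v : ℕ → ℝ) (hv : Function.Injective v) (m : ℕ) :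
    ∑ i ∈ Finset.range (m + 1), (Lagrange.basis (Finset.range (m + 1)) v i).eval 1 = 1 := by
  rw [← Polynomial.eval_finsetSum, Lagrange.sum_basis hv.injOn ⟨0, by simp⟩, Polynomial.eval_one]

/-- A Lipschitz perturbation of the identity supported in a ball maps the ball onto itself when
the Lipschitz constant is small. -/
theorem image_ball_eq_of_lipschitz_perturbation {u : H → H} {K : NNReal} (hu : LipschitzWith K u)
    (hK : K < 1) {ρ : ℝ} (hu0 : ∀ x, x ∉ ball (0 : H) ρ → u x = 0) :
    Function.Injective (fun x => x + u x) ∧ (fun x => x + u x) '' ball 0 ρ = ball 0 ρ := by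
  have happ : ApproximatesLinearOn (fun x => x + u x)
      ((ContinuousLinearEquiv.refl ℝ H : H ≃L[ℝ] H) : H →L[ℝ] H) univ K := by
    intro x _ y _
    have := hu.dist_le_mul x y
    rw [dist_eq_norm, dist_eq_norm] at this
    have h : x + u x - (y + u y) - (x - y) = u x - u y := by abel
    rw [← h] at this
    exact this
  have hc : Subsingleton H ∨
      K < ‖((ContinuousLinearEquiv.refl ℝ H : H ≃L[ℝ] H).symm : H →L[ℝ] H)‖₊⁻¹ := by
    rcases subsingleton_or_nontrivial H with h | h
    · exact Or.inl h
    · right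
      have : ‖((ContinuousLinearEquiv.refl ℝ H : H ≃L[ℝ] H).symm : H →L[ℝ] H)‖₊ = 1 := by
        ext
        exact ContinuousLinearMap.norm_id
      rw [this]; simpa using hK
  have hinj : Function.Injective (fun x => x + u x) := injOn_univ.1 (happ.injOn hc)
  have hsurj := happ.surjective hc
  refine ⟨hinj, ?_⟩
  ext y
  constructor
  · rintro ⟨x, hx, rfl⟩
    by_contra hy
    have : x + u x = x := hinj (by simp [hu0 _ hy])
    exact hy (by simpa only [this] using hx)
  · intro hy
    obtain ⟨x, hx⟩ := hsurj y
    refine ⟨x, ?_, hx⟩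
    by_contra h
    rw [← hx] at hy
    simp only [hu0 _ h, add_zero] at hy
    exact h hy

variable [MeasurableSpace H] [BorelSpace H]

/-- For a Lipschitz perturbation `u` of the identity vanishing outside a ball, the integral of the
Jacobian determinant of `x + u x` over the ball is its volume. -/
theorem integral_det_eq_of_lipschitz_perturbation {u : H → H} {K : NNReal} (hu : LipschitzWith K u)
    {ρ : ℝ} (hu0 : ∀ x, x ∉ ball (0 : H) ρ → u x = 0) :
    ∫ x in ball (0 : H) ρ ∩ {x | DifferentiableAt ℝ u x},
      (ContinuousLinearMap.id ℝ H + fderiv ℝ u x).det ∂(μH[Module.finrank ℝ H]) =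
      (μH[Module.finrank ℝ H] : Measure H).real (ball 0 ρ) := by
  set μ : Measure H := μH[Module.finrank ℝ H] with hμ
  set s : Set H := ball (0 : H) ρ ∩ {x | DifferentiableAt ℝ u x} with hs
  have hsm : MeasurableSet s := measurableSet_ball.inter (measurableSet_of_differentiableAt ℝ u)
  have hμs : μ s ≠ ∞ := ne_top_of_le_ne_top measure_ball_lt_top.ne (measure_mono inter_subset_left)
  have hbound : ∀ x, ‖fderiv ℝ u x‖ ≤ K := fun x => norm_fderiv_le_of_lipschitz ℝ hu
  have hnear : ∃ η > 0, ∀ B : H →L[ℝ] H, ‖B‖ < η →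
      0 < (ContinuousLinearMap.id ℝ H + B).det := by
    have hcont : Continuous fun B : H →L[ℝ] H => (ContinuousLinearMap.id ℝ H + B).det :=
      ContinuousLinearMap.continuous_det.comp (continuous_const.add continuous_id)
    have hmem : {B : H →L[ℝ] H | 0 < (ContinuousLinearMap.id ℝ H + B).det} ∈ nhds 0 := by
      refine (isOpen_lt continuous_const hcont).mem_nhds ?_
      have : (ContinuousLinearMap.id ℝ H).det = 1 := LinearMap.det_id
      simp [this]
    obtain ⟨η, hη, h⟩ := Metric.mem_nhds_iff.1 hmem
    exact ⟨η, hη, fun B hB => h (by simpa using hB)⟩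
  obtain ⟨η, hη, hηB⟩ := hnear
  have hint : ∀ t : ℝ, IntegrableOn
      (fun x => (ContinuousLinearMap.id ℝ H + t • fderiv ℝ u x).det) s μ := by
    intro t
    have hcont : Continuous fun B : H →L[ℝ] H => (ContinuousLinearMap.id ℝ H + t • B).det :=
      ContinuousLinearMap.continuous_det.comp (continuous_const.add (continuous_id.const_smul t))
    obtain ⟨C, hC⟩ := (isCompact_closedBall (0 : H →L[ℝ] H) K).exists_bound_of_continuousOn
      hcont.continuousOn
    refine Measure.integrableOn_of_bounded (M := C) hμs ?_ ?_
    · exact (hcont.measurable.comp (measurable_fderiv ℝ u)).aestronglyMeasurable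
    · exact Filter.Eventually.of_forall fun x => hC _ (by simpa using hbound x)
  have hsmall : ∀ t : ℝ, 0 ≤ t → t * K < 1 → t * K < η →
      ∫ x in s, (ContinuousLinearMap.id ℝ H + t • fderiv ℝ u x).det ∂μ = μ.real (ball 0 ρ) := by
    intro t ht htK htη
    have hlip : LipschitzWith (t.toNNReal * K) fun x => t • u x := by
      refine LipschitzWith.of_dist_le_mul fun x y => ?_
      rw [dist_smul₀, Real.norm_eq_abs, abs_of_nonneg ht]
      push_cast
      rw [Real.coe_toNNReal t ht, mul_assoc]
      exact mul_le_mul_of_nonneg_left (hu.dist_le_mul x y) ht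
    have hlt : t.toNNReal * K < 1 := by
      rw [← NNReal.coe_lt_coe]; push_cast; rw [Real.coe_toNNReal t ht]; exact htK
    obtain ⟨hinj, himg⟩ := image_ball_eq_of_lipschitz_perturbation hlip hlt
      (ρ := ρ) (fun x hx => by simp [hu0 x hx])
    have hdet : ∀ x, 0 < (ContinuousLinearMap.id ℝ H + t • fderiv ℝ u x).det := by
      intro x
      refine hηB _ (lt_of_le_of_lt ?_ htη)
      rw [norm_smul, Real.norm_eq_abs, abs_of_nonneg ht]
      exact mul_le_mul_of_nonneg_left (hbound x) ht
    have hlipF : LipschitzWith (1 + t.toNNReal * K) fun x => x + t • u x :=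
      LipschitzWith.id.add hlip
    have hnull : μ ((fun x => x + t • u x) '' (ball 0 ρ \ s)) = 0 := by
      have h1 : μ (ball 0 ρ \ s) = 0 := by
        refine measure_mono_null ?_ (hu.ae_differentiableAt (μ := μ))
        intro x hx
        simp only [hs, Set.mem_sdiff, mem_inter_iff, not_and] at hx
        exact hx.2 hx.1
      have h2 := hlipF.hausdorffMeasure_image_le (d := Module.finrank ℝ H) (by positivity)
        (ball 0 ρ \ s)
      rw [← hμ, h1, mul_zero] at h2
      exact le_antisymm h2 bot_le
    have hcv := lintegral_abs_det_fderiv_eq_addHaar_image μ hsm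
      (f := fun x => x + t • u x)
      (f' := fun x => ContinuousLinearMap.id ℝ H + t • fderiv ℝ u x)
      (fun x hx => ((hasFDerivAt_id x).add ((hx.2.hasFDerivAt).const_smul t)).hasFDerivWithinAt)
      hinj.injOn
    have hvol : μ ((fun x => x + t • u x) '' s) = μ (ball 0 ρ) := by
      apply le_antisymm
      · rw [← himg]; exact measure_mono (image_mono inter_subset_left)
      · have hsub : ball (0 : H) ρ = (fun x => x + t • u x) '' s ∪
            (fun x => x + t • u x) '' (ball 0 ρ \ s) := by
          rw [← image_union, Set.union_sdiff_cancel inter_subset_left, himg]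
        calc μ (ball 0 ρ) ≤ μ ((fun x => x + t • u x) '' s) +
              μ ((fun x => x + t • u x) '' (ball 0 ρ \ s)) := by
              conv_lhs => rw [hsub]
              exact measure_union_le _ _
          _ = μ ((fun x => x + t • u x) '' s) := by rw [hnull, add_zero]
    rw [hvol] at hcv
    rw [measureReal_def, ← hcv, integral_eq_lintegral_of_nonneg_ae]
    · simp_rw [abs_of_pos (hdet _)]
    · exact Filter.Eventually.of_forall fun x => (hdet x).le
    · exact (hint t).aestronglyMeasurable
  obtain ⟨T, hT0, hT⟩ : ∃ T : ℝ, 0 < T ∧ ∀ t, 0 ≤ t → t ≤ T → t * K < 1 ∧ t * K < η := by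
    refine ⟨min 1 η / (K + 1), by positivity, fun t ht0 ht => ?_⟩
    have hK : (0 : ℝ) < K + 1 := by positivity
    have h1 : t * (K + 1) ≤ min 1 η := (le_div_iff₀ hK).1 ht
    have hm : 0 < min 1 η := lt_min one_pos hη
    have h2 : t * K < min 1 η := by
      rcases ht0.eq_or_lt with rfl | h
      · simpa using hη
      · nlinarith
    exact ⟨h2.trans_le (min_le_left _ _), h2.trans_le (min_le_right _ _)⟩
  let v : ℕ → ℝ := fun i => T / (i + 1)
  have hv : Function.Injective v := by
    intro i j hij
    simp only [v] at hij
    rw [div_eq_div_iff (by positivity) (by positivity)] at hij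
    have := mul_left_cancel₀ hT0.ne' hij
    exact_mod_cast (add_right_cancel this).symm
  have hv' : ∀ i, 0 ≤ v i ∧ v i ≤ T := fun i =>
    ⟨by positivity, div_le_self hT0.le (by linarith [i.cast_nonneg (α := ℝ)])⟩
  rw [show (fun x => (ContinuousLinearMap.id ℝ H + fderiv ℝ u x).det) = _ from
    funext fun x => det_one_add_eq_lagrange v hv (fderiv ℝ u x)]
  rw [integral_finsetSum]
  · simp_rw [integral_const_mul]
    have : ∀ i, ∫ x in s, (ContinuousLinearMap.id ℝ H + v i • fderiv ℝ u x).det ∂μ =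
        μ.real (ball 0 ρ) := fun i =>
      hsmall _ (hv' i).1 (hT _ (hv' i).1 (hv' i).2).1 (hT _ (hv' i).1 (hv' i).2).2
    simp_rw [this]
    rw [← Finset.sum_mul, sum_lagrange_basis_eval_one v hv, one_mul]
  · intro i _
    exact (hint (v i)).const_mul _

/-- There is no Lipschitz retraction of a ball onto its boundary sphere. -/
theorem exists_norm_ne_of_lipschitz_perturbation {u : H → H} {K : NNReal} (hu : LipschitzWith K u)
    {ρ : ℝ} (hρ : 0 < ρ) (hu0 : ∀ x, x ∉ ball (0 : H) ρ → u x = 0) :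
    ∃ x ∈ ball (0 : H) ρ, ‖x + u x‖ ≠ ρ := by
  by_contra! hcon
  have h := integral_det_eq_of_lipschitz_perturbation hu hu0
  have hzero : ∀ x ∈ ball (0 : H) ρ ∩ {x | DifferentiableAt ℝ u x},
      (ContinuousLinearMap.id ℝ H + fderiv ℝ u x).det = 0 := by
    rintro x ⟨hx, hd⟩
    have hF : HasFDerivAt (fun x => x + u x) (ContinuousLinearMap.id ℝ H + fderiv ℝ u x) x :=
      (hasFDerivAt_id x).add (DifferentiableAt.hasFDerivAt hd)
    have h1 := hF.norm_sq
    have h2 : HasFDerivAt (fun x => ‖x + u x‖ ^ 2) (0 : H →L[ℝ] ℝ) x := by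
      refine (hasFDerivAt_const (ρ ^ 2) x).congr_of_eventuallyEq ?_
      filter_upwards [isOpen_ball.mem_nhds hx] with y hy
      rw [hcon y hy]
    have h3 := h1.unique h2
    by_contra hne
    have hsurj : Function.Surjective (ContinuousLinearMap.id ℝ H + fderiv ℝ u x) :=
      ((LinearMap.isUnit_iff_range_eq_top _).1
        ((LinearMap.isUnit_iff_isUnit_det _).2 (isUnit_iff_ne_zero.2 hne))) |> LinearMap.range_eq_top.1
    obtain ⟨w, hw⟩ := hsurj (x + u x)
    have h4 : 2 • inner ℝ (x + u x) ((ContinuousLinearMap.id ℝ H + fderiv ℝ u x) w) = 0 :=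
      DFunLike.congr_fun h3 w
    have h5 : x + u x = 0 := by
      rw [hw] at h4
      simpa using h4
    have := hcon x hx
    rw [h5, norm_zero] at this
    exact hρ.ne this
  rw [setIntegral_congr_fun (g := fun _ => (0 : ℝ))
    (measurableSet_ball.inter (measurableSet_of_differentiableAt ℝ u)) hzero] at h
  rw [integral_zero, measureReal_def] at h
  have hpos : 0 < (μH[Module.finrank ℝ H] : Measure H) (ball 0 ρ) := measure_ball_pos _ _ hρ
  exact (ENNReal.toReal_pos hpos.ne' measure_ball_lt_top.ne).ne h

end Brouwer

section Brouwer2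

variable {H : Type*} [NormedAddCommGroup H] [InnerProductSpace ℝ H] [FiniteDimensional ℝ H]

/-- A map which is Lipschitz on a closed ball and vanishes on the complement of the open ball is
Lipschitz. -/
theorem LipschitzOnWith.of_eq_zero_off_ball {u : H → H} {K : NNReal} {ρ : ℝ}
    (hu : LipschitzOnWith K u (closedBall 0 ρ)) (hu0 : ∀ x, x ∉ ball (0 : H) ρ → u x = 0) :
    LipschitzWith K u := by
  have key : ∀ x y, x ∈ closedBall (0 : H) ρ → y ∉ closedBall (0 : H) ρ →
      dist (u x) (u y) ≤ K * dist x y := by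
    intro x y hx hy
    have hcont : ContinuousOn (fun t : ℝ => ‖AffineMap.lineMap x y t‖) (Icc 0 1) :=
      (AffineMap.lineMap_continuous.norm).continuousOn
    simp only [mem_closedBall, dist_zero_right, not_le] at hx hy
    have hmem : ρ ∈ Icc ‖AffineMap.lineMap x y (0 : ℝ)‖ ‖AffineMap.lineMap x y (1 : ℝ)‖ := by
      simpa using ⟨hx, hy.le⟩
    obtain ⟨t, ht, hzt⟩ := intermediate_value_Icc zero_le_one hcont hmem
    set z := AffineMap.lineMap x y t with hz
    simp only at hzt
    have hz0 : u z = 0 := hu0 z (by simpa using hzt.ge)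
    have hy0 : u y = 0 := hu0 y (by simpa using hy.le)
    have h1 := hu.dist_le_mul x (by simpa using hx) z (by simpa using hzt.le)
    rw [hy0, ← hz0]
    refine h1.trans (mul_le_mul_of_nonneg_left ?_ K.2)
    rw [hz, dist_left_lineMap, Real.norm_eq_abs, abs_of_nonneg ht.1]
    exact mul_le_of_le_one_left dist_nonneg ht.2
  refine LipschitzWith.of_dist_le_mul fun x y => ?_
  by_cases hx : x ∈ closedBall (0 : H) ρ <;> by_cases hy : y ∈ closedBall (0 : H) ρ
  · exact hu.dist_le_mul x hx y hy
  · exact key x y hx hy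
  · rw [dist_comm, dist_comm x]; exact key y x hy hx
  · rw [hu0 x fun h => hx (ball_subset_closedBall h), hu0 y fun h => hy (ball_subset_closedBall h),
      dist_self]
    positivity

/-- A continuous perturbation of the identity supported in a ball has a zero. -/
theorem exists_add_eq_zero_of_continuous {u : H → H} (hu : Continuous u) {ρ : ℝ} (hρ : 0 < ρ)
    (hu0 : ∀ x, x ∉ ball (0 : H) ρ → u x = 0) : ∃ x, x + u x = 0 := by
  borelize H
  by_contra! hcon
  obtain ⟨x₀, hx₀, hmin⟩ := (isCompact_closedBall (0 : H) ρ).exists_isMinOn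
    ⟨0, by simp [hρ.le]⟩ (f := fun x => ‖x + u x‖) (continuous_id.add hu).norm.continuousOn
  have hc0 : 0 < ‖x₀ + u x₀‖ := norm_pos_iff.2 (hcon x₀)
  obtain ⟨w, hw, hwu, hsupp⟩ := hu.exists_contDiff_approx 1
    (ε := fun _ => ‖x₀ + u x₀‖) continuous_const (fun _ => hc0)
  have hw0 : ∀ x, x ∉ ball (0 : H) ρ → w x = 0 := fun x hx => by
    by_contra h
    exact hsupp h (hu0 x hx)
  have hG : ∀ x, x + w x ≠ 0 := by
    intro x hx
    by_cases hxb : x ∈ ball (0 : H) ρ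
    · have h1 : ‖x₀ + u x₀‖ ≤ ‖x + u x‖ := hmin (ball_subset_closedBall hxb)
      have h2 := hwu x
      rw [dist_eq_norm, show w x - u x = (x + w x) - (x + u x) by abel, hx, zero_sub, norm_neg] at h2
      exact absurd h2 h1.not_gt
    · rw [hw0 x hxb, add_zero] at hx
      exact hxb (by simpa [hx] using hρ)
  let v : H → H := fun x => (ρ / ‖x + w x‖) • (x + w x) - x
  have hv : ContDiff ℝ 1 v := by
    have hGs : ContDiff ℝ 1 fun x => x + w x := contDiff_id.add hw
    exact ((contDiff_const.div (hGs.norm ℝ hG) fun x => (norm_pos_iff.2 (hG x)).ne').smul hGs).sub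
      contDiff_id
  obtain ⟨K, hK⟩ := hv.contDiffOn.exists_lipschitzOnWith (s := closedBall (0 : H) ρ) (by norm_num)
    (convex_closedBall 0 ρ) (isCompact_closedBall 0 ρ)
  classical
  let U : H → H := fun x => if x ∈ ball (0 : H) ρ then v x else 0
  have hU0 : ∀ x, x ∉ ball (0 : H) ρ → U x = 0 := fun x hx => if_neg hx
  have hUv : EqOn v U (closedBall 0 ρ) := by
    intro x hx
    by_cases hxb : x ∈ ball (0 : H) ρ
    · exact (if_pos hxb).symm
    · rw [hU0 x hxb]
      have : ‖x‖ = ρ := le_antisymm (by simpa using hx) (by simpa using hxb)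
      simp [v, hw0 x hxb, this, hρ.ne']
  have hK' : LipschitzOnWith K U (closedBall 0 ρ) := fun x hx y hy => by
    rw [← hUv hx, ← hUv hy]
    exact hK hx hy
  have hUL : LipschitzWith K U := hK'.of_eq_zero_off_ball hU0
  obtain ⟨x, hx, hne⟩ := exists_norm_ne_of_lipschitz_perturbation hUL hρ hU0
  apply hne
  simp only [U, if_pos hx, v, add_sub_cancel]
  rw [norm_smul, norm_div, norm_norm, div_mul_cancel₀ _ (norm_pos_iff.2 (hG x)).ne',
    Real.norm_of_nonneg hρ.le]

/-- **Brouwer-type covering theorem**: a continuous map on a closed ball which displaces points by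
at most `s` covers the concentric ball of radius `ρ - s`. -/
theorem exists_eq_of_dist_le {F : H → H} {c : H} {ρ s : ℝ} (hs0 : 0 ≤ s)
    (hF : ContinuousOn F (closedBall c ρ)) (hs : ∀ x ∈ closedBall c ρ, dist (F x) x ≤ s)
    {y : H} (hy : dist y c < ρ - s) : ∃ x ∈ closedBall c ρ, F x = y := by
  have hρ : 0 < ρ := by linarith [dist_nonneg (x := y) (y := c)]
  set s' := s + dist y c with hs'
  have hs'ρ : 0 < ρ - s' := by linarith
  have hs'0 : 0 ≤ s' := by positivity
  let e : H → H := fun x => F (c + x) - y - x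
  have hmem : ∀ x : H, ‖x‖ ≤ ρ → c + x ∈ closedBall c ρ := fun x hx => by simpa using hx
  have he : ∀ x : H, ‖x‖ ≤ ρ → ‖e x‖ ≤ s' := by
    intro x hx
    have h1 := hs _ (hmem x hx)
    calc ‖e x‖ = ‖(F (c + x) - (c + x)) - (y - c)‖ := by congr 1; simp only [e]; abel
      _ ≤ ‖F (c + x) - (c + x)‖ + ‖y - c‖ := norm_sub_le _ _
      _ ≤ s' := by rw [← dist_eq_norm, ← dist_eq_norm]; linarith
  have hec : ContinuousOn e {x | ‖x‖ ≤ ρ} :=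
    ((hF.comp (by fun_prop) hmem).sub continuousOn_const).sub continuousOn_id
  let κ : H → ℝ := fun x => min 1 ((ρ - ‖x‖) / (ρ - s'))
  have hκ : Continuous κ := by fun_prop
  let u : H → H := fun x => if ‖x‖ ≤ ρ then κ x • e x else 0
  have hu : Continuous u := by
    refine continuous_if_le continuous_norm continuous_const (hκ.continuousOn.smul hec)
      continuousOn_const fun x hx => ?_
    simp [κ, hx]
  obtain ⟨x, hx⟩ := exists_add_eq_zero_of_continuous hu hρ (fun x hx => by
    have hx' : ρ ≤ ‖x‖ := by simpa using hx
    rcases hx'.eq_or_lt with h | h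
    · simp [u, κ, ← h]
    · simp [u, h])
  have hxρ : ‖x‖ ≤ ρ := by
    by_contra h
    simp only [u, h, if_false, add_zero] at hx
    simp [hx, hρ.le] at h
  simp only [u, hxρ, if_true] at hx
  have hκ0 : 0 ≤ κ x := le_min zero_le_one (div_nonneg (by linarith) hs'ρ.le)
  have hxs : ‖x‖ ≤ s' := by
    rw [eq_neg_of_add_eq_zero_left hx, norm_neg, norm_smul, Real.norm_of_nonneg hκ0]
    exact (mul_le_of_le_one_left (norm_nonneg _) (min_le_left _ _)).trans (he x hxρ)
  have hκ1 : κ x = 1 := min_eq_left (by rw [le_div_iff₀ hs'ρ]; linarith)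
  refine ⟨c + x, hmem x hxρ, ?_⟩
  rw [hκ1, one_smul] at hx
  simpa [e, sub_eq_zero] using hx

end Brouwer2

section Step

variable {F : Type*} [NormedAddCommGroup F] [InnerProductSpace ℝ F]

/-- Orthogonal projections, as continuous linear maps. -/
structure IsOrthProj (Q : F →L[ℝ] F) : Prop where
  symm : ∀ x y, inner ℝ (Q x) y = inner ℝ x (Q y)
  idem : ∀ x, Q (Q x) = Q x

namespace IsOrthProj

variable {Q S : F →L[ℝ] F}

theorem inner_self (hQ : IsOrthProj Q) (x : F) : inner ℝ (Q x) x = ‖Q x‖ ^ 2 := by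
  rw [← real_inner_self_eq_norm_sq, hQ.symm, hQ.symm, hQ.idem]

theorem norm_sq_eq (hQ : IsOrthProj Q) (x : F) : ‖x‖ ^ 2 = ‖Q x‖ ^ 2 + ‖x - Q x‖ ^ 2 := by
  rw [norm_sub_sq_real, real_inner_comm, hQ.inner_self]; ring

theorem norm_apply_le (hQ : IsOrthProj Q) (x : F) : ‖Q x‖ ≤ ‖x‖ := by
  have := hQ.norm_sq_eq x
  exact le_of_sq_le_sq (by nlinarith [sq_nonneg ‖x - Q x‖]) (norm_nonneg _)

theorem norm_sub_apply_le (hQ : IsOrthProj Q) (x : F) : ‖x - Q x‖ ≤ ‖x‖ := by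
  have := hQ.norm_sq_eq x
  exact le_of_sq_le_sq (by nlinarith [sq_nonneg ‖Q x‖]) (norm_nonneg _)

theorem norm_apply_sub_le {s : ℝ} (h : ‖Q - S‖ ≤ s) (x : F) : ‖Q x - S x‖ ≤ s * ‖x‖ :=
  (Q - S).le_of_opNorm_le h x

/-- If two projections are close, the range of one is nearly fixed by the other. -/
theorem norm_cross_le (hQ : IsOrthProj Q) {s : ℝ} (h : ‖Q - S‖ ≤ s) (x : F) :
    ‖Q x - S (Q x)‖ ≤ s * ‖Q x‖ := by
  have := norm_apply_sub_le h (Q x)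
  rwa [hQ.idem] at this

end IsOrthProj

variable {ι : Type*} {J : Finset ι}

theorem norm_sum_smul_le {γ : ι → ℝ} {x : ι → F} {B : ℝ} (h : ∀ j ∈ J, γ j ≠ 0 → ‖x j‖ ≤ B) :
    ‖∑ j ∈ J, γ j • x j‖ ≤ (∑ j ∈ J, |γ j|) * B := by
  rw [Finset.sum_mul]
  refine norm_sum_le_of_le _ fun j hj => ?_
  rw [norm_smul, Real.norm_eq_abs]
  by_cases hg : γ j = 0
  · simp [hg]
  · exact mul_le_mul_of_nonneg_left (h j hj hg) (abs_nonneg _)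

theorem norm_average_le {α : ι → ℝ} {x : ι → F} {B : ℝ} (h0 : ∀ j ∈ J, 0 ≤ α j)
    (h1 : ∑ j ∈ J, α j = 1) (h : ∀ j ∈ J, α j ≠ 0 → ‖x j‖ ≤ B) : ‖∑ j ∈ J, α j • x j‖ ≤ B := by
  have := norm_sum_smul_le h
  rwa [Finset.sum_congr rfl fun j hj => abs_of_nonneg (h0 j hj), h1, one_mul] at this

theorem sub_average_eq {α : ι → ℝ} {x : ι → F} (y : F) (h1 : ∑ j ∈ J, α j = 1) :
    y - ∑ j ∈ J, α j • x j = ∑ j ∈ J, α j • (y - x j) := by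
  simp only [smul_sub, Finset.sum_sub_distrib]
  rw [← Finset.sum_smul, h1, one_smul]

/-- The weighted averages defining one step of the construction at two points `a`, `b`: weights `α`
and `β`, normal projections `Q j` with base points `c j`, all of them close to a reference
plane `(S', e')`, which is itself close to the previous reference plane `(S, e)`. -/
structure PairData (J : Finset ι) (Q : ι → F →L[ℝ] F) (c : ι → F) (α β : ι → ℝ)
    (S S' : F →L[ℝ] F) (e e' : F) (s s' Λ r : ℝ) (a b : F) : Prop where
  hQ : ∀ j ∈ J, IsOrthProj (Q j)
  hS : IsOrthProj S
  hS' : IsOrthProj S'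
  α0 : ∀ j ∈ J, 0 ≤ α j
  α1 : ∑ j ∈ J, α j = 1
  β0 : ∀ j ∈ J, 0 ≤ β j
  β1 : ∑ j ∈ J, β j = 1
  hr : 0 < r
  hs : 0 ≤ s
  hs' : 0 ≤ s'
  hΛ : 1 ≤ Λ
  close : ∀ j ∈ J, (α j ≠ 0 ∨ β j ≠ 0) → ‖Q j - S'‖ ≤ s'
  closeA : ∀ j ∈ J, (α j ≠ 0 ∨ β j ≠ 0) → ‖Q j (a - c j) - S' (a - e')‖ ≤ s' * r
  closeB : ∀ j ∈ J, (α j ≠ 0 ∨ β j ≠ 0) → ‖Q j (b - c j) - S' (b - e')‖ ≤ s' * r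
  ref : ‖S' - S‖ ≤ s
  refB : ‖S' (b - e') - S (b - e)‖ ≤ 10 * s * r
  lip : (∑ j ∈ J, |α j - β j|) * r ≤ Λ * ‖a - b‖

namespace PairData

variable {Q : ι → F →L[ℝ] F} {c : ι → F} {α β : ι → ℝ} {S S' : F →L[ℝ] F} {e e' : F}
  {s s' Λ r : ℝ} {a b : F}

theorem ne_or {j : ι} (h : α j - β j ≠ 0) : α j ≠ 0 ∨ β j ≠ 0 := by
  by_contra! hc
  simp [hc.1, hc.2] at h

/-- The difference of the moved base points. -/
theorem sub_eq (h : PairData J Q c α β S S' e e' s s' Λ r a b) :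
    (a - ∑ j ∈ J, α j • Q j (a - c j)) - (b - ∑ j ∈ J, β j • Q j (b - c j)) =
      (a - b) - ∑ j ∈ J, α j • Q j (a - b) -
        ∑ j ∈ J, (α j - β j) • (Q j (b - c j) - S' (b - e')) := by
  have h1 : ∑ j ∈ J, (α j - β j) • S' (b - e') = 0 := by
    rw [← Finset.sum_smul, Finset.sum_sub_distrib, h.α1, h.β1, sub_self, zero_smul]
  have h2 : ∑ j ∈ J, α j • Q j (a - c j) =
      ∑ j ∈ J, α j • Q j (a - b) + ∑ j ∈ J, α j • Q j (b - c j) := by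
    rw [← Finset.sum_add_distrib]
    refine Finset.sum_congr rfl fun j _ => ?_
    rw [← smul_add, ← map_add]; congr 2; abel
  simp only [smul_sub, Finset.sum_sub_distrib]
  rw [h1, h2]
  simp only [sub_smul, Finset.sum_sub_distrib]
  abel

theorem lip_mul (h : PairData J Q c α β S S' e e' s s' Λ r a b) {x : ι → F} {B : ℝ} (hB : 0 ≤ B)
    (hx : ∀ j ∈ J, (α j ≠ 0 ∨ β j ≠ 0) → ‖x j‖ ≤ B * r) :
    ‖∑ j ∈ J, (α j - β j) • x j‖ ≤ Λ * ‖a - b‖ * B := by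
  refine (norm_sum_smul_le (γ := fun j => α j - β j) (B := B * r)
    fun j hj hne => hx j hj (ne_or hne)).trans ?_
  calc (∑ j ∈ J, |α j - β j|) * (B * r) = ((∑ j ∈ J, |α j - β j|) * r) * B := by ring
    _ ≤ _ := mul_le_mul_of_nonneg_right h.lip hB

/-- Normal component of the new difference of base points. -/
theorem norm_normal_le (h : PairData J Q c α β S S' e e' s s' Λ r a b) :
    ‖S' ((a - ∑ j ∈ J, α j • Q j (a - c j)) - (b - ∑ j ∈ J, β j • Q j (b - c j)))‖ ≤
      (1 + Λ) * s' * ‖a - b‖ := by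
  rw [h.sub_eq, sub_average_eq _ h.α1, map_sub, map_sum]
  have h1 : ‖∑ j ∈ J, S' (α j • (a - b - Q j (a - b)))‖ ≤ s' * ‖a - b‖ := by
    simp_rw [map_smul]
    refine norm_average_le h.α0 h.α1 fun j hj hne => ?_
    have : S' (a - b - Q j (a - b)) = - S' (Q j (a - b) - S' (a - b)) := by
      simp only [map_sub, h.hS'.idem]; abel
    rw [this, norm_neg]
    exact (h.hS'.norm_apply_le _).trans
      (IsOrthProj.norm_apply_sub_le (h.close j hj (Or.inl hne)) _)
  have h2 := h.lip_mul h.hs' h.closeB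
  refine (norm_sub_le _ _).trans ?_
  have h3 := (h.hS'.norm_apply_le (∑ j ∈ J, (α j - β j) • (Q j (b - c j) - S' (b - e')))).trans h2
  linarith

/-- Tangential component of the new difference of base points. -/
theorem norm_tangential_le (h : PairData J Q c α β S S' e e' s s' Λ r a b)
    (ht : ‖S (a - b)‖ ≤ 2 * (1 + Λ) * s * ‖a - b‖) (hb : ‖S (b - e)‖ ≤ 10 * s * r)
    (w : F) (hw : w = (a - ∑ j ∈ J, α j • Q j (a - c j)) - (b - ∑ j ∈ J, β j • Q j (b - c j))) :
    ‖(w - S' w) - ((a - b) - S' (a - b))‖ ≤ 15 * Λ * (s ^ 2 + s' ^ 2) * ‖a - b‖ := by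
  have hs := h.hs
  have hs' := h.hs'
  have hΛ := h.hΛ
  have hr := h.hr
  set t := a - b with htdef
  set X := ∑ j ∈ J, α j • (Q j t - S' (Q j t)) with hX
  set Y := ∑ j ∈ J, (α j - β j) • (Q j (b - c j) - S' (Q j (b - c j))) with hY
  have key : (w - S' w) - (t - S' t) = - X - Y := by
    rw [hw, h.sub_eq, ← htdef, hX, hY]
    simp only [smul_sub, Finset.sum_sub_distrib, map_sub, map_sum, map_smul, h.hS'.idem]
    abel
  have hQt : ∀ j ∈ J, α j ≠ 0 → ‖Q j t‖ ≤ ((2 * (1 + Λ) + 1) * s + s') * ‖t‖ := by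
    intro j hj hne
    have h1 := IsOrthProj.norm_apply_sub_le (h.close j hj (Or.inl hne)) t
    have h2 := IsOrthProj.norm_apply_sub_le h.ref t
    calc ‖Q j t‖ = ‖(Q j t - S' t) + (S' t - S t) + S t‖ := by congr 1; abel
      _ ≤ s' * ‖t‖ + s * ‖t‖ + 2 * (1 + Λ) * s * ‖t‖ :=
        (norm_add_le _ _).trans (add_le_add ((norm_add_le _ _).trans (add_le_add h1 h2)) ht)
      _ = _ := by ring
  have hXb : ‖X‖ ≤ s' * (((2 * (1 + Λ) + 1) * s + s') * ‖t‖) := by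
    refine norm_average_le h.α0 h.α1 fun j hj hne => ?_
    exact ((h.hQ j hj).norm_cross_le (h.close j hj (Or.inl hne)) t).trans
      (mul_le_mul_of_nonneg_left (hQt j hj hne) hs')
  have hYb : ‖Y‖ ≤ Λ * ‖t‖ * (s' * (20 * s + s')) := by
    refine h.lip_mul (by positivity) fun j hj hne => ?_
    refine ((h.hQ j hj).norm_cross_le (h.close j hj hne) _).trans ?_
    have : ‖Q j (b - c j)‖ ≤ (20 * s + s') * r := by
      calc ‖Q j (b - c j)‖ = ‖(Q j (b - c j) - S' (b - e')) + (S' (b - e') - S (b - e)) +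
            S (b - e)‖ := by congr 1; abel
        _ ≤ s' * r + 10 * s * r + 10 * s * r :=
          (norm_add_le _ _).trans (add_le_add ((norm_add_le _ _).trans
            (add_le_add (h.closeB j hj hne) h.refB)) hb)
        _ = _ := by ring
    calc s' * ‖Q j (b - c j)‖ ≤ s' * ((20 * s + s') * r) := mul_le_mul_of_nonneg_left this hs'
      _ = _ := by ring
  rw [key]
  have h0 : ‖-X - Y‖ ≤ ‖X‖ + ‖Y‖ := by
    rw [← norm_neg X]; exact norm_sub_le _ _
  refine h0.trans ((add_le_add hXb hYb).trans ?_)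
  have : s' * ((2 * (1 + Λ) + 1) * s + s') + Λ * (s' * (20 * s + s')) ≤
      15 * Λ * (s ^ 2 + s' ^ 2) := by
    have := mul_nonneg hs hs'
    nlinarith [mul_nonneg (sub_nonneg.2 hΛ) this, mul_nonneg (sub_nonneg.2 hΛ) (sq_nonneg s'),
      mul_nonneg (by linarith : (0 : ℝ) ≤ Λ) (sq_nonneg (s - s')),
      mul_nonneg (by linarith : (0 : ℝ) ≤ Λ) (sq_nonneg s)]
  calc _ = (s' * ((2 * (1 + Λ) + 1) * s + s') + Λ * (s' * (20 * s + s'))) * ‖t‖ := by ring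
    _ ≤ _ := mul_le_mul_of_nonneg_right this (norm_nonneg _)

/-- The distance between base points is nearly preserved, with a quadratic error. -/
theorem norm_sub_bounds (h : PairData J Q c α β S S' e e' s s' Λ r a b)
    (ht : ‖S (a - b)‖ ≤ 2 * (1 + Λ) * s * ‖a - b‖) (hb : ‖S (b - e)‖ ≤ 10 * s * r)
    (hsmall : 40 * Λ ^ 2 * (s ^ 2 + s' ^ 2) ≤ 1)
    (w : F) (hw : w = (a - ∑ j ∈ J, α j • Q j (a - c j)) - (b - ∑ j ∈ J, β j • Q j (b - c j))) :
    ‖w‖ ≤ (1 + 40 * Λ ^ 2 * (s ^ 2 + s' ^ 2)) * ‖a - b‖ ∧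
      (1 - 40 * Λ ^ 2 * (s ^ 2 + s' ^ 2)) * ‖a - b‖ ≤ ‖w‖ := by
  have hs := h.hs
  have hs' := h.hs'
  have hΛ := h.hΛ
  have hT := h.norm_tangential_le ht hb w hw
  have hN := h.norm_normal_le
  rw [← hw] at hN
  set t := a - b with htdef
  have hSt : ‖S' t‖ ≤ 5 * Λ * s * ‖t‖ := by
    have h2 := IsOrthProj.norm_apply_sub_le h.ref t
    calc ‖S' t‖ = ‖(S' t - S t) + S t‖ := by congr 1; abel
      _ ≤ s * ‖t‖ + 2 * (1 + Λ) * s * ‖t‖ := (norm_add_le _ _).trans (add_le_add h2 ht)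
      _ = (3 + 2 * Λ) * (s * ‖t‖) := by ring
      _ ≤ (5 * Λ) * (s * ‖t‖) := mul_le_mul_of_nonneg_right (by linarith) (by positivity)
      _ = _ := by ring
  have hE : 0 ≤ s ^ 2 + s' ^ 2 := by positivity
  set E := s ^ 2 + s' ^ 2 with hEdef
  have hsE : s ^ 2 ≤ E := by simp [hEdef, sq_nonneg]
  have hs'E : s' ^ 2 ≤ E := by simp [hEdef, sq_nonneg]
  have hΛ2 : Λ ≤ Λ ^ 2 := by nlinarith
  have hΛE : 15 * Λ * E ≤ 15 * Λ ^ 2 * E := by nlinarith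
  have htt := norm_nonneg t
  have pt := h.hS'.norm_sq_eq t
  have pw := h.hS'.norm_sq_eq w
  have hw1 : ‖w - S' w‖ ≤ ‖t - S' t‖ + 15 * Λ * E * ‖t‖ := by
    have := norm_sub_norm_le (w - S' w) (t - S' t); linarith
  have hw2 : ‖t - S' t‖ ≤ ‖w - S' w‖ + 15 * Λ * E * ‖t‖ := by
    have := norm_sub_norm_le (t - S' t) (w - S' w)
    rw [norm_sub_rev (t - S' t)] at this; linarith
  have hNt : ‖S' w‖ ≤ 2 * Λ * s' * ‖t‖ := hN.trans (by
    have : (1 + Λ) * (s' * ‖t‖) ≤ (2 * Λ) * (s' * ‖t‖) :=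
      mul_le_mul_of_nonneg_right (by linarith) (by positivity)
    nlinarith)
  constructor
  · refine le_of_sq_le_sq ?_ (by positivity)
    have a1 : ‖t - S' t‖ ≤ ‖t‖ := h.hS'.norm_sub_apply_le t
    have a2 : ‖w - S' w‖ ≤ (1 + 15 * Λ ^ 2 * E) * ‖t‖ := by nlinarith
    have a3 : ‖w - S' w‖ ^ 2 ≤ ((1 + 15 * Λ ^ 2 * E) * ‖t‖) ^ 2 :=
      pow_le_pow_left₀ (norm_nonneg _) a2 2
    have a4 : ‖S' w‖ ^ 2 ≤ (2 * Λ * s' * ‖t‖) ^ 2 := pow_le_pow_left₀ (norm_nonneg _) hNt 2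
    have a5 : (2 * Λ * s' * ‖t‖) ^ 2 ≤ 4 * (Λ ^ 2 * E) * ‖t‖ ^ 2 := by
      have : (2 * Λ * s' * ‖t‖) ^ 2 = 4 * (Λ ^ 2 * ‖t‖ ^ 2) * s' ^ 2 := by ring
      rw [this]
      calc _ ≤ 4 * (Λ ^ 2 * ‖t‖ ^ 2) * E := mul_le_mul_of_nonneg_left hs'E (by positivity)
        _ = _ := by ring
    have a6 : 0 ≤ Λ ^ 2 * E := by positivity
    have : ((1 + 15 * Λ ^ 2 * E) * ‖t‖) ^ 2 + 4 * (Λ ^ 2 * E) * ‖t‖ ^ 2 ≤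
        ((1 + 40 * Λ ^ 2 * E) * ‖t‖) ^ 2 := by
      have : ((1 + 40 * Λ ^ 2 * E) * ‖t‖) ^ 2 - ((1 + 15 * Λ ^ 2 * E) * ‖t‖) ^ 2 -
        4 * (Λ ^ 2 * E) * ‖t‖ ^ 2 = (46 * (Λ ^ 2 * E) + 1375 * (Λ ^ 2 * E) ^ 2) * ‖t‖ ^ 2 := by ring
      have : 0 ≤ (46 * (Λ ^ 2 * E) + 1375 * (Λ ^ 2 * E) ^ 2) * ‖t‖ ^ 2 := by positivity
      linarith
    linarith
  · have b1 : (1 - 25 * Λ ^ 2 * E) * ‖t‖ ≤ ‖t - S' t‖ := by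
      refine le_of_sq_le_sq ?_ (norm_nonneg _)
      have c1 : ‖S' t‖ ^ 2 ≤ (5 * Λ * s * ‖t‖) ^ 2 := pow_le_pow_left₀ (norm_nonneg _) hSt 2
      have c2 : (5 * Λ * s * ‖t‖) ^ 2 ≤ 25 * (Λ ^ 2 * E) * ‖t‖ ^ 2 := by
        have : (5 * Λ * s * ‖t‖) ^ 2 = 25 * (Λ ^ 2 * ‖t‖ ^ 2) * s ^ 2 := by ring
        rw [this]
        calc _ ≤ 25 * (Λ ^ 2 * ‖t‖ ^ 2) * E := mul_le_mul_of_nonneg_left hsE (by positivity)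
          _ = _ := by ring
      have c3 : 0 ≤ Λ ^ 2 * E := by positivity
      have c4 : ((1 - 25 * Λ ^ 2 * E) * ‖t‖) ^ 2 ≤ (1 - 25 * (Λ ^ 2 * E)) * ‖t‖ ^ 2 := by
        have : (1 - 25 * (Λ ^ 2 * E)) * ‖t‖ ^ 2 - ((1 - 25 * Λ ^ 2 * E) * ‖t‖) ^ 2 =
          25 * ((Λ ^ 2 * E) * (1 - 25 * (Λ ^ 2 * E))) * ‖t‖ ^ 2 := by ring
        have h25 : 0 ≤ 1 - 25 * (Λ ^ 2 * E) := by nlinarith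
        have : 0 ≤ 25 * ((Λ ^ 2 * E) * (1 - 25 * (Λ ^ 2 * E))) * ‖t‖ ^ 2 := by positivity
        linarith
      nlinarith
    have b2 : ‖w - S' w‖ ≤ ‖w‖ := h.hS'.norm_sub_apply_le w
    nlinarith

/-- Normal component of a moved base point. -/
theorem norm_normal_point_le {γ : ι → ℝ} {x : F} (hS' : IsOrthProj S') (γ0 : ∀ j ∈ J, 0 ≤ γ j)
    (γ1 : ∑ j ∈ J, γ j = 1)
    (close : ∀ j ∈ J, γ j ≠ 0 → ‖Q j (x - c j) - S' (x - e')‖ ≤ s' * r) :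
    ‖S' (x - ∑ j ∈ J, γ j • Q j (x - c j) - e')‖ ≤ s' * r := by
  have h1 : S' (x - ∑ j ∈ J, γ j • Q j (x - c j) - e') =
      S' (S' (x - e') - ∑ j ∈ J, γ j • Q j (x - c j)) := by
    rw [map_sub, map_sub, map_sub, hS'.idem, map_sub]
    abel
  rw [h1, sub_average_eq _ γ1]
  refine (hS'.norm_apply_le _).trans (norm_average_le γ0 γ1 fun j hj hne => ?_)
  rw [norm_sub_rev]
  exact close j hj hne

end PairData

section Normal

variable {Q : ι → F →L[ℝ] F} {α : ι → ℝ} {S S' : F →L[ℝ] F} {s s' : ℝ}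

theorem norm_average_proj_le (hQ : ∀ j ∈ J, IsOrthProj (Q j)) (α0 : ∀ j ∈ J, 0 ≤ α j)
    (α1 : ∑ j ∈ J, α j = 1) (v : F) : ‖∑ j ∈ J, α j • Q j v‖ ≤ ‖v‖ :=
  norm_average_le α0 α1 fun j hj _ => (hQ j hj).norm_apply_le v

/-- An average of projections close to `S'` maps into the nearly fixed vectors of `S'`. -/
theorem norm_average_sub_ref_le (hQ : ∀ j ∈ J, IsOrthProj (Q j)) (α0 : ∀ j ∈ J, 0 ≤ α j)
    (α1 : ∑ j ∈ J, α j = 1) (hs' : 0 ≤ s') (close : ∀ j ∈ J, α j ≠ 0 → ‖Q j - S'‖ ≤ s') (v : F) :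
    ‖∑ j ∈ J, α j • Q j v - S' (∑ j ∈ J, α j • Q j v)‖ ≤ s' * ‖v‖ := by
  rw [map_sum, ← Finset.sum_sub_distrib]
  simp_rw [map_smul, ← smul_sub]
  refine norm_average_le α0 α1 fun j hj hne => ?_
  exact ((hQ j hj).norm_cross_le (close j hj hne) v).trans
    (mul_le_mul_of_nonneg_left ((hQ j hj).norm_apply_le v) hs')

theorem norm_sub_average_proj_le (α0 : ∀ j ∈ J, 0 ≤ α j) (α1 : ∑ j ∈ J, α j = 1)
    {v : F} {B : ℝ} (h : ∀ j ∈ J, α j ≠ 0 → ‖v - Q j v‖ ≤ B) :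
    ‖v - ∑ j ∈ J, α j • Q j v‖ ≤ B := by
  rw [sub_average_eq _ α1]
  exact norm_average_le α0 α1 h

/-- If `v` is nearly fixed by all the projections, the average only loses a quadratic amount. -/
theorem norm_average_proj_ge (hQ : ∀ j ∈ J, IsOrthProj (Q j)) (α0 : ∀ j ∈ J, 0 ≤ α j)
    (α1 : ∑ j ∈ J, α j = 1) {v : F} {B : ℝ}
    (h : ∀ j ∈ J, α j ≠ 0 → ‖v - Q j v‖ ≤ B * ‖v‖) :
    (1 - B ^ 2) * ‖v‖ ≤ ‖∑ j ∈ J, α j • Q j v‖ := by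
  rcases (norm_nonneg v).eq_or_lt with h0 | h0
  · simp [← h0]
  have h1 : (1 - B ^ 2) * ‖v‖ ^ 2 ≤ inner ℝ (∑ j ∈ J, α j • Q j v) v := by
    rw [sum_inner]
    calc (1 - B ^ 2) * ‖v‖ ^ 2 = ∑ j ∈ J, α j * ((1 - B ^ 2) * ‖v‖ ^ 2) := by
          rw [← Finset.sum_mul, α1, one_mul]
      _ ≤ _ := Finset.sum_le_sum fun j hj => by
          rw [real_inner_smul_left]
          by_cases hne : α j = 0
          · simp [hne]
          refine mul_le_mul_of_nonneg_left ?_ (α0 j hj)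
          rw [(hQ j hj).inner_self]
          have := (hQ j hj).norm_sq_eq v
          have h2 := pow_le_pow_left₀ (norm_nonneg _) (h j hj hne) 2
          rw [mul_pow] at h2
          linarith
  have h2 := real_inner_le_norm (∑ j ∈ J, α j • Q j v) v
  have : ((1 - B ^ 2) * ‖v‖) * ‖v‖ ≤ ‖∑ j ∈ J, α j • Q j v‖ * ‖v‖ := by nlinarith
  exact le_of_mul_le_mul_right this h0

end Normal

/-- The invariants propagated along a pair of orbits `(a, ν)`, `(b, ν')`: `(S, e)` is the reference
plane, `T₀` and `H₀` are the initial distances, and `A` is the accumulated distortion. -/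
structure PairInv (S : F →L[ℝ] F) (e : F) (s r Λ A T₀ H₀ : ℝ) (a b ν ν' : F) : Prop where
  t_normal : ‖S (a - b)‖ ≤ 2 * (1 + Λ) * s * ‖a - b‖
  a_normal : ‖S (a - e)‖ ≤ 10 * s * r
  b_normal : ‖S (b - e)‖ ≤ 10 * s * r
  ν_tan : ‖ν - S ν‖ ≤ 2 * s * ‖ν‖
  ν'_tan : ‖ν' - S ν'‖ ≤ 2 * s * ‖ν'‖
  η_tan : ‖(ν - ν') - S (ν - ν')‖ ≤ 2 * (1 + Λ) * s * (‖ν - ν'‖ + ‖a - b‖ * ‖ν'‖ / r)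
  t_le : ‖a - b‖ ≤ A * T₀
  le_t : T₀ ≤ A * ‖a - b‖
  η_le : ‖ν - ν'‖ ≤ H₀ + ‖a - b‖ * ‖ν'‖ / r
  le_η : H₀ ≤ A * (‖ν - ν'‖ + ‖a - b‖ * ‖ν'‖ / r)

section PairStep

variable {Q : ι → F →L[ℝ] F} {c : ι → F} {α β : ι → ℝ} {S S' : F →L[ℝ] F} {e e' : F}
  {s s' Λ r A T₀ H₀ δ : ℝ} {a b ν ν' : F}

theorem PairInv.norm_sub_proj_le (inv : PairInv S e s r Λ A T₀ H₀ a b ν ν')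
    (h : PairData J Q c α β S S' e e' s s' Λ r a b) {j : ι} (hj : j ∈ J)
    (hne : α j ≠ 0 ∨ β j ≠ 0) :
    ‖(ν - ν') - Q j (ν - ν')‖ ≤
      2 * (1 + Λ) * s * (‖ν - ν'‖ + ‖a - b‖ * ‖ν'‖ / r) + (s + s') * ‖ν - ν'‖ := by
  have h1 := IsOrthProj.norm_apply_sub_le (h.close j hj hne) (ν - ν')
  have h2 := IsOrthProj.norm_apply_sub_le h.ref (ν - ν')
  rw [norm_sub_rev] at h1 h2
  calc ‖(ν - ν') - Q j (ν - ν')‖ = ‖((ν - ν') - S (ν - ν')) + (S (ν - ν') - S' (ν - ν')) +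
        (S' (ν - ν') - Q j (ν - ν'))‖ := by congr 1; abel
    _ ≤ _ := (norm_add₃_le).trans (by linarith [inv.η_tan])

theorem norm_sub_proj_le_of_ref (h : PairData J Q c α β S S' e e' s s' Λ r a b) {v : F}
    (hv : ‖v - S v‖ ≤ 2 * s * ‖v‖) {j : ι} (hj : j ∈ J) (hne : α j ≠ 0 ∨ β j ≠ 0) :
    ‖v - Q j v‖ ≤ (3 * s + s') * ‖v‖ := by
  have h1 := IsOrthProj.norm_apply_sub_le (h.close j hj hne) v
  have h2 := IsOrthProj.norm_apply_sub_le h.ref v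
  rw [norm_sub_rev] at h1 h2
  calc ‖v - Q j v‖ = ‖(v - S v) + (S v - S' v) + (S' v - Q j v)‖ := by congr 1; abel
    _ ≤ _ := (norm_add₃_le).trans (by linarith)

/-- The difference of the moved normal vectors. -/
theorem PairData.normal_sub_eq (h : PairData J Q c α β S S' e e' s s' Λ r a b) :
    ∑ j ∈ J, α j • Q j ν - ∑ j ∈ J, β j • Q j ν' =
      ∑ j ∈ J, α j • Q j (ν - ν') + ∑ j ∈ J, (α j - β j) • (Q j ν' - S' ν') := by
  have h1 : ∑ j ∈ J, (α j - β j) • S' ν' = 0 := by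
    rw [← Finset.sum_smul, Finset.sum_sub_distrib, h.α1, h.β1, sub_self, zero_smul]
  simp only [smul_sub, Finset.sum_sub_distrib, map_sub]
  rw [h1]
  simp only [sub_smul, Finset.sum_sub_distrib]
  abel

theorem PairData.norm_normal_error_le (h : PairData J Q c α β S S' e e' s s' Λ r a b) :
    ‖∑ j ∈ J, (α j - β j) • (Q j ν' - S' ν')‖ ≤ Λ * s' * (‖a - b‖ * ‖ν'‖ / r) := by
  have hr := h.hr
  have := h.lip_mul (x := fun j => Q j ν' - S' ν') (B := s' * ‖ν'‖ / r)
    (by have := h.hs'; positivity) (fun j hj hne => by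
      rw [div_mul_cancel₀ _ hr.ne']
      exact IsOrthProj.norm_apply_sub_le (h.close j hj hne) _)
  refine this.trans (le_of_eq ?_)
  ring

set_option maxHeartbeats 1600000 in
/-- One full step preserves the pair invariants, at the next scale. -/
theorem PairInv.step (inv : PairInv S e s r Λ A T₀ H₀ a b ν ν')
    (h : PairData J Q c α β S S' e e' s s' Λ r a b) (hA : 0 ≤ A)
    (hsδ : s ≤ δ) (hs'δ : s' ≤ δ) (hδ : 1000 * Λ ^ 2 * δ ≤ 1) :
    PairInv S' e' s' (r / 10) Λ (A * (1 + 400 * Λ ^ 2 * (s ^ 2 + s' ^ 2))) T₀ H₀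
      (a - ∑ j ∈ J, α j • Q j (a - c j)) (b - ∑ j ∈ J, β j • Q j (b - c j))
      (∑ j ∈ J, α j • Q j ν) (∑ j ∈ J, β j • Q j ν') := by
  have hs := h.hs
  have hs' := h.hs'
  have hΛ := h.hΛ
  have hr := h.hr
  have hΛ2 : Λ ≤ Λ ^ 2 := by nlinarith
  have hδ0 : 0 ≤ δ := hs.trans hsδ
  have hΛδ : 1000 * Λ * δ ≤ 1 := by nlinarith
  have hδ1 : 1000 * δ ≤ 1 := by nlinarith
  have hEδ : s ^ 2 + s' ^ 2 ≤ 2 * δ ^ 2 := by nlinarith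
  have hE0 : 0 ≤ s ^ 2 + s' ^ 2 := by positivity
  set E := s ^ 2 + s' ^ 2 with hE
  have hy0 : 0 ≤ Λ ^ 2 * E := by positivity
  have hy : 400 * (Λ ^ 2 * E) ≤ 1 := by nlinarith [mul_nonneg (sq_nonneg Λ) hδ0]
  set w := (a - ∑ j ∈ J, α j • Q j (a - c j)) - (b - ∑ j ∈ J, β j • Q j (b - c j)) with hw
  obtain ⟨hwu, hwl⟩ := h.norm_sub_bounds inv.t_normal inv.b_normal (by linarith) w hw
  set ν₁ := ∑ j ∈ J, α j • Q j ν with hν₁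
  set ν₂ := ∑ j ∈ J, β j • Q j ν' with hν₂
  set t := ‖a - b‖ with ht
  have ht0 : 0 ≤ t := norm_nonneg _
  have hw9 : 9 / 10 * t ≤ ‖w‖ := by nlinarith
  have hcα : ∀ j ∈ J, α j ≠ 0 → ‖Q j - S'‖ ≤ s' := fun j hj hne => h.close j hj (Or.inl hne)
  have hcβ : ∀ j ∈ J, β j ≠ 0 → ‖Q j - S'‖ ≤ s' := fun j hj hne => h.close j hj (Or.inr hne)
  have hν₁l : 9 / 10 * ‖ν‖ ≤ ‖ν₁‖ := by
    have h1 := norm_sub_average_proj_le (Q := Q) h.α0 h.α1 (v := ν) fun j hj hne =>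
      norm_sub_proj_le_of_ref h inv.ν_tan hj (Or.inl hne)
    have h2 := norm_sub_norm_le ν ν₁
    nlinarith [norm_nonneg ν]
  have hν₂l : 9 / 10 * ‖ν'‖ ≤ ‖ν₂‖ := by
    have h1 := norm_sub_average_proj_le (Q := Q) h.β0 h.β1 (v := ν') fun j hj hne =>
      norm_sub_proj_le_of_ref h inv.ν'_tan hj (Or.inr hne)
    have h2 := norm_sub_norm_le ν' ν₂
    nlinarith [norm_nonneg ν']
  set q := t * ‖ν'‖ / r with hq
  have hq0 : 0 ≤ q := by positivity
  have hq1 : 8 * q ≤ ‖w‖ * ‖ν₂‖ / (r / 10) := by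
    have : 81 / 100 * (t * ‖ν'‖) ≤ ‖w‖ * ‖ν₂‖ := by
      calc 81 / 100 * (t * ‖ν'‖) = (9 / 10 * t) * (9 / 10 * ‖ν'‖) := by ring
        _ ≤ _ := mul_le_mul hw9 hν₂l (by positivity) (norm_nonneg _)
    rw [le_div_iff₀ (by positivity), hq]
    have : 8 * (t * ‖ν'‖ / r) * (r / 10) = 8 / 10 * (t * ‖ν'‖) := by field_simp
    rw [this]
    nlinarith [mul_nonneg ht0 (norm_nonneg ν')]
  set q' := ‖w‖ * ‖ν₂‖ / (r / 10) with hq'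
  have herr := h.norm_normal_error_le (ν' := ν')
  rw [← ht, ← hq] at herr
  have heq := h.normal_sub_eq (ν := ν) (ν' := ν')
  rw [← hν₁, ← hν₂] at heq
  set η := ν - ν' with hη
  set err := ∑ j ∈ J, (α j - β j) • (Q j ν' - S' ν') with herrdef
  set Aη := ∑ j ∈ J, α j • Q j η with hAη
  have hΛs' : Λ * s' ≤ 1 / 1000 := by nlinarith
  have hΛs : Λ * s ≤ 1 / 1000 := by nlinarith
  have herr' : ‖err‖ ≤ 1 / 1000 * q := herr.trans (mul_le_mul_of_nonneg_right hΛs' hq0)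
  have hAηle : ‖Aη‖ ≤ ‖η‖ := norm_average_proj_le h.hQ h.α0 h.α1 η
  have hη0 : 0 ≤ ‖η‖ := norm_nonneg _
  have hAηge : (1 - 200 * (Λ ^ 2 * E)) * ‖η‖ - 1 / 10 * q ≤ ‖Aη‖ := by
    rcases le_total q ‖η‖ with hle | hle
    · have h1 := norm_average_proj_ge h.hQ h.α0 h.α1 (v := η) (B := 10 * Λ * (s + s'))
        fun j hj hne => (inv.norm_sub_proj_le h hj (Or.inl hne)).trans (by
          rw [← ht, ← hq, ← hη]
          have i1 : 2 * (1 + Λ) * s * (‖η‖ + q) ≤ 2 * (1 + Λ) * s * (2 * ‖η‖) :=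
            mul_le_mul_of_nonneg_left (by linarith) (by positivity)
          have i2 : (4 * (1 + Λ) * s + (s + s')) ≤ 10 * Λ * (s + s') := by nlinarith
          nlinarith [mul_le_mul_of_nonneg_right i2 hη0])
      have h2 : (10 * Λ * (s + s')) ^ 2 ≤ 200 * (Λ ^ 2 * E) := by
        have : 200 * (Λ ^ 2 * E) - (10 * Λ * (s + s')) ^ 2 = 100 * (Λ * (s - s')) ^ 2 := by
          rw [hE]; ring
        nlinarith [sq_nonneg (Λ * (s - s'))]
      nlinarith [mul_le_mul_of_nonneg_right h2 hη0]
    · have h1 := norm_sub_average_proj_le (Q := Q) h.α0 h.α1 (v := η) (B := 1 / 10 * q)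
        fun j hj hne => (inv.norm_sub_proj_le h hj (Or.inl hne)).trans (by
          rw [← ht, ← hq, ← hη]
          have i1 : 2 * (1 + Λ) * s * (‖η‖ + q) ≤ 2 * (1 + Λ) * s * (2 * q) :=
            mul_le_mul_of_nonneg_left (by linarith) (by positivity)
          have i2 : (s + s') * ‖η‖ ≤ (s + s') * q :=
            mul_le_mul_of_nonneg_left hle (by positivity)
          have i3 : (4 * (1 + Λ) * s + (s + s')) ≤ 1 / 10 := by nlinarith
          nlinarith [mul_le_mul_of_nonneg_right i3 hq0])
      have h2 := norm_sub_norm_le η Aη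
      nlinarith
  have hη₁l : (1 - 200 * (Λ ^ 2 * E)) * ‖η‖ - 2 / 10 * q ≤ ‖ν₁ - ν₂‖ := by
    rw [heq]
    have := norm_sub_le (Aη + err) err
    rw [add_sub_cancel_right] at this
    linarith
  have hφ1 : 1 ≤ (1 + 400 * (Λ ^ 2 * E)) * (1 - 200 * (Λ ^ 2 * E)) := by nlinarith
  refine ⟨?_, ?_, ?_, ?_, ?_, ?_, ?_, ?_, ?_, ?_⟩
  · rw [← hw]
    refine h.norm_normal_le.trans ?_
    rw [← ht]
    have : 0 ≤ (1 + Λ) * s' := by positivity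
    nlinarith [mul_le_mul_of_nonneg_left hw9 this]
  · exact (PairData.norm_normal_point_le h.hS' h.α0 h.α1 fun j hj hne =>
      h.closeA j hj (Or.inl hne)).trans (le_of_eq (by ring))
  · exact (PairData.norm_normal_point_le h.hS' h.β0 h.β1 fun j hj hne =>
      h.closeB j hj (Or.inr hne)).trans (le_of_eq (by ring))
  · have := norm_average_sub_ref_le h.hQ h.α0 h.α1 hs' hcα ν
    nlinarith [mul_le_mul_of_nonneg_left hν₁l hs', mul_nonneg hs' (norm_nonneg ν)]
  · have := norm_average_sub_ref_le h.hQ h.β0 h.β1 hs' hcβ ν'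
    nlinarith [mul_le_mul_of_nonneg_left hν₂l hs', mul_nonneg hs' (norm_nonneg ν')]
  · rw [← hw, ← hq']
    have h1 := norm_average_sub_ref_le h.hQ h.α0 h.α1 hs' hcα η
    have h2 := h.hS'.norm_sub_apply_le err
    have h3 : ‖ν₁ - ν₂ - S' (ν₁ - ν₂)‖ ≤ s' * ‖η‖ + Λ * s' * q := by
      rw [heq, map_add, show Aη + err - (S' Aη + S' err) = (Aη - S' Aη) + (err - S' err) by abel]
      exact (norm_add_le _ _).trans (add_le_add h1 (h2.trans herr))
    refine h3.trans ?_
    have h4 : ‖η‖ ≤ 2 * ‖ν₁ - ν₂‖ + q := by nlinarith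
    have h5 : ‖η‖ + Λ * q ≤ 2 * (1 + Λ) * (‖ν₁ - ν₂‖ + q') := by
      nlinarith [norm_nonneg (ν₁ - ν₂), mul_nonneg (sub_nonneg.2 hΛ) (norm_nonneg (ν₁ - ν₂)),
        mul_nonneg (sub_nonneg.2 hΛ) hq0, mul_nonneg (sub_nonneg.2 hΛ) (sub_nonneg.2 hq1)]
    nlinarith [mul_le_mul_of_nonneg_left h5 hs']
  · rw [← hw]
    have h1 := inv.t_le
    have : ‖w‖ ≤ (1 + 400 * (Λ ^ 2 * E)) * t := by nlinarith
    refine this.trans ?_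
    have h2 : 0 ≤ 1 + 400 * (Λ ^ 2 * E) := by positivity
    calc _ ≤ (1 + 400 * (Λ ^ 2 * E)) * (A * T₀) := mul_le_mul_of_nonneg_left h1 h2
      _ = _ := by ring
  · rw [← hw]
    have h1 := inv.le_t
    have h2 : t ≤ (1 + 400 * (Λ ^ 2 * E)) * ‖w‖ := by
      have : (1 + 400 * (Λ ^ 2 * E)) * ((1 - 200 * (Λ ^ 2 * E)) * t) ≤
          (1 + 400 * (Λ ^ 2 * E)) * ‖w‖ := mul_le_mul_of_nonneg_left (by nlinarith) (by positivity)
      nlinarith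
    calc T₀ ≤ A * t := h1
      _ ≤ A * ((1 + 400 * (Λ ^ 2 * E)) * ‖w‖) := mul_le_mul_of_nonneg_left h2 hA
      _ = _ := by ring
  · rw [← hw, ← hq', heq]
    have h1 := inv.η_le
    rw [← ht, ← hq, ← hη] at h1
    have := norm_add_le Aη err
    linarith
  · rw [← hw, ← hq']
    have h1 := inv.le_η
    rw [← ht, ← hq, ← hη] at h1
    have h2 : ‖η‖ + q ≤ (1 + 400 * (Λ ^ 2 * E)) * (‖ν₁ - ν₂‖ + q') := by
      have i1 : (1 - 200 * (Λ ^ 2 * E)) * ‖η‖ + q ≤ ‖ν₁ - ν₂‖ + q' := by linarith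
      have i2 := mul_le_mul_of_nonneg_left i1 (by positivity : 0 ≤ 1 + 400 * (Λ ^ 2 * E))
      nlinarith [mul_nonneg hy0 hq0]
    calc H₀ ≤ A * (‖η‖ + q) := h1
      _ ≤ A * ((1 + 400 * (Λ ^ 2 * E)) * (‖ν₁ - ν₂‖ + q')) := mul_le_mul_of_nonneg_left h2 hA
      _ = _ := by ring

end PairStep
end Step

section Net

/-- A compact set has a finite maximal `r`-separated subset. -/
theorem exists_separated_net {F : Type*} [MetricSpace F] {K : Set F} (hK : IsCompact K) {r : ℝ}
    (hr : 0 < r) : ∃ X : Finset F, (∀ x ∈ X, x ∈ K) ∧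
      (∀ x ∈ X, ∀ y ∈ X, x ≠ y → r ≤ dist x y) ∧ ∀ p ∈ K, ∃ x ∈ X, dist p x ≤ r := by
  lift r to NNReal using hr.le
  have hr' : r / 2 ≠ 0 := by
    have : 0 < r := by exact_mod_cast hr
    positivity
  have hfin : packingNumber r K ≠ ⊤ := by
    obtain ⟨N, -, hN, hc⟩ := exists_finite_isCover_of_isCompact hr' hK
    have h1 := packingNumber_two_mul_le_externalCoveringNumber (r / 2) K
    rw [mul_div_cancel₀ _ two_ne_zero] at h1
    exact ((h1.trans hc.externalCoveringNumber_le_encard).trans_lt hN.encard_lt_top).ne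
  have hcov : IsCover r K (maximalSeparatedSet r K) := isCover_maximalSeparatedSet hfin
  have hf : (maximalSeparatedSet r K).Finite := by
    rw [← Set.encard_lt_top_iff, encard_maximalSeparatedSet hfin]
    exact hfin.lt_top
  refine ⟨hf.toFinset, fun x hx => maximalSeparatedSet_subset (by simpa using hx),
    fun x hx y hy hne => ?_, fun p hp => ?_⟩
  · have := isSeparated_maximalSeparatedSet (by simpa using hx) (by simpa using hy) hne
    simp only [edist_nndist, ENNReal.coe_lt_coe] at this
    exact_mod_cast this.le
  · obtain ⟨x, hx, hpx⟩ := hcov hp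
    refine ⟨x, by simpa using hx, ?_⟩
    simp only [mem_ofPred_eq, edist_nndist, ENNReal.coe_le_coe] at hpx
    exact_mod_cast hpx

variable {F : Type*} [NormedAddCommGroup F] [NormedSpace ℝ F] [FiniteDimensional ℝ F]

open Classical in
theorem card_filter_dist_lt_le {X : Finset F} {r : ℝ} (hr : 0 < r)
    (hX : ∀ x ∈ X, ∀ y ∈ X, x ≠ y → r ≤ dist x y) (a : F) :
    (X.filter fun x => dist a x < 2 * r).card ≤ 5 ^ Module.finrank ℝ F := by
  set s := X.filter fun x => dist a x < 2 * r
  have hinj : Function.Injective fun x : F => r⁻¹ • (x - a) := fun x y h => by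
    simpa [hr.ne'] using h
  rw [← Finset.card_image_of_injective s hinj]
  refine Besicovitch.card_le_of_separated _ ?_ ?_
  · intro c hc
    obtain ⟨x, hx, rfl⟩ := Finset.mem_image.1 hc
    have := (Finset.mem_filter.1 hx).2
    rw [norm_smul, norm_inv, Real.norm_of_nonneg hr.le, ← dist_eq_norm, dist_comm, inv_mul_le_iff₀ hr]
    linarith
  · intro c hc e he hne
    obtain ⟨x, hx, rfl⟩ := Finset.mem_image.1 hc
    obtain ⟨y, hy, rfl⟩ := Finset.mem_image.1 he
    rw [← smul_sub, sub_sub_sub_cancel_right, norm_smul, norm_inv, Real.norm_of_nonneg hr.le,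
      ← dist_eq_norm, le_inv_mul_iff₀ hr, mul_one]
    exact hX x (Finset.mem_filter.1 hx).1 y (Finset.mem_filter.1 hy).1 fun h => hne (by rw [h])

/-- A Lipschitz partition of unity at scale `r` near `K`, with centers in `K`. -/
structure PartUnity (K : Set F) (r Λ : ℝ) (X : Finset F) (θ : F → F → ℝ) : Prop where
  mem : ∀ j ∈ X, j ∈ K
  nonneg : ∀ a j, 0 ≤ θ a j
  sum_eq_one : ∀ a, (∃ p ∈ K, dist a p ≤ r / 2) → ∑ j ∈ X, θ a j = 1
  dist_lt : ∀ a j, θ a j ≠ 0 → dist a j < 2 * r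
  lip : ∀ a b, (∃ p ∈ K, dist a p ≤ r / 2) → (∃ p ∈ K, dist b p ≤ r / 2) →
    (∑ j ∈ X, |θ a j - θ b j|) * r ≤ Λ * dist a b

theorem sum_abs_div_sub_div_le {ι : Type*} {X : Finset ι} {w w' : ι → ℝ} (hw' : ∀ j, 0 ≤ w' j)
    (h : 1 / 2 ≤ ∑ j ∈ X, w j) (h' : 1 / 2 ≤ ∑ j ∈ X, w' j) :
    ∑ j ∈ X, |w j / (∑ i ∈ X, w i) - w' j / (∑ i ∈ X, w' i)| ≤ 4 * ∑ j ∈ X, |w j - w' j| := by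
  set S := ∑ j ∈ X, w j
  set S' := ∑ j ∈ X, w' j with hS'
  have hD : |S' - S| ≤ ∑ j ∈ X, |w j - w' j| := by
    rw [← Finset.sum_sub_distrib]
    refine (Finset.abs_sum_le_sum_abs _ _).trans_eq (Finset.sum_congr rfl fun j _ => abs_sub_comm _ _)
  have hS0 : 0 < S := by linarith
  have hS0' : 0 < S' := by linarith
  have key : ∀ j ∈ X, |w j / S - w' j / S'| ≤ |w j - w' j| * S⁻¹ + w' j * (|S' - S| * S⁻¹ * S'⁻¹) := by
    intro j _
    have : w j / S - w' j / S' = (w j - w' j) * S⁻¹ + w' j * ((S' - S) * S⁻¹ * S'⁻¹) := by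
      field_simp; ring
    rw [this]
    refine (abs_add_le _ _).trans_eq ?_
    simp only [abs_mul, abs_of_pos (inv_pos.2 hS0), abs_of_pos (inv_pos.2 hS0'), abs_of_nonneg (hw' j)]
  refine (Finset.sum_le_sum key).trans ?_
  rw [Finset.sum_add_distrib, ← Finset.sum_mul, ← Finset.sum_mul, ← hS']
  have h2 : S⁻¹ ≤ 2 := by
    rw [inv_le_comm₀ hS0 two_pos]; linarith
  have h3 : S' * (|S' - S| * S⁻¹ * S'⁻¹) = |S' - S| * S⁻¹ := by field_simp
  rw [h3, ← add_mul]
  have h4 : 0 ≤ ∑ j ∈ X, |w j - w' j| := Finset.sum_nonneg fun _ _ => abs_nonneg _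
  calc _ ≤ (2 * ∑ j ∈ X, |w j - w' j|) * 2 :=
        mul_le_mul (by linarith) h2 (by positivity) (by positivity)
    _ = _ := by ring

theorem exists_partUnity {K : Set F} (hK : IsCompact K) {r : ℝ} (hr : 0 < r) :
    ∃ X θ, PartUnity K r (8 * 5 ^ Module.finrank ℝ F) X θ := by
  classical
  obtain ⟨X, hXK, hsep, hcov⟩ := exists_separated_net hK hr
  set w : F → F → ℝ := fun a j => max 0 (2 - dist a j / r) with hw
  have hw0 : ∀ a j, 0 ≤ w a j := fun a j => le_max_left _ _
  have hS : ∀ a, (∃ p ∈ K, dist a p ≤ r / 2) → 1 / 2 ≤ ∑ j ∈ X, w a j := by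
    rintro a ⟨p, hp, hap⟩
    obtain ⟨x, hx, hpx⟩ := hcov p hp
    refine le_trans ?_ (Finset.single_le_sum (fun j _ => hw0 a j) hx)
    refine le_trans ?_ (le_max_right _ _)
    have : dist a x / r ≤ 3 / 2 := by
      rw [div_le_iff₀ hr]; linarith [dist_triangle a p x]
    linarith
  have hwd : ∀ a j, w a j ≠ 0 → dist a j < 2 * r := by
    intro a j h
    by_contra! hc
    refine h (max_eq_left ?_)
    have : 2 ≤ dist a j / r := by rwa [le_div_iff₀ hr]
    linarith
  refine ⟨X, fun a j => w a j / ∑ i ∈ X, w a i, hXK, fun a j => ?_, fun a ha => ?_, fun a j h => ?_,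
    fun a b ha hb => ?_⟩
  · exact div_nonneg (hw0 a j) (Finset.sum_nonneg fun i _ => hw0 a i)
  · rw [← Finset.sum_div, div_self]
    linarith [hS a ha]
  · exact hwd a j fun h0 => h (by simp [h0])
  · have h1 := sum_abs_div_sub_div_le (hw0 b) (hS a ha) (hS b hb)
    have h2 : ∑ j ∈ X, |w a j - w b j| ≤ 2 * 5 ^ Module.finrank ℝ F * (dist a b / r) := by
      set Y := (X.filter fun x => dist a x < 2 * r) ∪ (X.filter fun x => dist b x < 2 * r)
      have hYX : Y ⊆ X := Finset.union_subset (Finset.filter_subset _ _) (Finset.filter_subset _ _)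
      have hcard : (Y.card : ℝ) ≤ 2 * 5 ^ Module.finrank ℝ F := by
        have h3 := card_filter_dist_lt_le hr hsep a
        have h4 := card_filter_dist_lt_le hr hsep b
        have h5 := Finset.card_union_le (X.filter fun x => dist a x < 2 * r)
          (X.filter fun x => dist b x < 2 * r)
        have : Y.card ≤ 2 * 5 ^ Module.finrank ℝ F := by
          refine h5.trans ?_; omega
        exact_mod_cast this
      rw [← Finset.sum_subset hYX]
      · refine (Finset.sum_le_card_nsmul Y _ (dist a b / r) fun j _ => ?_).trans ?_
        · have h6 := abs_max_sub_max_le_max 0 (2 - dist a j / r) 0 (2 - dist b j / r)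
          have h7 : (2 - dist a j / r) - (2 - dist b j / r) = (dist b j - dist a j) / r := by ring
          rw [h7, sub_self, abs_zero, abs_div, abs_of_pos hr] at h6
          refine h6.trans (max_le (by positivity) ((div_le_div_iff_of_pos_right hr).2 ?_))
          rw [dist_comm a b]
          exact abs_dist_sub_le _ _ _
        · rw [nsmul_eq_mul]
          exact mul_le_mul_of_nonneg_right hcard (by positivity)
      · intro j hj hjY
        have h3 : w a j = 0 := by
          by_contra h
          exact hjY (Finset.mem_union_left _ (Finset.mem_filter.2 ⟨hj, hwd _ _ h⟩))
        have h4 : w b j = 0 := by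
          by_contra h
          exact hjY (Finset.mem_union_right _ (Finset.mem_filter.2 ⟨hj, hwd _ _ h⟩))
        simp [h3, h4]
    calc _ ≤ (4 * (2 * 5 ^ Module.finrank ℝ F * (dist a b / r))) * r := by
          refine mul_le_mul_of_nonneg_right (h1.trans ?_) hr.le
          linarith
      _ = _ := by field_simp; ring

end Net

/-- The `k`-th scale `10⁻ᵏ`. -/
def rad (k : ℕ) : ℝ := (1 / 10) ^ k

theorem rad_zero : rad 0 = 1 := pow_zero _

theorem rad_succ (k : ℕ) : rad (k + 1) = rad k / 10 := by rw [rad, pow_succ, rad]; ring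

theorem rad_pos (k : ℕ) : 0 < rad k := by unfold rad; positivity

theorem rad_le_one (k : ℕ) : rad k ≤ 1 := pow_le_one₀ (by norm_num) (by norm_num)

section PlaneData

variable {F : Type*} [NormedAddCommGroup F] [InnerProductSpace ℝ F]

variable (F) in
/-- A choice of planes at all scales, through points `c k x` and with normal projections `Q k x`,
with coherence bounds `b k x` and partitions of unity `θ k` indexed by `X k`. -/
structure PlaneData where
  c : ℕ → F → F
  Q : ℕ → F → F →L[ℝ] F
  b : ℕ → F → ℝ
  X : ℕ → Finset F
  θ : ℕ → F → F → ℝ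

namespace PlaneData

/-- Signed distance to the plane of generation `k` at `x`. -/
def N (D : PlaneData F) (k : ℕ) (x z : F) : F := D.Q k x (z - D.c k x)

/-- Averaged signed distance. -/
def avgN (D : PlaneData F) (k : ℕ) (a : F) : F := ∑ j ∈ D.X k, D.θ k a j • D.Q k j (a - D.c k j)

/-- Averaged normal projection. -/
def avgQ (D : PlaneData F) (k : ℕ) (a ν : F) : F := ∑ j ∈ D.X k, D.θ k a j • D.Q k j ν

end PlaneData

/-- The planes of `D` approximate `E` well near the points of `E ∩ closedBall 0 R`, and vary slowly
with the point and the scale. -/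
structure PlaneSys (D : PlaneData F) (E : Set F) (R δ : ℝ) : Prop where
  proj : ∀ k, ∀ x ∈ E, ‖x‖ ≤ R → IsOrthProj (D.Q k x)
  near_plane : ∀ k, ∀ x ∈ E, ‖x‖ ≤ R → ∀ y ∈ E, dist y x ≤ 5 * rad k → ‖D.N k x y‖ ≤ δ * rad k
  near_set : ∀ k, ∀ x ∈ E, ‖x‖ ≤ R → ∀ z, D.N k x z = 0 → dist z x ≤ 5 * rad k →
    infDist z E ≤ δ * rad k
  b_nonneg : ∀ k p, 0 ≤ D.b k p
  b_le : ∀ k p, D.b k p ≤ δ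
  norm_sub_le : ∀ k l, l = k ∨ l = k + 1 → ∀ x ∈ E, ‖x‖ ≤ R → ∀ p ∈ E, ‖p‖ ≤ R →
    dist x p ≤ 5 * rad k → ‖D.Q l x - D.Q k p‖ ≤ D.b k p
  norm_N_sub_le : ∀ k l, l = k ∨ l = k + 1 → ∀ x ∈ E, ‖x‖ ≤ R → ∀ p ∈ E, ‖p‖ ≤ R →
    dist x p ≤ 5 * rad k → ∀ z, dist z p ≤ 5 * rad k → ‖D.N l x z - D.N k p z‖ ≤ D.b k p * rad k

/-- `a` is close to `E` at generation `k`. -/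
def IsNear (E : Set F) (δ : ℝ) (k : ℕ) (a : F) : Prop := ∃ p ∈ E, dist a p ≤ 30 * δ * rad k

end PlaneData

section Near

variable {F : Type*} [NormedAddCommGroup F] [InnerProductSpace ℝ F]

/-- The standing assumptions for the construction. -/
structure Setup (D : PlaneData F) (E : Set F) (R δ Λ : ℝ) : Prop extends PlaneSys D E R δ where
  closed : IsClosed E
  part : ∀ k, PartUnity (E ∩ closedBall 0 R) (rad k) Λ (D.X k) (D.θ k)
  δ_nonneg : 0 ≤ δ
  Λ_ge : 1 ≤ Λ
  small : 10000 * Λ ^ 2 * δ ≤ 1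

namespace Setup

variable {D : PlaneData F} {E : Set F} {R δ Λ : ℝ}

theorem δ_le (h : Setup D E R δ Λ) : 10000 * δ ≤ 1 := by
  have := h.small; have := h.δ_nonneg; have := h.Λ_ge
  nlinarith [mul_nonneg (h.δ_nonneg) (sub_nonneg.2 (one_le_pow₀ (n := 2) h.Λ_ge))]

theorem δ_rad (h : Setup D E R δ Λ) (k : ℕ) : 10000 * (δ * rad k) ≤ rad k := by
  nlinarith [h.δ_le, rad_pos k]

theorem δ_rad_nonneg (h : Setup D E R δ Λ) (k : ℕ) : 0 ≤ δ * rad k :=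
  mul_nonneg h.δ_nonneg (rad_pos k).le

variable {k : ℕ} {a : F}

theorem norm_le_of_dist (h : Setup D E R δ Λ) (ha : ‖a‖ ≤ R - 1) {p : F}
    (hp : dist a p ≤ 30 * δ * rad k) : ‖p‖ ≤ R := by
  have h1 := h.δ_rad k
  have h2 := rad_le_one k
  have h3 : ‖p‖ ≤ ‖a‖ + dist a p := by
    rw [dist_eq_norm]; exact norm_le_norm_add_norm_sub a p
  linarith

theorem exists_mem_dist_le (h : Setup D E R δ Λ) (ha : ‖a‖ ≤ R - 1) (hN : IsNear E δ k a) :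
    ∃ p ∈ E ∩ closedBall 0 R, dist a p ≤ rad k / 2 := by
  obtain ⟨p, hp, hap⟩ := hN
  exact ⟨p, ⟨hp, by simpa using h.norm_le_of_dist ha hap⟩, by linarith [h.δ_rad k, rad_pos k]⟩

theorem sum_θ (h : Setup D E R δ Λ) (ha : ‖a‖ ≤ R - 1) (hN : IsNear E δ k a) :
    ∑ j ∈ D.X k, D.θ k a j = 1 :=
  (h.part k).sum_eq_one a (h.exists_mem_dist_le ha hN)

theorem mem_E (h : Setup D E R δ Λ) {j : F} (hj : j ∈ D.X k) : j ∈ E := ((h.part k).mem j hj).1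

theorem norm_le (h : Setup D E R δ Λ) {j : F} (hj : j ∈ D.X k) : ‖j‖ ≤ R := by
  simpa using ((h.part k).mem j hj).2

theorem projX (h : Setup D E R δ Λ) {j : F} (hj : j ∈ D.X k) : IsOrthProj (D.Q k j) :=
  h.proj k j (h.mem_E hj) (h.norm_le hj)

theorem norm_N_le (h : Setup D E R δ Λ) (hN : IsNear E δ k a) {x : F}
    (hx : x ∈ E) (hxR : ‖x‖ ≤ R) (hd : dist a x ≤ 4 * rad k) : ‖D.N k x a‖ ≤ 31 * (δ * rad k) := by
  obtain ⟨p, hp, hap⟩ := hN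
  have h1 := h.δ_rad k
  have h2 := h.near_plane k x hx hxR p hp (by
    linarith [dist_triangle_left p x a, rad_pos k])
  have h3 : D.N k x a = D.Q k x (a - p) + D.N k x p := by
    simp only [PlaneData.N, ← map_add]; congr 1; abel
  have h4 := (h.proj k x hx hxR).norm_apply_le (a - p)
  rw [← dist_eq_norm] at h4
  rw [h3]
  refine (norm_add_le _ _).trans ?_
  linarith

theorem norm_avgN_le (h : Setup D E R δ Λ) (ha : ‖a‖ ≤ R - 1) (hN : IsNear E δ k a) :
    ‖D.avgN k a‖ ≤ 31 * (δ * rad k) := by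
  refine norm_average_le (fun j _ => (h.part k).nonneg a j) (h.sum_θ ha hN) fun j hj hne => ?_
  exact h.norm_N_le hN (h.mem_E hj) (h.norm_le hj)
    (by linarith [(h.part k).dist_lt a j hne, rad_pos k])

theorem dist_center (h : Setup D E R δ Λ) {j p : F} (hne : D.θ k a j ≠ 0) {t : ℝ}
    (hp : dist a p ≤ t) : dist j p ≤ 2 * rad k + t := by
  linarith [(h.part k).dist_lt a j hne, dist_triangle_left j p a]

/-- A full step brings the point closer to the local plane. -/
theorem norm_N_sub_avgN_le (h : Setup D E R δ Λ) (ha : ‖a‖ ≤ R - 1) {p : F} (hp : p ∈ E)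
    (hap : dist a p ≤ 30 * δ * rad k) : ‖D.N k p (a - D.avgN k a)‖ ≤ δ * rad k := by
  have h1 := h.δ_rad k
  have h0 := rad_pos k
  have hpR := h.norm_le_of_dist ha hap
  have hN : IsNear E δ k a := ⟨p, hp, hap⟩
  have hQ := h.proj k p hp hpR
  have h3 : D.N k p (a - D.avgN k a) =
      ∑ j ∈ D.X k, D.θ k a j • D.Q k p (D.N k p a - D.N k j a) := by
    simp_rw [← map_smul]
    rw [← map_sum, ← sub_average_eq (x := fun j => D.N k j a) _ (h.sum_θ ha hN), map_sub]
    simp only [PlaneData.N, PlaneData.avgN, map_sub, hQ.idem]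
    abel
  rw [h3]
  refine norm_average_le (fun j _ => (h.part k).nonneg a j) (h.sum_θ ha hN) fun j hj hne => ?_
  refine (hQ.norm_apply_le _).trans ?_
  rw [norm_sub_rev]
  have h4 := h.norm_N_sub_le k k (Or.inl rfl) j (h.mem_E hj) (h.norm_le hj) p hp hpR
    (by linarith [h.dist_center hne hap]) a (by linarith)
  exact h4.trans (mul_le_mul_of_nonneg_right (h.b_le k p) h0.le)

/-- A full step preserves nearness to `E`, at the next scale. -/
theorem isNear_succ [FiniteDimensional ℝ F] (h : Setup D E R δ Λ) (ha : ‖a‖ ≤ R - 1) (hN : IsNear E δ k a) :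
    IsNear E δ (k + 1) (a - D.avgN k a) := by
  obtain ⟨p, hp, hap⟩ := id hN
  have h1 := h.δ_rad k
  have h0 := rad_pos k
  have hpR := h.norm_le_of_dist ha hap
  have hQ := h.proj k p hp hpR
  have h2 := h.norm_N_sub_avgN_le ha hp hap
  have h3 := h.norm_avgN_le ha hN
  set w := a - D.avgN k a with hw
  have h4 : D.N k p (w - D.N k p w) = 0 := by
    simp only [PlaneData.N, map_sub, hQ.idem]; abel
  have h5 : dist (w - D.N k p w) w ≤ δ * rad k := by
    rw [dist_eq_norm, sub_sub_cancel_left, norm_neg]; exact h2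
  have h6 : dist w a ≤ 31 * (δ * rad k) := by
    rw [dist_eq_norm, hw, sub_sub_cancel_left, norm_neg]; exact h3
  have h7 := h.near_set k p hp hpR _ h4 (by
    linarith [dist_triangle4 (w - D.N k p w) w a p])
  obtain ⟨q, hq, hqd⟩ := h.closed.exists_infDist_eq_dist ⟨p, hp⟩ (w - D.N k p w)
  refine ⟨q, hq, ?_⟩
  rw [rad_succ]
  linarith [dist_triangle_left w q (w - D.N k p w), h.δ_rad_nonneg k]

theorem norm_sub_avgQ_le (h : Setup D E R δ Λ) (ha : ‖a‖ ≤ R - 1) (hN : IsNear E δ k a) {ν : F}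
    (hν : ∀ x ∈ E, ‖x‖ ≤ R → dist x a ≤ 3 * rad k → ‖ν - D.Q k x ν‖ ≤ 2 * δ * ‖ν‖) :
    ‖ν - D.avgQ k a ν‖ ≤ 2 * δ * ‖ν‖ := by
  rw [PlaneData.avgQ, sub_average_eq _ (h.sum_θ ha hN)]
  refine norm_average_le (fun j _ => (h.part k).nonneg a j) (h.sum_θ ha hN) fun j hj hne => ?_
  refine hν j (h.mem_E hj) (h.norm_le hj) ?_
  rw [dist_comm]
  linarith [(h.part k).dist_lt a j hne, rad_pos k]

theorem norm_avgQ_le (h : Setup D E R δ Λ) (ha : ‖a‖ ≤ R - 1) (hN : IsNear E δ k a) (ν : F) :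
    ‖D.avgQ k a ν‖ ≤ ‖ν‖ :=
  norm_average_le (fun j _ => (h.part k).nonneg a j) (h.sum_θ ha hN) fun _ hj _ =>
    (h.projX hj).norm_apply_le _

/-- After a full step, the vector `ν` is nearly normal at the next scale. -/
theorem nuGood_succ (h : Setup D E R δ Λ) (ha : ‖a‖ ≤ R - 1) (hN : IsNear E δ k a) {ν : F}
    (hν : ∀ x ∈ E, ‖x‖ ≤ R → dist x a ≤ 3 * rad k → ‖ν - D.Q k x ν‖ ≤ 2 * δ * ‖ν‖) {x : F}
    (hx : x ∈ E) (hxR : ‖x‖ ≤ R) (hd : dist x (a - D.avgN k a) ≤ 3 * rad (k + 1)) :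
    ‖D.avgQ k a ν - D.Q (k + 1) x (D.avgQ k a ν)‖ ≤ 2 * δ * ‖D.avgQ k a ν‖ := by
  have h0 := rad_pos k
  have h1 := h.δ_rad k
  rw [rad_succ] at hd
  have h2 : ‖D.avgQ k a ν - D.Q (k + 1) x (D.avgQ k a ν)‖ ≤ δ * ‖ν‖ := by
    simp only [PlaneData.avgQ, map_sum, map_smul]
    rw [← Finset.sum_sub_distrib]
    simp_rw [← smul_sub]
    refine norm_average_le (fun j _ => (h.part k).nonneg a j) (h.sum_θ ha hN) fun j hj hne => ?_
    have h3 : dist a x ≤ rad k := by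
      have h4 := h.norm_avgN_le ha hN
      have h5 : dist (a - D.avgN k a) a = ‖D.avgN k a‖ := by
        rw [dist_eq_norm, sub_sub_cancel_left, norm_neg]
      rw [dist_comm]
      linarith [dist_triangle x (a - D.avgN k a) a]
    have h4 := h.norm_sub_le k (k + 1) (Or.inr rfl) x hx hxR j (h.mem_E hj) (h.norm_le hj)
      (by rw [dist_comm]; linarith [h.dist_center hne h3])
    rw [norm_sub_rev] at h4
    refine ((h.projX hj).norm_cross_le h4 ν).trans ?_
    exact mul_le_mul (h.b_le k j) ((h.projX hj).norm_apply_le ν) (norm_nonneg _) h.δ_nonneg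
  have h3 := h.norm_sub_avgQ_le ha hN hν
  have h4 : ‖ν‖ ≤ ‖D.avgQ k a ν‖ + ‖ν - D.avgQ k a ν‖ := norm_le_norm_add_norm_sub' _ _
  have h5 := h.δ_le
  have h6 := norm_nonneg ν
  have h7 : 2 * δ * ‖ν‖ ≤ ‖ν‖ / 2 := by nlinarith
  nlinarith [h.δ_nonneg]

end Setup
end Near

section Orbit

variable {F : Type*} [NormedAddCommGroup F]

/-- The height of a pair (base point, normal vector); the dynamics of generation `k` only acts at
heights less than `2 * rad k`. -/
def height (z : F × F) : ℝ := max 0 (‖z.1‖ - 3) + ‖z.2‖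

/-- The cut-off of generation `k`. -/
def cutoff (k : ℕ) (z : F × F) : ℝ := max 0 (min 1 (2 - height z / rad k))

theorem norm_snd_le_height (z : F × F) : ‖z.2‖ ≤ height z := by
  unfold height; linarith [le_max_left 0 (‖z.1‖ - 3)]

theorem norm_fst_le_height (z : F × F) : ‖z.1‖ ≤ 3 + height z := by
  unfold height; linarith [le_max_right 0 (‖z.1‖ - 3), norm_nonneg z.2]

theorem norm_fst_le_of_height {k : ℕ} {z : F × F} (h : height z < 5 / 2 * rad k) : ‖z.1‖ ≤ 7 - 1 := by
  linarith [norm_fst_le_height z, rad_le_one k]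

theorem abs_height_sub_le (z w : F × F) : |height z - height w| ≤ ‖z.1 - w.1‖ + ‖z.2 - w.2‖ := by
  have h1 := abs_max_sub_max_le_max 0 (‖z.1‖ - 3) 0 (‖w.1‖ - 3)
  rw [sub_self, abs_zero, sub_sub_sub_cancel_right] at h1
  have h2 := h1.trans (max_le (norm_nonneg (z.1 - w.1)) (abs_norm_sub_norm_le z.1 w.1))
  have h3 := abs_norm_sub_norm_le z.2 w.2
  have h4 : height z - height w =
      (max 0 (‖z.1‖ - 3) - max 0 (‖w.1‖ - 3)) + (‖z.2‖ - ‖w.2‖) := by unfold height; ring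
  rw [h4]
  exact (abs_add_le _ _).trans (add_le_add h2 h3)

theorem cutoff_nonneg (k : ℕ) (z : F × F) : 0 ≤ cutoff k z := le_max_left _ _

theorem cutoff_le_one (k : ℕ) (z : F × F) : cutoff k z ≤ 1 :=
  max_le zero_le_one (min_le_left _ _)

theorem cutoff_eq_one {k : ℕ} {z : F × F} (h : height z ≤ rad k) : cutoff k z = 1 := by
  have : height z / rad k ≤ 1 := (div_le_one (rad_pos k)).2 h
  rw [cutoff, min_eq_left (by linarith), max_eq_right zero_le_one]

theorem cutoff_eq_zero {k : ℕ} {z : F × F} (h : 2 * rad k ≤ height z) : cutoff k z = 0 := by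
  have : 2 ≤ height z / rad k := (le_div_iff₀ (rad_pos k)).2 h
  rw [cutoff, max_eq_left ((min_le_right _ _).trans (by linarith))]

theorem abs_cutoff_sub_le (k : ℕ) (z w : F × F) :
    |cutoff k z - cutoff k w| * rad k ≤ ‖z.1 - w.1‖ + ‖z.2 - w.2‖ := by
  have h0 := rad_pos k
  refine le_trans ?_ (abs_height_sub_le z w)
  rw [← le_div_iff₀ h0]
  have h1 := abs_max_sub_max_le_max 0 (min 1 (2 - height z / rad k)) 0
    (min 1 (2 - height w / rad k))
  have h2 := abs_min_sub_min_le_max 1 (2 - height z / rad k) 1 (2 - height w / rad k)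
  have h3 : 2 - height z / rad k - (2 - height w / rad k) = -((height z - height w) / rad k) := by
    ring
  rw [sub_self, abs_zero] at h1 h2
  rw [h3, abs_neg, abs_div, abs_of_pos h0] at h2
  have h4 : 0 ≤ |height z - height w| / rad k := by positivity
  exact h1.trans (max_le h4 (h2.trans (max_le h4 le_rfl)))

/-- The separation of two pairs. -/
def sep (z w : F × F) : ℝ := ‖z.1 - w.1‖ + ‖z.2 - w.2‖

theorem norm_fst_sub_le_sep (z w : F × F) : ‖z.1 - w.1‖ ≤ sep z w :=
  le_add_of_nonneg_right (norm_nonneg _)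

variable [InnerProductSpace ℝ F]

namespace PlaneData

/-- One step of the dynamics. -/
def step (D : PlaneData F) (k : ℕ) (z : F × F) : F × F :=
  (z.1 - cutoff k z • D.avgN k z.1, z.2 - cutoff k z • (z.2 - D.avgQ k z.1 z.2))

/-- The orbit of a pair. -/
def orbit (D : PlaneData F) (z : F × F) : ℕ → F × F
  | 0 => z
  | k + 1 => D.step k (orbit D z k)

theorem step_full (D : PlaneData F) {k : ℕ} {z : F × F} (h : height z ≤ rad k) :
    D.step k z = (z.1 - D.avgN k z.1, D.avgQ k z.1 z.2) := by
  simp [step, cutoff_eq_one h]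

theorem step_frozen (D : PlaneData F) {k : ℕ} {z : F × F} (h : 2 * rad k ≤ height z) :
    D.step k z = z := by
  simp [step, cutoff_eq_zero h]

theorem orbit_frozen (D : PlaneData F) {k : ℕ} {z : F × F} (h : 2 * rad k ≤ height (D.orbit z k))
    (m : ℕ) : D.orbit z (k + m) = D.orbit z k := by
  induction m with
  | zero => rfl
  | succ m ih =>
    rw [← add_assoc, orbit, ih, step_frozen]
    refine le_trans ?_ h
    have : rad (k + m) ≤ rad k := pow_le_pow_of_le_one (by norm_num) (by norm_num) (by omega)
    linarith

/-- Almost normal vectors. -/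
def NuGood (D : PlaneData F) (E : Set F) (R δ : ℝ) (k : ℕ) (z : F × F) : Prop :=
  ∀ x ∈ E, ‖x‖ ≤ R → dist x z.1 ≤ 3 * rad k → ‖z.2 - D.Q k x z.2‖ ≤ 2 * δ * ‖z.2‖

/-- The pairs on which the dynamics is under control. -/
def Good (D : PlaneData F) (E : Set F) (R δ : ℝ) (k : ℕ) (z : F × F) : Prop :=
  5 / 2 * rad k ≤ height z ∨ (IsNear E δ k z.1 ∧ D.NuGood E R δ k z)

end PlaneData

variable {D : PlaneData F} {E : Set F} {δ Λ : ℝ} {k : ℕ} {z : F × F}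

theorem PlaneData.Good.resolve (hG : D.Good E 7 δ k z) (h : height z < 5 / 2 * rad k) :
    IsNear E δ k z.1 ∧ D.NuGood E 7 δ k z := hG.resolve_left (not_le.2 h)

namespace Setup

theorem norm_step_sub_le (h : Setup D E 7 δ Λ) (hG : D.Good E 7 δ k z) :
    ‖(D.step k z).1 - z.1‖ ≤ 31 * (δ * rad k) ∧ ‖(D.step k z).2 - z.2‖ ≤ 5 * (δ * rad k) := by
  have h0 := h.δ_rad_nonneg k
  rcases lt_or_ge (height z) (5 / 2 * rad k) with hlt | hge
  · obtain ⟨hN, hν⟩ := hG.resolve hlt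
    have ha := norm_fst_le_of_height hlt
    simp only [PlaneData.step, sub_sub_cancel_left, norm_neg, norm_smul,
      Real.norm_of_nonneg (cutoff_nonneg k z)]
    have h1 := h.norm_avgN_le ha hN
    have h2 := h.norm_sub_avgQ_le ha hN hν
    have h3 : 2 * δ * ‖z.2‖ ≤ 5 * (δ * rad k) := by
      nlinarith [norm_snd_le_height z, h.δ_nonneg]
    have hc := cutoff_le_one k z
    exact ⟨(mul_le_of_le_one_left (norm_nonneg _) hc).trans h1,
      (mul_le_of_le_one_left (norm_nonneg _) hc).trans (h2.trans h3)⟩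
  · rw [D.step_frozen (by linarith [rad_pos k])]
    simp only [sub_self, norm_zero]
    constructor <;> linarith

theorem good_of_full [FiniteDimensional ℝ F] (h : Setup D E 7 δ Λ) (hG : D.Good E 7 δ k z)
    (hz : height z ≤ rad k) :
    IsNear E δ (k + 1) (D.step k z).1 ∧ D.NuGood E 7 δ (k + 1) (D.step k z) := by
  have hlt : height z < 5 / 2 * rad k := by linarith [rad_pos k]
  obtain ⟨hN, hν⟩ := hG.resolve hlt
  have ha := norm_fst_le_of_height hlt
  rw [D.step_full hz]
  exact ⟨h.isNear_succ ha hN, fun x hx hxR hd => h.nuGood_succ ha hN hν hx hxR hd⟩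

theorem height_step_ge (h : Setup D E 7 δ Λ) (hG : D.Good E 7 δ k z) :
    height z - 36 * (δ * rad k) ≤ height (D.step k z) := by
  obtain ⟨h1, h2⟩ := h.norm_step_sub_le hG
  have h3 := (abs_le.1 (abs_height_sub_le (D.step k z) z)).1
  linarith

theorem good_step [FiniteDimensional ℝ F] (h : Setup D E 7 δ Λ) (hG : D.Good E 7 δ k z) :
    D.Good E 7 δ (k + 1) (D.step k z) := by
  rcases le_or_gt (height z) (rad k) with hle | hgt
  · exact Or.inr (h.good_of_full hG hle)
  · left
    have := h.height_step_ge hG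
    have := h.δ_rad k
    rw [rad_succ]
    linarith [rad_pos k]

theorem good_orbit [FiniteDimensional ℝ F] (h : Setup D E 7 δ Λ) (hG : D.Good E 7 δ 0 z) (k : ℕ) :
    D.Good E 7 δ k (D.orbit z k) := by
  induction k with
  | zero => exact hG
  | succ k ih => exact h.good_step ih

end Setup

theorem dist_le_of_dist_succ_le {X : Type*} [PseudoMetricSpace X] {u : ℕ → X} {C : ℝ}
    (hC : 0 ≤ C) (hu : ∀ k, dist (u k) (u (k + 1)) ≤ C * rad k) {m l : ℕ} (hml : m ≤ l) :
    dist (u m) (u l) ≤ 10 / 9 * C * rad m := by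
  have key : ∀ i, dist (u m) (u (m + i)) ≤ 10 / 9 * C * (rad m - rad (m + i)) := by
    intro i
    induction i with
    | zero => simp
    | succ i ih =>
      have h1 := hu (m + i)
      have h2 := dist_triangle (u m) (u (m + i)) (u (m + i + 1))
      rw [← add_assoc, rad_succ]
      linarith
  obtain ⟨i, rfl⟩ := Nat.exists_eq_add_of_le hml
  refine (key i).trans ?_
  have := rad_pos (m + i)
  gcongr
  linarith

theorem cauchySeq_of_dist_succ_le {X : Type*} [PseudoMetricSpace X] {u : ℕ → X} {C : ℝ}
    (hu : ∀ k, dist (u k) (u (k + 1)) ≤ C * rad k) : CauchySeq u :=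
  cauchySeq_of_le_geometric (1 / 10) C (by norm_num) hu

theorem tendsto_rad : Filter.Tendsto rad Filter.atTop (nhds 0) :=
  tendsto_pow_atTop_nhds_zero_of_lt_one (by norm_num) (by norm_num)

namespace Setup

variable [FiniteDimensional ℝ F]

theorem dist_orbit_fst_le (h : Setup D E 7 δ Λ) (hG : D.Good E 7 δ 0 z) {m l : ℕ} (hml : m ≤ l) :
    dist (D.orbit z m).1 (D.orbit z l).1 ≤ 35 * (δ * rad m) := by
  have := dist_le_of_dist_succ_le (u := fun k => (D.orbit z k).1) (C := 31 * δ)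
    (by linarith [h.δ_nonneg]) (fun k => by
      rw [dist_comm, dist_eq_norm, mul_assoc]
      exact (h.norm_step_sub_le (h.good_orbit hG k)).1) hml
  refine this.trans ?_
  linarith [h.δ_rad_nonneg m]

/-- The limit of the orbits. -/
theorem exists_limit (h : Setup D E 7 δ Λ) (hG : D.Good E 7 δ 0 z) :
    ∃ y, Filter.Tendsto (fun k => (D.orbit z k).1 + (D.orbit z k).2) Filter.atTop (nhds y) ∧
      ∀ m, dist ((D.orbit z m).1 + (D.orbit z m).2) y ≤ 40 * (δ * rad m) := by
  have hu : ∀ k, dist ((D.orbit z k).1 + (D.orbit z k).2)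
      ((D.orbit z (k + 1)).1 + (D.orbit z (k + 1)).2) ≤ 36 * δ * rad k := by
    intro k
    rw [dist_comm, dist_eq_norm, add_sub_add_comm]
    obtain ⟨h1, h2⟩ := h.norm_step_sub_le (h.good_orbit hG k)
    refine (norm_add_le _ _).trans ?_
    change ‖(D.step k (D.orbit z k)).1 - _‖ + ‖(D.step k (D.orbit z k)).2 - _‖ ≤ _
    linarith
  obtain ⟨y, hy⟩ := cauchySeq_tendsto_of_complete (cauchySeq_of_dist_succ_le hu)
  refine ⟨y, hy, fun m => ?_⟩
  refine le_of_tendsto (tendsto_const_nhds.dist hy) ?_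
  filter_upwards [Filter.eventually_ge_atTop m] with l hl
  refine (dist_le_of_dist_succ_le (by linarith [h.δ_nonneg]) hu hl).trans ?_
  linarith [h.δ_rad_nonneg m]

end Setup

end Orbit

section Pair

variable {F : Type*} [NormedAddCommGroup F] [InnerProductSpace ℝ F]

/-- The plane `{z | S₀ (z - e₀) = 0}` is compatible with the planes of generation `0`. -/
structure Initial (D : PlaneData F) (E : Set F) (δ : ℝ) (S₀ : F →L[ℝ] F) (e₀ : F) : Prop where
  proj : IsOrthProj S₀
  norm_sub_le : ∀ x ∈ E, ‖x‖ ≤ 7 → ‖D.Q 0 x - S₀‖ ≤ δ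
  norm_N_sub_le : ∀ x ∈ E, ‖x‖ ≤ 7 → ∀ z, dist z x ≤ 5 → ‖D.N 0 x z - S₀ (z - e₀)‖ ≤ 10 * δ
  near : ∀ a, S₀ (a - e₀) = 0 → ‖a‖ ≤ 6 → IsNear E δ 0 a
  near_plane : ∀ x ∈ E, ‖x‖ ≤ 1 → ‖S₀ (x - e₀)‖ ≤ δ

namespace PlaneData

/-- Normal projection of the reference plane used at generation `l`. -/
def refQ (D : PlaneData F) (S₀ : F →L[ℝ] F) (p : F) : ℕ → F →L[ℝ] F
  | 0 => S₀
  | l + 1 => D.Q l p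

/-- Base point of the reference plane. -/
def refC (D : PlaneData F) (e₀ : F) (p : F) : ℕ → F
  | 0 => e₀
  | l + 1 => D.c l p

/-- Error bound for the reference plane. -/
def refB (D : PlaneData F) (δ : ℝ) (p : F) : ℕ → ℝ
  | 0 => δ
  | l + 1 => D.b l p

end PlaneData

/-- The starting pair of a point `z`: its projection to the initial plane and its normal part. -/
def startPair (S₀ : F →L[ℝ] F) (e₀ z : F) : F × F := (z - S₀ (z - e₀), S₀ (z - e₀))

variable {D : PlaneData F} {E : Set F} {δ Λ : ℝ} {k : ℕ} {S₀ : F →L[ℝ] F} {e₀ : F} {p : F}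

theorem Setup.refB_nonneg (h : Setup D E 7 δ Λ) (l : ℕ) : 0 ≤ D.refB δ p l := by
  cases l with
  | zero => exact h.δ_nonneg
  | succ l => exact h.b_nonneg l p

theorem Setup.refB_le (h : Setup D E 7 δ Λ) (l : ℕ) : D.refB δ p l ≤ δ := by
  cases l with
  | zero => exact le_rfl
  | succ l => exact h.b_le l p

theorem Setup.pairData (h : Setup D E 7 δ Λ) (hI : Initial D E δ S₀ e₀) (hp : p ∈ E) (hpR : ‖p‖ ≤ 7)
    {l : ℕ} {a b : F} (ha : IsNear E δ l a) (hb : IsNear E δ l b) (haR : ‖a‖ ≤ 7 - 1)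
    (hbR : ‖b‖ ≤ 7 - 1) (hab : ‖a - b‖ ≤ rad l / 10) (hap : dist a p ≤ 65 * (δ * rad l)) :
    PairData (D.X l) (D.Q l) (D.c l) (D.θ l a) (D.θ l b) (D.refQ S₀ p l) (D.refQ S₀ p (l + 1))
      (D.refC e₀ p l) (D.refC e₀ p (l + 1)) (D.refB δ p l) (D.refB δ p (l + 1)) Λ (rad l) a b := by
  have h0 := rad_pos l
  have h1 := h.δ_rad l
  have hbp : dist b p ≤ rad l := by
    rw [← dist_eq_norm] at hab
    linarith [dist_triangle_left b p a]
  have hact : ∀ j, D.θ l a j ≠ 0 ∨ D.θ l b j ≠ 0 → dist j p ≤ 5 * rad l := by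
    rintro j (hj | hj)
    · linarith [h.dist_center hj hap]
    · linarith [h.dist_center hj hbp]
  have hclose : ∀ z, dist z p ≤ 5 * rad l → ∀ j ∈ D.X l, (D.θ l a j ≠ 0 ∨ D.θ l b j ≠ 0) →
      ‖D.Q l j (z - D.c l j) - D.Q l p (z - D.c l p)‖ ≤ D.b l p * rad l := fun z hz j hj hne =>
    h.norm_N_sub_le l l (Or.inl rfl) j (h.mem_E hj) (h.norm_le hj) p hp hpR (hact j hne) z hz
  have hS : IsOrthProj (D.refQ S₀ p l) := by
    cases l with
    | zero => exact hI.proj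
    | succ l => exact h.proj l p hp hpR
  refine ⟨fun j hj => h.projX hj, hS, h.proj l p hp hpR, fun j _ => (h.part l).nonneg a j,
    h.sum_θ haR ha, fun j _ => (h.part l).nonneg b j, h.sum_θ hbR hb, h0, h.refB_nonneg l,
    h.refB_nonneg (l + 1), h.Λ_ge, fun j hj hne => ?_, hclose a (by linarith), hclose b (by linarith),
    ?_, ?_, ?_⟩
  · exact h.norm_sub_le l l (Or.inl rfl) j (h.mem_E hj) (h.norm_le hj) p hp hpR (hact j hne)
  · cases l with
    | zero => exact hI.norm_sub_le p hp hpR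
    | succ l =>
      exact h.norm_sub_le l (l + 1) (Or.inr rfl) p hp hpR p hp hpR
        (by rw [dist_self]; linarith [rad_pos l])
  · cases l with
    | zero =>
      rw [rad_zero] at *
      refine (hI.norm_N_sub_le p hp hpR b (by linarith)).trans ?_
      simp [PlaneData.refB]
    | succ l =>
      have h3 := rad_pos l
      rw [rad_succ] at hbp ⊢
      refine (h.norm_N_sub_le l (l + 1) (Or.inr rfl) p hp hpR p hp hpR
        (by rw [dist_self]; linarith) b (by linarith)).trans_eq ?_
      simp only [PlaneData.refB]; ring
  · rw [← dist_eq_norm]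
    exact (h.part l).lip a b (h.exists_mem_dist_le haR ha) (h.exists_mem_dist_le hbR hb)

theorem startPair_normal (hS : IsOrthProj S₀) (z : F) : S₀ ((startPair S₀ e₀ z).1 - e₀) = 0 := by
  simp only [startPair, map_sub, hS.idem]; abel

theorem startPair_fix (hS : IsOrthProj S₀) (z : F) :
    S₀ (startPair S₀ e₀ z).2 = (startPair S₀ e₀ z).2 := hS.idem _

theorem startPair_add (z : F) : (startPair S₀ e₀ z).1 + (startPair S₀ e₀ z).2 = z := by
  simp [startPair]

theorem Initial.good (hI : Initial D E δ S₀ e₀) (hδ : 0 ≤ δ) (z : F) :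
    D.Good E 7 δ 0 (startPair S₀ e₀ z) := by
  rcases lt_or_ge (height (startPair S₀ e₀ z)) (5 / 2 * rad 0) with hlt | hge
  · refine Or.inr ⟨hI.near _ (startPair_normal hI.proj z) ?_, fun x hx hxR _ => ?_⟩
    · linarith [norm_fst_le_of_height hlt]
    · have h1 := IsOrthProj.norm_apply_sub_le (hI.norm_sub_le x hx hxR) (startPair S₀ e₀ z).2
      rw [startPair_fix hI.proj, norm_sub_rev] at h1
      nlinarith [mul_nonneg hδ (norm_nonneg (startPair S₀ e₀ z).2)]
  · exact Or.inl hge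

theorem Initial.pairInv (hI : Initial D E δ S₀ e₀) (hδ : 0 ≤ δ) (hΛ : 1 ≤ Λ) (z w : F) :
    PairInv S₀ e₀ δ 1 Λ 1 ‖(startPair S₀ e₀ z).1 - (startPair S₀ e₀ w).1‖
      ‖(startPair S₀ e₀ z).2 - (startPair S₀ e₀ w).2‖ (startPair S₀ e₀ z).1 (startPair S₀ e₀ w).1
      (startPair S₀ e₀ z).2 (startPair S₀ e₀ w).2 := by
  have h1 := startPair_normal (e₀ := e₀) hI.proj z
  have h2 := startPair_normal (e₀ := e₀) hI.proj w
  have h3 := startPair_fix (e₀ := e₀) hI.proj z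
  have h4 := startPair_fix (e₀ := e₀) hI.proj w
  have h5 : S₀ ((startPair S₀ e₀ z).1 - (startPair S₀ e₀ w).1) = 0 := by
    rw [← sub_sub_sub_cancel_right _ _ e₀, map_sub, h1, h2, sub_zero]
  constructor
  · rw [h5, norm_zero]; positivity
  · rw [h1, norm_zero]; positivity
  · rw [h2, norm_zero]; positivity
  · rw [h3, sub_self, norm_zero]; positivity
  · rw [h4, sub_self, norm_zero]; positivity
  · rw [map_sub, h3, h4, sub_self, norm_zero]; positivity
  · linarith
  · linarith
  · have : 0 ≤ ‖(startPair S₀ e₀ z).1 - (startPair S₀ e₀ w).1‖ * ‖(startPair S₀ e₀ w).2‖ / 1 := by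
      positivity
    linarith
  · have : 0 ≤ ‖(startPair S₀ e₀ z).1 - (startPair S₀ e₀ w).1‖ * ‖(startPair S₀ e₀ w).2‖ / 1 := by
      positivity
    linarith

/-- Two orbits stay together, within the range of the dynamics, up to generation `m`. -/
def Coupled (D : PlaneData F) (z w : F × F) (m : ℕ) : Prop :=
  ∀ l < m, height (D.orbit z l) ≤ rad l ∧ height (D.orbit w l) ≤ rad l ∧
    sep (D.orbit z l) (D.orbit w l) ≤ rad l / 10

/-- Accumulated distortion. -/
def distortion (D : PlaneData F) (δ Λ : ℝ) (p : F) (m : ℕ) : ℝ :=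
  ∏ i ∈ Finset.range m, (1 + 400 * Λ ^ 2 * (D.refB δ p i ^ 2 + D.refB δ p (i + 1) ^ 2))

theorem distortion_nonneg (m : ℕ) : 0 ≤ distortion D δ Λ p m :=
  Finset.prod_nonneg fun i _ => by positivity

theorem distortion_le {B : ℝ} {m : ℕ} (hδ0 : 0 ≤ δ) (hδ : δ ≤ 1)
    (hB : ∑ i ∈ Finset.range m, D.b i p ^ 2 ≤ B) :
    distortion D δ Λ p m ≤ Real.exp (400 * Λ ^ 2 * (1 + 2 * B)) := by
  calc distortion D δ Λ p m
      ≤ ∏ i ∈ Finset.range m,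
          Real.exp (400 * Λ ^ 2 * (D.refB δ p i ^ 2 + D.refB δ p (i + 1) ^ 2)) :=
        Finset.prod_le_prod (fun i _ => by positivity) fun i _ => by
          rw [add_comm]; exact Real.add_one_le_exp _
    _ = Real.exp (400 * Λ ^ 2 * (∑ i ∈ Finset.range m,
          (D.refB δ p i ^ 2 + D.refB δ p (i + 1) ^ 2))) := by
        rw [← Real.exp_sum, Finset.mul_sum]
    _ ≤ _ := by
        refine Real.exp_le_exp.2 (mul_le_mul_of_nonneg_left ?_ (by positivity))
        rw [Finset.sum_add_distrib]
        have h1 : ∑ i ∈ Finset.range m, D.refB δ p (i + 1) ^ 2 ≤ B := hB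
        have h2 : ∑ i ∈ Finset.range m, D.refB δ p i ^ 2 ≤
            1 + ∑ i ∈ Finset.range m, D.refB δ p (i + 1) ^ 2 := by
          have h3 : ∑ i ∈ Finset.range m, D.refB δ p i ^ 2 ≤
              ∑ i ∈ Finset.range (m + 1), D.refB δ p i ^ 2 :=
            Finset.sum_le_sum_of_subset_of_nonneg (Finset.range_mono (Nat.le_succ m))
              fun _ _ _ => sq_nonneg _
          rw [Finset.sum_range_succ'] at h3
          have h4 : D.refB δ p 0 ^ 2 ≤ 1 := pow_le_one₀ hδ0 hδ
          linarith
        linarith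

theorem Setup.pairInv_of_coupled [FiniteDimensional ℝ F] (h : Setup D E 7 δ Λ)
    (hI : Initial D E δ S₀ e₀) (hp : p ∈ E) (hpR : ‖p‖ ≤ 7) (z w : F) {m : ℕ}
    (hc : Coupled D (startPair S₀ e₀ z) (startPair S₀ e₀ w) m)
    (hap : ∀ l < m, dist (D.orbit (startPair S₀ e₀ z) l).1 p ≤ 65 * (δ * rad l)) :
    PairInv (D.refQ S₀ p m) (D.refC e₀ p m) (D.refB δ p m) (rad m) Λ (distortion D δ Λ p m)
      ‖(startPair S₀ e₀ z).1 - (startPair S₀ e₀ w).1‖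
      ‖(startPair S₀ e₀ z).2 - (startPair S₀ e₀ w).2‖
      (D.orbit (startPair S₀ e₀ z) m).1 (D.orbit (startPair S₀ e₀ w) m).1
      (D.orbit (startPair S₀ e₀ z) m).2 (D.orbit (startPair S₀ e₀ w) m).2 := by
  induction m with
  | zero =>
    have := hI.pairInv h.δ_nonneg h.Λ_ge z w
    simpa [distortion, PlaneData.refQ, PlaneData.refC, PlaneData.refB, PlaneData.orbit, rad_zero]
      using this
  | succ m ih =>
    have ih' := ih (fun l hl => hc l (hl.trans (Nat.lt_succ_self m)))
      fun l hl => hap l (hl.trans (Nat.lt_succ_self m))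
    obtain ⟨hz, hw, hs⟩ := hc m (Nat.lt_succ_self m)
    have hz' : height (D.orbit (startPair S₀ e₀ z) m) < 5 / 2 * rad m := by linarith [rad_pos m]
    have hw' : height (D.orbit (startPair S₀ e₀ w) m) < 5 / 2 * rad m := by linarith [rad_pos m]
    have hnz := (h.good_orbit (hI.good h.δ_nonneg z) m).resolve hz'
    have hnw := (h.good_orbit (hI.good h.δ_nonneg w) m).resolve hw'
    have hd := h.pairData hI hp hpR hnz.1 hnw.1 (norm_fst_le_of_height hz')
      (norm_fst_le_of_height hw') ((norm_fst_sub_le_sep _ _).trans hs) (hap m (Nat.lt_succ_self m))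
    have := ih'.step hd (distortion_nonneg m) (h.refB_le m) (h.refB_le (m + 1))
      (by nlinarith [h.small, mul_nonneg (sq_nonneg Λ) h.δ_nonneg])
    rw [distortion, Finset.prod_range_succ, rad_succ, PlaneData.orbit, PlaneData.orbit,
      D.step_full hz, D.step_full hw]
    exact this

end Pair

section Bilipschitz

variable {F : Type*} [NormedAddCommGroup F] [InnerProductSpace ℝ F]

theorem le_norm_add_of_almost_orthogonal {S : F →L[ℝ] F} (hS : IsOrthProj S) {t η : F} {κ : ℝ}
    (hκ0 : 0 ≤ κ) (hκ : 16 * κ ≤ 1) (h1 : ‖S t‖ ≤ κ * ‖t‖) (h2 : ‖η - S η‖ ≤ κ * (‖t‖ + ‖η‖)) :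
    ‖t‖ + ‖η‖ ≤ 2 * ‖t + η‖ := by
  have h3 : inner ℝ t η = inner ℝ (S t) η + inner ℝ t (η - S η) := by
    rw [inner_sub_right, hS.symm]; ring
  have h4 := (abs_le.1 (abs_real_inner_le_norm (S t) η)).1
  have h5 := (abs_le.1 (abs_real_inner_le_norm t (η - S η))).1
  have h6 := norm_add_sq_real t η
  have ht := norm_nonneg t
  have hη := norm_nonneg η
  have h7 : ‖S t‖ * ‖η‖ ≤ κ * (‖t‖ * ‖η‖) := by
    calc _ ≤ (κ * ‖t‖) * ‖η‖ := mul_le_mul_of_nonneg_right h1 hη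
      _ = _ := by ring
  have h8 : ‖t‖ * ‖η - S η‖ ≤ κ * (‖t‖ * (‖t‖ + ‖η‖)) := by
    calc _ ≤ ‖t‖ * (κ * (‖t‖ + ‖η‖)) := mul_le_mul_of_nonneg_left h2 ht
      _ = _ := by ring
  have h9 : κ * (‖t‖ * ‖η‖) + κ * (‖t‖ * (‖t‖ + ‖η‖)) ≤ (‖t‖ + ‖η‖) ^ 2 / 8 := by
    have h10 : ‖t‖ * ‖η‖ + ‖t‖ * (‖t‖ + ‖η‖) ≤ 2 * (‖t‖ + ‖η‖) ^ 2 := by nlinarith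
    nlinarith [sq_nonneg (‖t‖ + ‖η‖)]
  refine le_of_sq_le_sq ?_ (by positivity)
  nlinarith [sq_nonneg (‖t‖ - ‖η‖)]

theorem norm_smul_sub_smul_le {χ χ' : ℝ} (h0 : 0 ≤ χ) (h1 : χ ≤ 1) (f f' : F) :
    ‖χ • f - χ' • f'‖ ≤ ‖f - f'‖ + |χ - χ'| * ‖f'‖ := by
  have : χ • f - χ' • f' = χ • (f - f') + (χ - χ') • f' := by
    rw [smul_sub, sub_smul]; abel
  rw [this]
  refine (norm_add_le _ _).trans ?_
  rw [norm_smul, norm_smul, Real.norm_of_nonneg h0, Real.norm_eq_abs]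
  gcongr
  exact mul_le_of_le_one_left (norm_nonneg _) h1

variable {ι : Type*} {J : Finset ι} {Q : ι → F →L[ℝ] F} {c : ι → F} {α β : ι → ℝ}
  {S S' : F →L[ℝ] F} {e e' : F} {s s' Λ r A T₀ H₀ δ : ℝ} {a b ν ν' : F}

/-- The averaged signed distance varies slowly between coupled points. -/
theorem PairInv.norm_avgN_sub_le (inv : PairInv S e s r Λ A T₀ H₀ a b ν ν')
    (h : PairData J Q c α β S S' e e' s s' Λ r a b) (hsδ : s ≤ δ) (hs'δ : s' ≤ δ) :
    ‖∑ j ∈ J, α j • Q j (a - c j) - ∑ j ∈ J, β j • Q j (b - c j)‖ ≤ 7 * (Λ * δ) * ‖a - b‖ := by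
  have h1 : ∑ j ∈ J, α j • Q j (a - c j) - ∑ j ∈ J, β j • Q j (b - c j) =
      ∑ j ∈ J, α j • Q j (a - b) +
        ∑ j ∈ J, (α j - β j) • (Q j (b - c j) - S' (b - e')) := by
    have := h.sub_eq
    rw [← sub_eq_zero] at this ⊢
    rw [← neg_eq_zero, ← this]; abel
  have ht := norm_nonneg (a - b)
  have h2 := h.lip_mul h.hs' h.closeB
  have h3 : ‖∑ j ∈ J, α j • Q j (a - b)‖ ≤ (2 * (1 + Λ) * s + s + s') * ‖a - b‖ := by
    refine norm_average_le h.α0 h.α1 fun j hj hne => ?_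
    have h4 := IsOrthProj.norm_apply_sub_le (h.close j hj (Or.inl hne)) (a - b)
    have h5 := IsOrthProj.norm_apply_sub_le h.ref (a - b)
    calc ‖Q j (a - b)‖ = ‖(Q j (a - b) - S' (a - b)) + (S' (a - b) - S (a - b)) + S (a - b)‖ := by
          congr 1; abel
      _ ≤ _ := norm_add₃_le
      _ ≤ _ := by linarith [inv.t_normal]
  rw [h1]
  refine (norm_add_le _ _).trans ((add_le_add h3 h2).trans ?_)
  have hΛ := h.hΛ
  have hδ0 : 0 ≤ δ := h.hs.trans hsδ
  have h4 : 2 * (1 + Λ) * s + s + s' + Λ * s' ≤ 7 * (Λ * δ) := by nlinarith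
  calc _ = (2 * (1 + Λ) * s + s + s' + Λ * s') * ‖a - b‖ := by ring
    _ ≤ _ := mul_le_mul_of_nonneg_right h4 ht

/-- The tangential parts of the normal vectors vary slowly between coupled points. -/
theorem PairInv.norm_avgQ_sub_le (inv : PairInv S e s r Λ A T₀ H₀ a b ν ν')
    (h : PairData J Q c α β S S' e e' s s' Λ r a b) (hsδ : s ≤ δ) (hs'δ : s' ≤ δ)
    (hν' : ‖ν'‖ ≤ 5 / 2 * r) :
    ‖(ν - ∑ j ∈ J, α j • Q j ν) - (ν' - ∑ j ∈ J, β j • Q j ν')‖ ≤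
      18 * (Λ * δ) * (‖a - b‖ + ‖ν - ν'‖) := by
  have h1 : (ν - ∑ j ∈ J, α j • Q j ν) - (ν' - ∑ j ∈ J, β j • Q j ν') =
      ((ν - ν') - ∑ j ∈ J, α j • Q j (ν - ν')) -
        ∑ j ∈ J, (α j - β j) • (Q j ν' - S' ν') := by
    have := h.normal_sub_eq (ν := ν) (ν' := ν')
    rw [← sub_eq_zero] at this ⊢
    rw [← neg_eq_zero, ← this]; abel
  have h2 := h.norm_normal_error_le (ν' := ν')
  have hr := h.hr
  have ht := norm_nonneg (a - b)
  have hη := norm_nonneg (ν - ν')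
  have hq : ‖a - b‖ * ‖ν'‖ / r ≤ 5 / 2 * ‖a - b‖ := by
    rw [div_le_iff₀ hr]; nlinarith
  have hq0 : 0 ≤ ‖a - b‖ * ‖ν'‖ / r := by positivity
  set q := ‖a - b‖ * ‖ν'‖ / r
  have h3 : ‖(ν - ν') - ∑ j ∈ J, α j • Q j (ν - ν')‖ ≤
      2 * (1 + Λ) * s * (‖ν - ν'‖ + q) + (s + s') * ‖ν - ν'‖ := by
    rw [sub_average_eq _ h.α1]
    exact norm_average_le h.α0 h.α1 fun j hj hne => inv.norm_sub_proj_le h hj (Or.inl hne)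
  rw [h1]
  refine (norm_sub_le _ _).trans ((add_le_add h3 h2).trans ?_)
  have hΛ := h.hΛ
  have hs := h.hs
  have hs' := h.hs'
  have hδ0 : 0 ≤ δ := hs.trans hsδ
  have hδΛ : δ ≤ Λ * δ := by nlinarith
  have h4 : 2 * (1 + Λ) * s ≤ 4 * (Λ * δ) := by nlinarith
  have h5 : s + s' ≤ 2 * (Λ * δ) := by linarith
  have h6 : Λ * s' ≤ Λ * δ := by nlinarith
  have h7 : 2 * (1 + Λ) * s * (‖ν - ν'‖ + q) ≤ 4 * (Λ * δ) * (‖ν - ν'‖ + q) := by gcongr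
  have h8 : (s + s') * ‖ν - ν'‖ ≤ 2 * (Λ * δ) * ‖ν - ν'‖ := by gcongr
  have h9 : Λ * s' * q ≤ Λ * δ * q := by gcongr
  have h10 : Λ * δ * q ≤ Λ * δ * (5 / 2 * ‖a - b‖) := by gcongr
  have h11 : 0 ≤ Λ * δ * ‖ν - ν'‖ := by positivity
  have h12 : 0 ≤ Λ * δ * ‖a - b‖ := by positivity
  linarith

variable {D : PlaneData F} {E : Set F} {S₀ : F →L[ℝ] F} {e₀ p : F} {m : ℕ}

/-- A partial step changes the difference of two coupled pairs very little. -/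
theorem Setup.norm_step_sub_step_le (h : Setup D E 7 δ Λ) (hI : Initial D E δ S₀ e₀) (hp : p ∈ E)
    (hpR : ‖p‖ ≤ 7) {z w : F × F}
    (inv : PairInv (D.refQ S₀ p m) (D.refC e₀ p m) (D.refB δ p m) (rad m) Λ A T₀ H₀ z.1 w.1 z.2 w.2)
    (hz : height z < 5 / 2 * rad m) (hw : height w < 5 / 2 * rad m) (hzG : D.Good E 7 δ m z)
    (hwG : D.Good E 7 δ m w) (hsep : sep z w ≤ rad m / 10)
    (hap : dist z.1 p ≤ 65 * (δ * rad m)) :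
    ‖((D.step m z).1 + (D.step m z).2) - ((D.step m w).1 + (D.step m w).2) -
      ((z.1 - w.1) + (z.2 - w.2))‖ ≤ sep z w / 8 := by
  have hr := rad_pos m
  obtain ⟨hnz, hνz⟩ := hzG.resolve hz
  obtain ⟨hnw, hνw⟩ := hwG.resolve hw
  have hzR := norm_fst_le_of_height hz
  have hwR := norm_fst_le_of_height hw
  have hd := h.pairData hI hp hpR hnz hnw hzR hwR ((norm_fst_sub_le_sep _ _).trans hsep) hap
  have h1 : ‖D.avgN m z.1 - D.avgN m w.1‖ ≤ 7 * (Λ * δ) * ‖z.1 - w.1‖ :=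
    inv.norm_avgN_sub_le hd (h.refB_le m) (h.refB_le (m + 1))
  have h2 : ‖(z.2 - D.avgQ m z.1 z.2) - (w.2 - D.avgQ m w.1 w.2)‖ ≤ 18 * (Λ * δ) * sep z w :=
    inv.norm_avgQ_sub_le hd (h.refB_le m) (h.refB_le (m + 1))
      ((norm_snd_le_height w).trans hw.le)
  have h3 := h.norm_avgN_le hwR hnw
  have h4 := h.norm_sub_avgQ_le hwR hnw hνw
  have h5 := abs_cutoff_sub_le m z w
  change _ ≤ sep z w at h5
  have hsep0 : 0 ≤ sep z w := add_nonneg (norm_nonneg _) (norm_nonneg _)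
  have hδ := h.δ_nonneg
  have h6 := norm_smul_sub_smul_le (χ' := cutoff m w) (cutoff_nonneg m z) (cutoff_le_one m z)
    (D.avgN m z.1) (D.avgN m w.1)
  have h7 := norm_smul_sub_smul_le (χ' := cutoff m w) (cutoff_nonneg m z) (cutoff_le_one m z)
    (z.2 - D.avgQ m z.1 z.2) (w.2 - D.avgQ m w.1 w.2)
  have h8 : |cutoff m z - cutoff m w| * ‖D.avgN m w.1‖ ≤ 31 * δ * sep z w := by
    calc _ ≤ |cutoff m z - cutoff m w| * (31 * (δ * rad m)) := by gcongr
      _ = 31 * δ * (|cutoff m z - cutoff m w| * rad m) := by ring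
      _ ≤ _ := by gcongr
  have h9 : |cutoff m z - cutoff m w| * ‖w.2 - D.avgQ m w.1 w.2‖ ≤ 5 * δ * sep z w := by
    calc _ ≤ |cutoff m z - cutoff m w| * (5 * (δ * rad m)) := by
          gcongr
          refine h4.trans ?_
          nlinarith [norm_snd_le_height w]
      _ = 5 * δ * (|cutoff m z - cutoff m w| * rad m) := by ring
      _ ≤ _ := by gcongr
  have h10 : ((D.step m z).1 + (D.step m z).2) - ((D.step m w).1 + (D.step m w).2) -
      ((z.1 - w.1) + (z.2 - w.2)) =
      -(cutoff m z • D.avgN m z.1 - cutoff m w • D.avgN m w.1) -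
      (cutoff m z • (z.2 - D.avgQ m z.1 z.2) - cutoff m w • (w.2 - D.avgQ m w.1 w.2)) := by
    simp only [PlaneData.step]; abel
  rw [h10]
  refine (norm_sub_le _ _).trans ?_
  rw [norm_neg]
  have hΛ := h.Λ_ge
  have h11 : δ ≤ Λ * δ := by nlinarith
  have h12 : 10000 * (Λ * δ) ≤ 1 := by nlinarith [h.small, mul_nonneg (by linarith : 0 ≤ Λ) hδ]
  have h13 : 7 * (Λ * δ) * ‖z.1 - w.1‖ ≤ 7 * (Λ * δ) * sep z w := by
    gcongr; exact norm_fst_sub_le_sep z w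
  have h14 : δ * sep z w ≤ Λ * δ * sep z w := by gcongr
  have h15 : 10000 * (Λ * δ) * sep z w ≤ 1 * sep z w := by gcongr
  linarith

end Bilipschitz

section Bilipschitz

variable {F : Type*} [NormedAddCommGroup F] [InnerProductSpace ℝ F]
variable {D : PlaneData F} {E : Set F} {δ Λ A : ℝ} {S₀ : F →L[ℝ] F} {e₀ : F} {m : ℕ}

theorem rad_anti {l m : ℕ} (h : l ≤ m) : rad m ≤ rad l :=
  pow_le_pow_of_le_one (by norm_num) (by norm_num) h

theorem PlaneData.limit_eq_of_frozen {z : F × F} {k : ℕ} {y : F}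
    (h : 2 * rad k ≤ height (D.orbit z k))
    (hy : Filter.Tendsto (fun k => (D.orbit z k).1 + (D.orbit z k).2) Filter.atTop (nhds y)) :
    y = (D.orbit z k).1 + (D.orbit z k).2 := by
  refine tendsto_nhds_unique hy (tendsto_const_nhds.congr' ?_)
  filter_upwards [Filter.eventually_ge_atTop k] with l hl
  obtain ⟨i, rfl⟩ := Nat.exists_eq_add_of_le hl
  rw [D.orbit_frozen h]

theorem Setup.norm_snd_step_le (h : Setup D E 7 δ Λ) {z : F × F} (hG : D.Good E 7 δ m z)
    (hz : height z ≤ rad m) : ‖(D.step m z).2‖ ≤ ‖z.2‖ := by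
  have hlt : height z < 5 / 2 * rad m := by linarith [rad_pos m]
  rw [D.step_full hz]
  exact h.norm_avgQ_le (norm_fst_le_of_height hlt) (hG.resolve hlt).1 _

theorem startPair_sep_le (hS : IsOrthProj S₀) (z w : F) :
    sep (startPair S₀ e₀ z) (startPair S₀ e₀ w) ≤ 2 * ‖z - w‖ := by
  have h1 := startPair_normal (e₀ := e₀) hS z
  have h2 := startPair_normal (e₀ := e₀) hS w
  have h3 := startPair_fix (e₀ := e₀) hS z
  have h4 := startPair_fix (e₀ := e₀) hS w
  have h5 : S₀ ((startPair S₀ e₀ z).1 - (startPair S₀ e₀ w).1) = 0 := by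
    rw [← sub_sub_sub_cancel_right _ _ e₀, map_sub, h1, h2, sub_zero]
  have := le_norm_add_of_almost_orthogonal hS (t := (startPair S₀ e₀ z).1 - (startPair S₀ e₀ w).1)
    (η := (startPair S₀ e₀ z).2 - (startPair S₀ e₀ w).2) le_rfl (by norm_num) (by simp [h5])
    (by simp [map_sub, h3, h4])
  rwa [← add_sub_add_comm, startPair_add, startPair_add] at this

theorem PairInv.mono {S : F →L[ℝ] F} {e : F} {s r T H A' : ℝ} {a b ν ν' : F}
    (inv : PairInv S e s r Λ A' T H a b ν ν') (hA : A' ≤ A) (hr : 0 ≤ r) (hT : 0 ≤ T) :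
    PairInv S e s r Λ A T H a b ν ν' where
  __ := inv
  t_le := inv.t_le.trans (mul_le_mul_of_nonneg_right hA hT)
  le_t := inv.le_t.trans (mul_le_mul_of_nonneg_right hA (norm_nonneg _))
  le_η := inv.le_η.trans (mul_le_mul_of_nonneg_right hA (by positivity))

variable [FiniteDimensional ℝ F]

/-- A point of `E` which shadows an orbit as long as the orbit is in the range of the dynamics. -/
theorem Setup.exists_ref (h : Setup D E 7 δ Λ) (hE : (0 : F) ∈ E) {z : F × F}
    (hG : D.Good E 7 δ 0 z) (hz : ∀ l < m, height (D.orbit z l) ≤ rad l) :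
    ∃ p ∈ E, ‖p‖ ≤ 7 ∧ (∀ l < m, dist (D.orbit z l).1 p ≤ 65 * (δ * rad l)) ∧
      (height (D.orbit z m) < 5 / 2 * rad m → dist (D.orbit z m).1 p ≤ 65 * (δ * rad m)) := by
  have key : IsNear E δ m (D.orbit z m).1 → ‖(D.orbit z m).1‖ ≤ 7 - 1 →
      ∃ p ∈ E, ‖p‖ ≤ 7 ∧ (∀ l < m, dist (D.orbit z l).1 p ≤ 65 * (δ * rad l)) ∧
      (height (D.orbit z m) < 5 / 2 * rad m → dist (D.orbit z m).1 p ≤ 65 * (δ * rad m)) := by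
    rintro ⟨p, hp, hd⟩ hn
    refine ⟨p, hp, h.norm_le_of_dist hn hd, fun l hl => ?_, fun _ => ?_⟩
    · have h1 := h.dist_orbit_fst_le hG hl.le
      have h2 := mul_le_mul_of_nonneg_left (rad_anti hl.le) h.δ_nonneg
      linarith [dist_triangle (D.orbit z l).1 (D.orbit z m).1 p]
    · linarith [h.δ_rad_nonneg m]
  cases m with
  | zero =>
    rcases lt_or_ge (height (D.orbit z 0)) (5 / 2 * rad 0) with hlt | hge
    · exact key (hG.resolve hlt).1 (norm_fst_le_of_height hlt)
    · exact ⟨0, hE, by simp, by simp, fun hc => absurd hc (not_lt.2 hge)⟩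
  | succ m =>
    have hm := hz m (Nat.lt_succ_self m)
    have hGm := h.good_orbit hG m
    refine key (h.good_of_full hGm hm).1 ?_
    have h1 := (h.norm_step_sub_le hGm).1
    have h2 := norm_fst_le_height (D.orbit z m)
    have h3 := norm_le_norm_add_norm_sub' (D.step m (D.orbit z m)).1 (D.orbit z m).1
    have h4 := h.δ_rad m
    have h5 := rad_le_one m
    rw [PlaneData.orbit]
    linarith

/-- Comparison of separations for coupled orbits. -/
theorem Setup.sep_bounds (h : Setup D E 7 δ Λ) (hI : Initial D E δ S₀ e₀) {z w p : F}
    (hc : Coupled D (startPair S₀ e₀ z) (startPair S₀ e₀ w) m)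
    (inv : PairInv (D.refQ S₀ p m) (D.refC e₀ p m) (D.refB δ p m) (rad m) Λ A
      ‖(startPair S₀ e₀ z).1 - (startPair S₀ e₀ w).1‖
      ‖(startPair S₀ e₀ z).2 - (startPair S₀ e₀ w).2‖
      (D.orbit (startPair S₀ e₀ z) m).1 (D.orbit (startPair S₀ e₀ w) m).1
      (D.orbit (startPair S₀ e₀ z) m).2 (D.orbit (startPair S₀ e₀ w) m).2)
    (hp : p ∈ E) (hpR : ‖p‖ ≤ 7) (hA : 1 ≤ A) :
    sep (startPair S₀ e₀ z) (startPair S₀ e₀ w) ≤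
      11 * A * sep (D.orbit (startPair S₀ e₀ z) m) (D.orbit (startPair S₀ e₀ w) m) ∧
    sep (D.orbit (startPair S₀ e₀ z) m) (D.orbit (startPair S₀ e₀ w) m) ≤
      11 * A * sep (startPair S₀ e₀ z) (startPair S₀ e₀ w) ∧
    sep (D.orbit (startPair S₀ e₀ z) m) (D.orbit (startPair S₀ e₀ w) m) ≤
      2 * ‖((D.orbit (startPair S₀ e₀ z) m).1 - (D.orbit (startPair S₀ e₀ w) m).1) +
        ((D.orbit (startPair S₀ e₀ z) m).2 - (D.orbit (startPair S₀ e₀ w) m).2)‖ := by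
  cases m with
  | zero =>
    have h1 := startPair_sep_le (e₀ := e₀) hI.proj z w
    have h2 : 0 ≤ sep (startPair S₀ e₀ z) (startPair S₀ e₀ w) := by unfold sep; positivity
    simp only [PlaneData.orbit]
    refine ⟨by nlinarith, by nlinarith, ?_⟩
    rwa [← add_sub_add_comm, startPair_add, startPair_add]
  | succ m =>
    obtain ⟨_, hw, _⟩ := hc m (Nat.lt_succ_self m)
    have hν : ‖(D.orbit (startPair S₀ e₀ w) (m + 1)).2‖ ≤ 10 * rad (m + 1) := by
      rw [rad_succ, PlaneData.orbit]
      have := h.norm_snd_step_le (h.good_orbit (hI.good h.δ_nonneg w) m) hw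
      linarith [norm_snd_le_height (D.orbit (startPair S₀ e₀ w) m)]
    have hS : IsOrthProj (D.refQ S₀ p (m + 1)) := h.proj m p hp hpR
    have hs0 := h.refB_nonneg (p := p) (m + 1)
    have hs := h.refB_le (p := p) (m + 1)
    have hr := rad_pos (m + 1)
    have hΛ := h.Λ_ge
    have hδ := h.δ_nonneg
    have hsm := h.small
    have hT0 := norm_nonneg ((startPair S₀ e₀ z).1 - (startPair S₀ e₀ w).1)
    have hH1 := norm_nonneg ((startPair S₀ e₀ z).2 - (startPair S₀ e₀ w).2)
    unfold sep
    generalize D.orbit (startPair S₀ e₀ z) (m + 1) = u at *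
    generalize D.orbit (startPair S₀ e₀ w) (m + 1) = v at *
    generalize ‖(startPair S₀ e₀ z).1 - (startPair S₀ e₀ w).1‖ = T at *
    generalize ‖(startPair S₀ e₀ z).2 - (startPair S₀ e₀ w).2‖ = H at *
    generalize D.refB δ p (m + 1) = s at *
    generalize D.refQ S₀ p (m + 1) = S at *
    have ht := norm_nonneg (u.1 - v.1)
    have hη := norm_nonneg (u.2 - v.2)
    have hq : ‖u.1 - v.1‖ * ‖v.2‖ / rad (m + 1) ≤ 10 * ‖u.1 - v.1‖ := by
      rw [div_le_iff₀ hr]; nlinarith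
    have hT := inv.t_le
    have hT' := inv.le_t
    have hH := inv.η_le
    have hH' := inv.le_η
    have hκ : 2 * (1 + Λ) * s ≤ 4 * (Λ ^ 2 * δ) := by
      have e1 : (1 + Λ) * s ≤ (2 * Λ ^ 2) * δ := by
        refine mul_le_mul ?_ hs hs0 (by positivity)
        nlinarith
      linarith
    have hκ0 : 0 ≤ Λ ^ 2 * δ := by positivity
    have hH0 : H ≤ A * (‖u.2 - v.2‖ + 10 * ‖u.1 - v.1‖) :=
      hH'.trans (mul_le_mul_of_nonneg_left (by linarith) (by linarith))
    refine ⟨by nlinarith, ?_, ?_⟩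
    · nlinarith [mul_nonneg (sub_nonneg.2 hA) hH1, mul_nonneg (sub_nonneg.2 hA) hT0]
    · refine le_norm_add_of_almost_orthogonal (κ := 40 * (Λ ^ 2 * δ)) hS (by linarith)
        (by linarith) ?_ ?_
      · refine inv.t_normal.trans (mul_le_mul_of_nonneg_right (by linarith) ht)
      · refine inv.η_tan.trans ?_
        calc _ ≤ 4 * (Λ ^ 2 * δ) * (‖u.2 - v.2‖ + 10 * ‖u.1 - v.1‖) := by
              refine mul_le_mul hκ (by linarith) (by positivity) (by linarith)
          _ ≤ _ := by nlinarith [mul_nonneg hκ0 hη]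

/-- The limits of two orbits are at comparable distance to the starting points. -/
theorem Setup.limit_bilipschitz (h : Setup D E 7 δ Λ) (hI : Initial D E δ S₀ e₀) (hE : (0 : F) ∈ E)
    (hA : 1 ≤ A) (hdist : ∀ p ∈ E, ‖p‖ ≤ 7 → ∀ m, distortion D δ Λ p m ≤ A) {z w y y' : F}
    (hy : Filter.Tendsto (fun k => (D.orbit (startPair S₀ e₀ z) k).1 +
      (D.orbit (startPair S₀ e₀ z) k).2) Filter.atTop (nhds y))
    (hy' : Filter.Tendsto (fun k => (D.orbit (startPair S₀ e₀ w) k).1 +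
      (D.orbit (startPair S₀ e₀ w) k).2) Filter.atTop (nhds y')) :
    dist y y' ≤ 44 * A * dist z w ∧ dist z w ≤ 44 * A * dist y y' := by
  rcases eq_or_ne z w with rfl | hzw
  · simp [tendsto_nhds_unique hy hy']
  set z₀ := startPair S₀ e₀ z with hz₀
  set w₀ := startPair S₀ e₀ w with hw₀
  have hGz : D.Good E 7 δ 0 z₀ := hI.good h.δ_nonneg z
  have hGw : D.Good E 7 δ 0 w₀ := hI.good h.δ_nonneg w
  have hsep1 : sep z₀ w₀ ≤ 2 * dist z w := by
    rw [dist_eq_norm]; exact startPair_sep_le hI.proj z w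
  have hsep2 : dist z w ≤ sep z₀ w₀ := by
    rw [dist_eq_norm, ← startPair_add (S₀ := S₀) (e₀ := e₀) z,
      ← startPair_add (S₀ := S₀) (e₀ := e₀) w, add_sub_add_comm]
    exact norm_add_le _ _
  have hpos : 0 < dist z w := dist_pos.2 hzw
  have main : ∀ m, Coupled D z₀ w₀ m → ∃ p ∈ E, ‖p‖ ≤ 7 ∧
      (height (D.orbit z₀ m) < 5 / 2 * rad m → dist (D.orbit z₀ m).1 p ≤ 65 * (δ * rad m)) ∧
      PairInv (D.refQ S₀ p m) (D.refC e₀ p m) (D.refB δ p m) (rad m) Λ A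
        ‖z₀.1 - w₀.1‖ ‖z₀.2 - w₀.2‖ (D.orbit z₀ m).1 (D.orbit w₀ m).1
        (D.orbit z₀ m).2 (D.orbit w₀ m).2 := by
    intro m hm
    obtain ⟨p, hp, hpR, h1, h2⟩ := h.exists_ref hE hGz (m := m) fun l hl => (hm l hl).1
    have inv := h.pairInv_of_coupled hI hp hpR z w hm h1
    refine ⟨p, hp, hpR, h2, inv.mono (hdist p hp hpR m) (rad_pos m).le (norm_nonneg _)⟩
  have hex : ∃ m, ¬ Coupled D z₀ w₀ m := by
    by_contra! hall
    have hlim : Filter.Tendsto (fun m => 11 * A * (rad m / 10)) Filter.atTop (nhds 0) := by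
      simpa using (tendsto_rad.div_const 10).const_mul (11 * A)
    have hle : sep z₀ w₀ ≤ 0 := ge_of_tendsto' hlim fun m => by
      obtain ⟨p, hp, hpR, -, inv⟩ := main m (hall m)
      refine (h.sep_bounds hI (hall m) inv hp hpR hA).1.trans ?_
      exact mul_le_mul_of_nonneg_left (hall (m + 1) m (Nat.lt_succ_self m)).2.2 (by linarith)
    linarith
  classical
  obtain ⟨m, hm, hm'⟩ : ∃ m, Coupled D z₀ w₀ m ∧ ¬ Coupled D z₀ w₀ (m + 1) := by
    have hne : Nat.find hex ≠ 0 := by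
      intro h0
      have := Nat.find_spec hex
      rw [h0] at this
      exact this fun l hl => absurd hl (Nat.not_lt_zero l)
    refine ⟨Nat.find hex - 1, not_not.1 (Nat.find_min hex (by omega)), ?_⟩
    rw [Nat.sub_add_cancel (Nat.one_le_iff_ne_zero.2 hne)]
    exact Nat.find_spec hex
  obtain ⟨p, hp, hpR, hap, inv⟩ := main m hm
  obtain ⟨hs1, hs2, hs3⟩ := h.sep_bounds hI hm inv hp hpR hA
  have hfail : ¬ (height (D.orbit z₀ m) ≤ rad m ∧ height (D.orbit w₀ m) ≤ rad m ∧
      sep (D.orbit z₀ m) (D.orbit w₀ m) ≤ rad m / 10) := fun hc => hm' fun l hl => by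
    rcases Nat.lt_succ_iff_lt_or_eq.1 hl with hl | rfl
    · exact hm l hl
    · exact hc
  have hr := rad_pos m
  have hδr := h.δ_rad m
  have hup : ‖((D.orbit z₀ m).1 - (D.orbit w₀ m).1) + ((D.orbit z₀ m).2 - (D.orbit w₀ m).2)‖ ≤
      sep (D.orbit z₀ m) (D.orbit w₀ m) := norm_add_le _ _
  suffices hmid : ‖(y - y') - (((D.orbit z₀ m).1 - (D.orbit w₀ m).1) +
      ((D.orbit z₀ m).2 - (D.orbit w₀ m).2))‖ ≤ sep (D.orbit z₀ m) (D.orbit w₀ m) / 8 by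
    rw [dist_eq_norm y y']
    have e1 := norm_le_norm_add_norm_sub' (y - y') (((D.orbit z₀ m).1 - (D.orbit w₀ m).1) +
      ((D.orbit z₀ m).2 - (D.orbit w₀ m).2))
    have e2 := norm_le_norm_add_norm_sub (y - y') (((D.orbit z₀ m).1 - (D.orbit w₀ m).1) +
      ((D.orbit z₀ m).2 - (D.orbit w₀ m).2))
    constructor
    · nlinarith
    · nlinarith
  rcases lt_or_ge (rad m / 10) (sep (D.orbit z₀ m) (D.orbit w₀ m)) with hA' | hB
  · obtain ⟨v, hv, hvd⟩ := h.exists_limit hGz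
    obtain ⟨v', hv', hvd'⟩ := h.exists_limit hGw
    rw [tendsto_nhds_unique hy hv, tendsto_nhds_unique hy' hv']
    have e1 := hvd m
    have e2 := hvd' m
    rw [dist_comm, dist_eq_norm] at e1
    rw [dist_eq_norm] at e2
    calc _ = ‖(v - ((D.orbit z₀ m).1 + (D.orbit z₀ m).2)) +
          (((D.orbit w₀ m).1 + (D.orbit w₀ m).2) - v')‖ := by congr 1; abel
      _ ≤ _ := (norm_add_le _ _).trans (by linarith)
  · have hh := abs_le.1 ((abs_height_sub_le (D.orbit z₀ m) (D.orbit w₀ m)).trans hB)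
    by_cases hbig : 2 * rad m ≤ height (D.orbit z₀ m) ∧ 2 * rad m ≤ height (D.orbit w₀ m)
    · rw [PlaneData.limit_eq_of_frozen hbig.1 hy, PlaneData.limit_eq_of_frozen hbig.2 hy']
      have : 0 ≤ sep (D.orbit z₀ m) (D.orbit w₀ m) := by unfold sep; positivity
      rw [add_sub_add_comm, sub_self, norm_zero]
      linarith
    · have hlt : height (D.orbit z₀ m) < 5 / 2 * rad m ∧ height (D.orbit w₀ m) < 5 / 2 * rad m := by
        by_contra hc
        refine hbig ⟨?_, ?_⟩ <;> by_contra hc' <;> refine hc ⟨?_, ?_⟩ <;> linarith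
      have hgt : 9 / 10 * rad m ≤ height (D.orbit z₀ m) ∧
          9 / 10 * rad m ≤ height (D.orbit w₀ m) := by
        by_contra hc
        refine hfail ⟨?_, ?_, hB⟩ <;> by_contra hc' <;> refine hc ⟨?_, ?_⟩ <;> linarith
      have hgz := h.good_orbit hGz m
      have hgw := h.good_orbit hGw m
      have f1 : 2 * rad (m + 1) ≤ height (D.orbit z₀ (m + 1)) := by
        have := h.height_step_ge hgz
        rw [rad_succ, PlaneData.orbit]
        linarith
      have f2 : 2 * rad (m + 1) ≤ height (D.orbit w₀ (m + 1)) := by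
        have := h.height_step_ge hgw
        rw [rad_succ, PlaneData.orbit]
        linarith
      rw [PlaneData.limit_eq_of_frozen f1 hy, PlaneData.limit_eq_of_frozen f2 hy']
      exact h.norm_step_sub_step_le hI hp hpR inv hlt.1 hlt.2 hgz hgw hB (hap hlt.1)

end Bilipschitz

theorem height_eq_of_norm_le {F : Type*} [NormedAddCommGroup F] {z : F × F} (h : ‖z.1‖ ≤ 3) : height z = ‖z.2‖ := by
  rw [height, max_eq_left (by linarith), zero_add]

section Param

variable {F : Type*} [NormedAddCommGroup F] [InnerProductSpace ℝ F] [FiniteDimensional ℝ F]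
variable {D : PlaneData F} {E : Set F} {δ Λ A : ℝ} {S₀ : F →L[ℝ] F} {e₀ : F} {m : ℕ}

/-- Limits of orbits starting on the initial plane lie in `E`. -/
theorem Setup.limit_mem (h : Setup D E 7 δ Λ) (hI : Initial D E δ S₀ e₀) {z y : F}
    (hz : S₀ (z - e₀) = 0)
    (hy : Filter.Tendsto (fun k => (D.orbit (startPair S₀ e₀ z) k).1 +
      (D.orbit (startPair S₀ e₀ z) k).2) Filter.atTop (nhds y)) (hy1 : ‖y‖ < 1) : y ∈ E := by
  have hG := hI.good h.δ_nonneg z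
  obtain ⟨v, hv, hvd⟩ := h.exists_limit hG
  obtain rfl := tendsto_nhds_unique hy hv
  have h0 : ∀ k, (D.orbit (startPair S₀ e₀ z) k).2 = 0 := by
    intro k
    induction k with
    | zero => simp [PlaneData.orbit, startPair, hz]
    | succ k ih => simp [PlaneData.orbit, PlaneData.step, PlaneData.avgQ, ih]
  simp only [h0, add_zero] at hy hvd
  have hnear : ∀ k, IsNear E δ k (D.orbit (startPair S₀ e₀ z) k).1 := by
    intro k
    refine ((h.good_orbit hG k).resolve ?_).1
    rw [height_eq_of_norm_le, h0, norm_zero]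
    · linarith [rad_pos k]
    · have e1 := hvd k
      rw [dist_eq_norm] at e1
      linarith [norm_le_norm_add_norm_sub' (D.orbit (startPair S₀ e₀ z) k).1 y, h.δ_rad k,
        rad_le_one k]
  choose p hp hpd using hnear
  have hpy : Filter.Tendsto p Filter.atTop (nhds y) := by
    refine hy.congr_dist (squeeze_zero (fun _ => dist_nonneg) hpd ?_)
    simpa using tendsto_rad.const_mul (30 * δ)
  exact h.closed.mem_of_tendsto hpy (Filter.Eventually.of_forall hp)

/-- An orbit with limit in `E` starts on the initial plane. -/
theorem Setup.normal_eq_zero (h : Setup D E 7 δ Λ) (hI : Initial D E δ S₀ e₀) {z x : F}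
    (hx : x ∈ E) (hx1 : ‖x‖ < 1)
    (hlim : Filter.Tendsto (fun k => (D.orbit (startPair S₀ e₀ z) k).1 +
      (D.orbit (startPair S₀ e₀ z) k).2) Filter.atTop (nhds x)) : S₀ (z - e₀) = 0 := by
  by_contra hne
  have hG := hI.good h.δ_nonneg z
  obtain ⟨v, hv, hvd⟩ := h.exists_limit hG
  obtain rfl := tendsto_nhds_unique hlim hv
  have hν0 : (startPair S₀ e₀ z).2 = S₀ (z - e₀) := rfl
  have hδ := h.δ_le
  have hδ0 := h.δ_nonneg
  set u := startPair S₀ e₀ z with hu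
  have hex : ∃ m, rad m < height (D.orbit u m) := by
    by_contra! hall
    have hlow : ∀ k, ‖S₀ (z - e₀)‖ * (1 / 2) ^ k ≤ ‖(D.orbit u k).2‖ := by
      intro k
      induction k with
      | zero => simp [PlaneData.orbit, hν0]
      | succ k ih =>
        have hlt : height (D.orbit u k) < 5 / 2 * rad k := by linarith [hall k, rad_pos k]
        obtain ⟨hN, hν⟩ := (h.good_orbit hG k).resolve hlt
        have e1 := h.norm_sub_avgQ_le (norm_fst_le_of_height hlt) hN hν
        have e2 := norm_le_norm_add_norm_sub' (D.orbit u k).2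
          (D.avgQ k (D.orbit u k).1 (D.orbit u k).2)
        rw [PlaneData.orbit, D.step_full (hall k), pow_succ]
        nlinarith [norm_nonneg (D.orbit u k).2]
    have h5 : ∀ k : ℕ, ‖S₀ (z - e₀)‖ ≤ (1 / 5) ^ k := by
      intro k
      have e1 := (hlow k).trans ((norm_snd_le_height _).trans (hall k))
      have e2 : rad k = (1 / 5) ^ k * (1 / 2) ^ k := by rw [rad, ← mul_pow]; norm_num
      rw [e2] at e1
      exact le_of_mul_le_mul_right e1 (by positivity)
    have : ‖S₀ (z - e₀)‖ ≤ 0 := ge_of_tendsto'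
      (tendsto_pow_atTop_nhds_zero_of_lt_one (by norm_num) (by norm_num)) h5
    exact hne (norm_le_zero_iff.1 this)
  classical
  have hspec := Nat.find_spec hex
  have hmin : ∀ l < Nat.find hex, height (D.orbit u l) ≤ rad l := fun l hl =>
    not_lt.1 (Nat.find_min hex hl)
  have hd := hvd (Nat.find hex)
  generalize Nat.find hex = m at *
  have hr := rad_pos m
  have hr1 := rad_le_one m
  have hδr := h.δ_rad m
  rw [dist_eq_norm] at hd
  cases m with
  | zero =>
    simp only [PlaneData.orbit] at *
    rw [rad_zero] at *
    rw [hu, startPair_add] at hd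
    have e1 := hI.near_plane x hx hx1.le
    have e2 : ‖u.2‖ ≤ 41 * δ := by
      rw [hν0, ← sub_add_sub_cancel z x e₀, map_add]
      refine (norm_add_le _ _).trans ?_
      linarith [hI.proj.norm_apply_le (z - x)]
    have e3 : ‖u.1‖ ≤ 3 := by
      have e4 : u.1 = (z - x) + x - u.2 := by rw [hu]; simp [startPair]
      rw [e4]
      refine (norm_sub_le _ _).trans ?_
      linarith [norm_add_le (z - x) x]
    rw [height_eq_of_norm_le e3] at hspec
    linarith
  | succ m =>
    have hm := hmin m (Nat.lt_succ_self m)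
    have hGm := h.good_orbit hG m
    obtain ⟨⟨p, hp, hap⟩, hν⟩ := h.good_of_full hGm hm
    have hνle := h.norm_snd_step_le hGm hm
    have hνm := norm_snd_le_height (D.orbit u m)
    simp only [PlaneData.orbit] at *
    set a := (D.step m (D.orbit u m)).1
    set ν := (D.step m (D.orbit u m)).2
    have hrm := rad_pos m
    have hrm1 := rad_le_one m
    have hδrm := h.δ_rad m
    rw [rad_succ] at *
    rw [dist_eq_norm] at hap
    have ha3 : ‖a‖ ≤ 3 := by
      have : a = (a + ν - x) + x - ν := by abel
      rw [this]
      refine (norm_sub_le _ _).trans ?_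
      linarith [norm_add_le (a + ν - x) x]
    have hpR : ‖p‖ ≤ 7 := by linarith [norm_le_norm_add_norm_sub a p]
    rw [height_eq_of_norm_le ha3] at hspec
    have e1 : ‖D.Q m p (x - D.c m p)‖ ≤ δ * rad m := by
      refine h.near_plane m p hp hpR x hx ?_
      have : x - p = (a - p) + ν - (a + ν - x) := by abel
      rw [dist_eq_norm, this]
      refine (norm_sub_le _ _).trans ?_
      linarith [norm_add_le (a - p) ν]
    have e2 : ‖D.Q m p (p - D.c m p)‖ ≤ δ * rad m :=
      h.near_plane m p hp hpR p hp (by rw [dist_self]; linarith)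
    have hQ := h.proj m p hp hpR
    have e3 : ‖D.Q m p ν‖ ≤ 9 * (δ * rad m) := by
      have : ν = (a + ν - x) - (a - p) + ((x - D.c m p) - (p - D.c m p)) := by abel
      rw [this, map_add, map_sub, map_sub (D.Q m p) (x - D.c m p)]
      refine (norm_add_le _ _).trans ?_
      linarith [norm_sub_le (D.Q m p (a + ν - x)) (D.Q m p (a - p)),
        norm_sub_le (D.Q m p (x - D.c m p)) (D.Q m p (p - D.c m p)),
        hQ.norm_apply_le (a + ν - x), hQ.norm_apply_le (a - p)]
    have e4 : ‖ν - D.Q (m + 1) p ν‖ ≤ 2 * δ * ‖ν‖ := by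
      refine hν p hp hpR ?_
      rw [dist_comm, dist_eq_norm, rad_succ]
      linarith
    have e5 := IsOrthProj.norm_apply_sub_le ((h.norm_sub_le m (m + 1) (Or.inr rfl) p hp hpR p hp hpR
      (by rw [dist_self]; linarith)).trans (h.b_le m p)) ν
    have e6 := norm_le_norm_add_norm_sub' ν (D.Q (m + 1) p ν)
    have e7 := norm_le_norm_add_norm_sub' (D.Q (m + 1) p ν) (D.Q m p ν)
    nlinarith

theorem Setup.exists_param (h : Setup D E 7 δ Λ) (hI : Initial D E δ S₀ e₀) (hE : (0 : F) ∈ E)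
    (hA : 1 ≤ A) (hdist : ∀ p ∈ E, ‖p‖ ≤ 7 → ∀ m, distortion D δ Λ p m ≤ A) :
    ∃ g : F → F, Function.Bijective g ∧ E ∩ ball 0 1 = g '' {z | S₀ (z - e₀) = 0} ∩ ball 0 1 ∧
      ∀ x y, dist (g x) (g y) ≤ 44 * A * dist x y ∧ dist x y ≤ 44 * A * dist (g x) (g y) := by
  choose g hg hgd using fun z => h.exists_limit (hI.good h.δ_nonneg z)
  have hbi : ∀ x y, dist (g x) (g y) ≤ 44 * A * dist x y ∧ dist x y ≤ 44 * A * dist (g x) (g y) :=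
    fun x y => h.limit_bilipschitz hI hE hA hdist (hg x) (hg y)
  have hsurj : Function.Surjective g := by
    intro y
    have hcont : Continuous g := (LipschitzWith.of_dist_le_mul (K := (44 * A).toNNReal)
      fun x y => by rw [Real.coe_toNNReal _ (by linarith)]; exact (hbi x y).1).continuous
    obtain ⟨x, -, hx⟩ := exists_eq_of_dist_le (F := g) (c := y) (ρ := 1) (s := 40 * δ) (y := y)
      (by linarith [h.δ_nonneg]) hcont.continuousOn (fun x _ => by
        have := hgd x 0
        rwa [PlaneData.orbit, startPair_add, rad_zero, mul_one, dist_comm] at this)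
      (by rw [dist_self]; linarith [h.δ_le])
    exact ⟨x, hx⟩
  refine ⟨g, ⟨fun x y hxy => ?_, hsurj⟩, ?_, hbi⟩
  · have := (hbi x y).2
    rw [hxy, dist_self, mul_zero] at this
    exact dist_le_zero.1 this
  · ext x
    simp only [mem_inter_iff, mem_ball_zero_iff, mem_image, mem_ofPred_eq]
    constructor
    · rintro ⟨hx, hx1⟩
      obtain ⟨z, rfl⟩ := hsurj x
      exact ⟨⟨z, h.normal_eq_zero hI hx hx1 (hg z), rfl⟩, hx1⟩
    · rintro ⟨⟨z, hz, rfl⟩, hx1⟩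
      exact ⟨h.limit_mem hI hz (hg z) hx1, hx1⟩

end Param

section Cmp

variable {F : Type*} [NormedAddCommGroup F] [InnerProductSpace ℝ F] {d : ℕ}

theorem Orthonormal.sum_abs_le {u : Fin d → F} (hu : Orthonormal ℝ u) (l : Fin d → ℝ) :
    ∑ i, |l i| ≤ d * ‖∑ i, l i • u i‖ := by
  have h : ∀ i, |l i| ≤ ‖∑ i, l i • u i‖ := fun i => by
    have h1 := abs_real_inner_le_norm (u i) (∑ i, l i • u i)
    rwa [hu.inner_right_fintype, hu.1 i, one_mul] at h1
  calc ∑ i, |l i| ≤ ∑ _i : Fin d, ‖∑ i, l i • u i‖ := Finset.sum_le_sum fun i _ => h i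
    _ = _ := by simp

/-- A family close to an orthonormal one, of the right size, spans with controlled coefficients. -/
theorem exists_coeff_of_near_orthonormal [FiniteDimensional ℝ F] {u f : Fin d → F}
    (hu : Orthonormal ℝ u) (hf : ∀ i, 2 * d * ‖f i - u i‖ ≤ 1) {W : Submodule ℝ F}
    (hW : Module.finrank ℝ W = d) (hfW : ∀ i, f i ∈ W) {v : F} (hv : v ∈ W) :
    ∃ l : Fin d → ℝ, v = ∑ i, l i • f i ∧ ∑ i, |l i| ≤ 2 * d * ‖v‖ := by
  have key : ∀ l : Fin d → ℝ, ∑ i, |l i| ≤ 2 * d * ‖∑ i, l i • f i‖ := by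
    intro l
    have h1 := hu.sum_abs_le l
    have h2 : ‖∑ i, l i • u i‖ ≤ ‖∑ i, l i • f i‖ + ‖∑ i, l i • (f i - u i)‖ := by
      have : ∑ i, l i • u i = ∑ i, l i • f i - ∑ i, l i • (f i - u i) := by
        rw [← Finset.sum_sub_distrib]; simp [smul_sub]
      rw [this]; exact norm_sub_le _ _
    have h3 : 2 * d * ‖∑ i, l i • (f i - u i)‖ ≤ ∑ i, |l i| := by
      calc 2 * d * ‖∑ i, l i • (f i - u i)‖ ≤ 2 * d * ∑ i, |l i| * ‖f i - u i‖ := by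
            gcongr
            exact norm_sum_le_of_le _ fun i _ => (norm_smul _ _).le
        _ = ∑ i, |l i| * (2 * d * ‖f i - u i‖) := by
            rw [Finset.mul_sum]; exact Finset.sum_congr rfl fun i _ => by ring
        _ ≤ ∑ i, |l i| * 1 :=
            Finset.sum_le_sum fun i _ => mul_le_mul_of_nonneg_left (hf i) (abs_nonneg _)
        _ = _ := by simp
    have hd : (0 : ℝ) ≤ d := Nat.cast_nonneg d
    nlinarith
  have hli : LinearIndependent ℝ f := by
    rw [Fintype.linearIndependent_iff]
    intro l hl i
    have h1 := key l
    rw [hl, norm_zero, mul_zero] at h1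
    have h2 := Finset.single_le_sum (fun j _ => abs_nonneg (l j)) (Finset.mem_univ i)
    exact abs_nonpos_iff.1 (h2.trans h1)
  have hspan : Submodule.span ℝ (Set.range f) = W := by
    refine Submodule.eq_of_le_of_finrank_eq (Submodule.span_le.2 ?_) ?_
    · rintro _ ⟨i, rfl⟩; exact hfW i
    · rw [finrank_span_eq_card hli, hW, Fintype.card_fin]
  rw [← hspan, Submodule.mem_span_range_iff_exists_fun] at hv
  obtain ⟨l, rfl⟩ := hv
  exact ⟨l, rfl, key l⟩

variable {Q₁ Q₂ : F →L[ℝ] F} {c₁ c₂ : F} {ρ τ b : ℝ} {u y : Fin d → F} {y₀ : F}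

/-- One-sided comparison of two planes which pass near the same frame. -/
theorem norm_apply_le_of_frame [FiniteDimensional ℝ F] (h₁ : IsOrthProj Q₁) (h₂ : IsOrthProj Q₂)
    (hd₁ : Module.finrank ℝ (LinearMap.ker (Q₁ : F →ₗ[ℝ] F)) = d) (hu : Orthonormal ℝ u) (hρ : 0 < ρ)
    (hy : ∀ i, ‖y i - y₀ - ρ • u i‖ ≤ ρ * τ) (hτ : 2 * d * (τ + 2 * b) ≤ 1)
    (h10 : ‖Q₁ (y₀ - c₁)‖ ≤ b * ρ) (h1 : ∀ i, ‖Q₁ (y i - c₁)‖ ≤ b * ρ)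
    (h20 : ‖Q₂ (y₀ - c₂)‖ ≤ b * ρ) (h2 : ∀ i, ‖Q₂ (y i - c₂)‖ ≤ b * ρ)
    (x : F) : ‖Q₂ (x - Q₁ x)‖ ≤ 8 * b * d * ‖x‖ := by
  have hv₁ : ∀ i, ‖Q₁ (y i - y₀)‖ ≤ 2 * b * ρ := fun i => by
    rw [← sub_sub_sub_cancel_right _ _ c₁, map_sub]
    linarith [norm_sub_le (Q₁ (y i - c₁)) (Q₁ (y₀ - c₁)), h1 i]
  have hv₂ : ∀ i, ‖Q₂ (y i - y₀)‖ ≤ 2 * b * ρ := fun i => by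
    rw [← sub_sub_sub_cancel_right _ _ c₂, map_sub]
    linarith [norm_sub_le (Q₂ (y i - c₂)) (Q₂ (y₀ - c₂)), h2 i]
  set f : Fin d → F := fun i => ρ⁻¹ • (y i - y₀ - Q₁ (y i - y₀)) with hf
  have hfu : ∀ i, ‖f i - u i‖ ≤ τ + 2 * b := fun i => by
    have : f i - u i = ρ⁻¹ • ((y i - y₀ - ρ • u i) - Q₁ (y i - y₀)) := by
      simp only [hf, smul_sub, smul_smul, inv_mul_cancel₀ hρ.ne', one_smul]; abel
    rw [this, norm_smul, norm_inv, Real.norm_of_nonneg hρ.le, inv_mul_le_iff₀ hρ]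
    linarith [norm_sub_le (y i - y₀ - ρ • u i) (Q₁ (y i - y₀)), hy i, hv₁ i]
  have hf2 : ∀ i, ‖Q₂ (f i)‖ ≤ 4 * b := fun i => by
    simp only [hf]
    rw [map_smul, map_sub Q₂, norm_smul, norm_inv, Real.norm_of_nonneg hρ.le, inv_mul_le_iff₀ hρ]
    linarith [norm_sub_le (Q₂ (y i - y₀)) (Q₂ (Q₁ (y i - y₀))), h₂.norm_apply_le (Q₁ (y i - y₀)),
      hv₁ i, hv₂ i]
  have hb : 0 ≤ b := by
    have := (norm_nonneg _).trans h10
    exact nonneg_of_mul_nonneg_left this hρ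
  obtain ⟨l, hl, hl2⟩ := exists_coeff_of_near_orthonormal hu
    (fun i => (mul_le_mul_of_nonneg_left (hfu i) (by positivity)).trans hτ) hd₁
    (fun i => by simp [hf, h₁.idem]) (v := x - Q₁ x) (by simp [h₁.idem])
  have hx := h₁.norm_sub_apply_le x
  rw [hl, map_sum]
  calc ‖∑ i, Q₂ (l i • f i)‖ ≤ ∑ i, |l i| * (4 * b) := norm_sum_le_of_le _ fun i _ => by
        rw [map_smul, norm_smul, Real.norm_eq_abs]
        exact mul_le_mul_of_nonneg_left (hf2 i) (abs_nonneg _)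
    _ = (∑ i, |l i|) * (4 * b) := by rw [Finset.sum_mul]
    _ ≤ (2 * d * ‖x - Q₁ x‖) * (4 * b) := by gcongr
    _ ≤ (2 * d * ‖x‖) * (4 * b) := by gcongr
    _ = _ := by ring

/-- Two planes which pass near the same frame are close. -/
theorem norm_sub_le_of_frame [FiniteDimensional ℝ F] (h₁ : IsOrthProj Q₁) (h₂ : IsOrthProj Q₂)
    (hd₁ : Module.finrank ℝ (LinearMap.ker (Q₁ : F →ₗ[ℝ] F)) = d)
    (hd₂ : Module.finrank ℝ (LinearMap.ker (Q₂ : F →ₗ[ℝ] F)) = d) (hu : Orthonormal ℝ u) (hρ : 0 < ρ)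
    (hy : ∀ i, ‖y i - y₀ - ρ • u i‖ ≤ ρ * τ) (hτ : 2 * d * (τ + 2 * b) ≤ 1)
    (h10 : ‖Q₁ (y₀ - c₁)‖ ≤ b * ρ) (h1 : ∀ i, ‖Q₁ (y i - c₁)‖ ≤ b * ρ)
    (h20 : ‖Q₂ (y₀ - c₂)‖ ≤ b * ρ) (h2 : ∀ i, ‖Q₂ (y i - c₂)‖ ≤ b * ρ) :
    ‖Q₁ - Q₂‖ ≤ 16 * b * d := by
  have hb : 0 ≤ b := by
    have := (norm_nonneg _).trans h10
    exact nonneg_of_mul_nonneg_left this hρ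
  have hA := norm_apply_le_of_frame h₁ h₂ hd₁ hu hρ hy hτ h10 h1 h20 h2
  have hB := norm_apply_le_of_frame h₂ h₁ hd₂ hu hρ hy hτ h20 h2 h10 h1
  refine ContinuousLinearMap.opNorm_le_bound _ (by positivity) fun x => ?_
  have hC : ‖Q₁ x - Q₂ (Q₁ x)‖ ≤ 8 * b * d * ‖x‖ := by
    set v := Q₁ x - Q₂ (Q₁ x) with hv
    have h3 : Q₂ v = 0 := by rw [hv, map_sub, h₂.idem, sub_self]
    have h4 : ‖v‖ ^ 2 ≤ ‖x‖ * (8 * b * d * ‖v‖) := by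
      have h5 : inner ℝ v v = inner ℝ x (Q₁ v) := by
        conv_lhs => rw [hv]
        rw [inner_sub_left, h₂.symm, h3, inner_zero_right, sub_zero, h₁.symm]
      rw [← real_inner_self_eq_norm_sq, h5]
      refine (real_inner_le_norm _ _).trans ?_
      have := hB v
      rw [h3, sub_zero] at this
      gcongr
    rcases eq_or_lt_of_le (norm_nonneg v) with h0 | h0
    · rw [← h0]; positivity
    · nlinarith
  have h3 : (Q₁ - Q₂) x = (Q₁ x - Q₂ (Q₁ x)) - Q₂ (x - Q₁ x) := by
    rw [map_sub, sub_apply]; abel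
  rw [h3]
  refine (norm_sub_le _ _).trans ?_
  linarith [hA x]

end Cmp

section Flat

variable {F : Type*} [NormedAddCommGroup F] [InnerProductSpace ℝ F] [FiniteDimensional ℝ F] {d : ℕ}

/-- `Q` is the normal projection of a `d`-dimensional plane. -/
structure IsNormal (d : ℕ) (Q : F →L[ℝ] F) : Prop extends IsOrthProj Q where
  dim : Module.finrank ℝ (LinearMap.ker (Q : F →ₗ[ℝ] F)) = d

/-- Near points of norm less than `10`, at all scales `10 * rad k`, the closed set `E` is close to
the `d`-plane through `x` with normal projection `Q k x`. -/
structure Flat (E : Set F) (d : ℕ) (ε : ℝ) (Q : ℕ → F → F →L[ℝ] F) : Prop where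
  closed : IsClosed E
  zero_mem : (0 : F) ∈ E
  nonneg : 0 ≤ ε
  small : 320 * d * ε ≤ 1
  dim_pos : 0 < d
  normal : ∀ k, ∀ x ∈ E, ‖x‖ < 10 → IsNormal d (Q k x)
  near_plane : ∀ k, ∀ x ∈ E, ‖x‖ < 10 → ∀ y ∈ E, dist y x < 10 * rad k →
    ‖Q k x (y - x)‖ ≤ 10 * (ε * rad k)
  near_set : ∀ k, ∀ x ∈ E, ‖x‖ < 10 → ∀ z, Q k x (z - x) = 0 → dist z x < 10 * rad k →
    infDist z E ≤ 10 * (ε * rad k)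

variable {E : Set F} {ε : ℝ} {Q : ℕ → F → F →L[ℝ] F}

/-- Two planes which are close to points of `E` around each point of `E` near `x` are close. -/
theorem Flat.norm_sub_le (h : Flat E d ε Q) {k : ℕ} {x : F} (hx : x ∈ E) (hx10 : ‖x‖ < 10)
    {Q₁ Q₂ : F →L[ℝ] F} {c₁ c₂ : F} (h₁ : IsNormal d Q₁) (h₂ : IsNormal d Q₂) {κ B : ℝ}
    (hκ : 32 * d * κ ≤ 1)
    (hw : ∀ w ∈ E, dist w x ≤ 9 / 10 * rad k → ∃ y ∈ E, dist y w ≤ κ * rad k ∧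
      ‖Q₁ (y - c₁)‖ ≤ B * rad k ∧ ‖Q₂ (y - c₂)‖ ≤ B * rad k) :
    ‖Q₁ - Q₂‖ ≤ 64 * d * B ∧
      ∀ z, ‖Q₁ (z - c₁) - Q₂ (z - c₂)‖ ≤ 64 * d * B * (dist z x + rad k) := by
  have hr := rad_pos k
  have hε := h.small
  have hε0 := h.nonneg
  have hd1 : (1 : ℝ) ≤ d := by exact_mod_cast h.dim_pos
  obtain ⟨y₀, hy₀, hy₀x, h10, h20⟩ := hw x hx (by rw [dist_self]; positivity)
  have hB : 0 ≤ B := nonneg_of_mul_nonneg_left ((norm_nonneg _).trans h10) hr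
  have hκ1 : κ ≤ 1 / 32 := by nlinarith
  have hε1 : ε ≤ 1 / 320 := by nlinarith
  have hQ : ‖Q₁ - Q₂‖ ≤ 64 * d * B := by
    rcases le_or_gt (32 * d * B) 1 with hB1 | hB1
    · have hN := h.normal k x hx hx10
      obtain ⟨u, hu, huK⟩ : ∃ u : Fin d → F, Orthonormal ℝ u ∧ ∀ i, Q k x (u i) = 0 := by
        let e := (stdOrthonormalBasis ℝ (LinearMap.ker (Q k x : F →ₗ[ℝ] F))).reindex
          (finCongr hN.dim)
        exact ⟨fun i => (e i : F), e.orthonormal.comp_linearIsometry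
          (LinearMap.ker (Q k x : F →ₗ[ℝ] F)).subtypeₗᵢ, fun i => (e i).2⟩
      have hex : ∀ i, ∃ y ∈ E, ‖y - x - (rad k / 2) • u i‖ ≤ (10 * ε + κ) * rad k ∧
          ‖Q₁ (y - c₁)‖ ≤ B * rad k ∧ ‖Q₂ (y - c₂)‖ ≤ B * rad k := by
        intro i
        have hz : dist (x + (rad k / 2) • u i) x = rad k / 2 := by
          rw [dist_eq_norm, add_sub_cancel_left, norm_smul, hu.1 i, mul_one,
            Real.norm_of_nonneg (by positivity)]
        obtain ⟨w, hwE, hwd⟩ := h.closed.exists_infDist_eq_dist ⟨x, hx⟩ (x + (rad k / 2) • u i)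
        have h3 := h.near_set k x hx hx10 (x + (rad k / 2) • u i) (by simp [huK]) (by
          rw [hz]; linarith)
        rw [hwd] at h3
        obtain ⟨y, hy, hyw, hy1, hy2⟩ := hw w hwE (by
          have := dist_triangle_left w x (x + (rad k / 2) • u i)
          nlinarith)
        refine ⟨y, hy, ?_, hy1, hy2⟩
        rw [sub_sub, ← dist_eq_norm]
        have := dist_triangle_right y (x + (rad k / 2) • u i) w
        linarith
      choose y hyE hyd hy1 hy2 using hex
      have := norm_sub_le_of_frame (ρ := rad k / 2) (τ := 20 * ε + 4 * κ) (b := 2 * B) (y := y)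
        (y₀ := y₀) (c₁ := c₁) (c₂ := c₂) h₁.toIsOrthProj h₂.toIsOrthProj h₁.dim h₂.dim hu
        (by positivity) (fun i => ?_) (by linarith) (by linarith) (fun i => by linarith [hy1 i])
        (by linarith) (fun i => by linarith [hy2 i])
      · linarith [mul_nonneg (Nat.cast_nonneg d : (0 : ℝ) ≤ d) hB]
      · have : y i - y₀ - (rad k / 2) • u i = (y i - x - (rad k / 2) • u i) - (y₀ - x) := by abel
        rw [dist_eq_norm] at hy₀x
        rw [this]
        refine (_root_.norm_sub_le _ _).trans ?_
        linarith [hyd i]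
    · refine (_root_.norm_sub_le _ _).trans ?_
      have e1 : ‖Q₁‖ ≤ 1 := ContinuousLinearMap.opNorm_le_bound _ zero_le_one fun x => by
        rw [one_mul]; exact h₁.norm_apply_le x
      have e2 : ‖Q₂‖ ≤ 1 := ContinuousLinearMap.opNorm_le_bound _ zero_le_one fun x => by
        rw [one_mul]; exact h₂.norm_apply_le x
      linarith
  refine ⟨hQ, fun z => ?_⟩
  have h3 : Q₁ (z - c₁) - Q₂ (z - c₂) =
      (Q₁ (z - y₀) - Q₂ (z - y₀)) + (Q₁ (y₀ - c₁) - Q₂ (y₀ - c₂)) := by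
    rw [← sub_add_sub_cancel z y₀ c₁, ← sub_add_sub_cancel z y₀ c₂, map_add, map_add]; abel_nf
  have h4 := IsOrthProj.norm_apply_sub_le hQ (z - y₀)
  have h5 : ‖z - y₀‖ ≤ dist z x + 1 / 32 * rad k := by
    rw [← dist_eq_norm]
    have := dist_triangle_right z y₀ x
    nlinarith
  have hdB : 0 ≤ 64 * d * B := by positivity
  have h6 := mul_le_mul_of_nonneg_left h5 hdB
  have h7 : B * rad k ≤ d * B * rad k := by nlinarith [mul_nonneg hB hr.le]
  rw [h3]
  refine (norm_add_le _ _).trans ?_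
  have := _root_.norm_sub_le (Q₁ (y₀ - c₁)) (Q₂ (y₀ - c₂))
  linarith [mul_nonneg hB hr.le]

/-- Comparison of approximating planes at neighbouring points and scales. -/
theorem Flat.norm_sub_le_of_dist (h : Flat E d ε Q) {k l : ℕ} (hl : l = k ∨ l = k + 1) {x p : F}
    (hx : x ∈ E) (hx10 : ‖x‖ < 10) (hp : p ∈ E) (hp10 : ‖p‖ < 10) (hxp : dist x p ≤ 9 * rad k) :
    ‖Q l x - Q k p‖ ≤ 6400 * d * ε ∧
      ∀ z, ‖Q l x (z - x) - Q k p (z - p)‖ ≤ 6400 * d * ε * (dist z x + rad k) := by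
  have hr := rad_pos k
  have hε0 := h.nonneg
  have hrl : rad l ≤ rad k ∧ rad k ≤ 10 * rad l := by
    rcases hl with rfl | rfl
    · constructor <;> linarith
    · rw [rad_succ]; constructor <;> linarith
  have hrl0 := rad_pos l
  have hw : ∀ w ∈ E, dist w x ≤ 9 / 10 * rad l → ∃ y ∈ E, dist y w ≤ 0 * rad l ∧
      ‖Q l x (y - x)‖ ≤ 100 * ε * rad l ∧ ‖Q k p (y - p)‖ ≤ 100 * ε * rad l := by
    intro w hwE hwx
    refine ⟨w, hwE, by simp, ?_, ?_⟩
    · refine (h.near_plane l x hx hx10 w hwE (by linarith)).trans ?_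
      nlinarith [mul_nonneg hε0 hrl0.le]
    · refine (h.near_plane k p hp hp10 w hwE ?_).trans ?_
      · linarith [dist_triangle w x p]
      · nlinarith
  obtain ⟨h1, h2⟩ := h.norm_sub_le hx hx10 (h.normal l x hx hx10) (h.normal k p hp hp10)
    (by simp) hw
  refine ⟨by linarith, fun z => (h2 z).trans ?_⟩
  have : (0 : ℝ) ≤ d * ε := by positivity
  nlinarith [mul_le_mul_of_nonneg_left hrl.1 this]

end Flat

section Lower

variable {F : Type*} [NormedAddCommGroup F] [InnerProductSpace ℝ F]

/-- Iterated full steps, starting from generation `k`. -/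
def PlaneData.push (D : PlaneData F) (k : ℕ) : ℕ → F → F
  | 0, a => a
  | i + 1, a => D.push k i a - D.avgN (k + i) (D.push k i a)

section

variable {D : PlaneData F} {E : Set F} {R δ Λ : ℝ}

theorem Setup.isNear_push [FiniteDimensional ℝ F] (h : Setup D E R δ Λ) {k : ℕ} {a : F} (ha : ‖a‖ ≤ R - 11 / 10)
    (hN : IsNear E δ k a) (i : ℕ) : IsNear E δ (k + i) (D.push k i a) ∧
      dist (D.push k i a) a ≤ 40 * δ * (rad k - rad (k + i)) ∧ ‖D.push k i a‖ ≤ R - 1 := by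
  have hbd : ∀ i, dist (D.push k i a) a ≤ 40 * δ * (rad k - rad (k + i)) →
      ‖D.push k i a‖ ≤ R - 1 := fun i hi => by
    have h1 : ‖D.push k i a‖ ≤ ‖a‖ + dist (D.push k i a) a := by
      rw [dist_eq_norm, norm_sub_rev]; exact norm_le_norm_add_norm_sub a _
    have := h.δ_rad k
    have := h.δ_rad_nonneg (k + i)
    have := rad_le_one k
    linarith
  induction i with
  | zero =>
    have : dist (D.push k 0 a) a ≤ 40 * δ * (rad k - rad (k + 0)) := by simp [PlaneData.push]
    exact ⟨hN, this, hbd 0 this⟩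
  | succ i ih =>
    obtain ⟨h1, h2, h3⟩ := ih
    have h4 : dist (D.push k (i + 1) a) a ≤ 40 * δ * (rad k - rad (k + (i + 1))) := by
      have h5 : dist (D.push k (i + 1) a) (D.push k i a) ≤ 31 * (δ * rad (k + i)) := by
        rw [dist_eq_norm, PlaneData.push, sub_sub_cancel_left, norm_neg]
        exact h.norm_avgN_le h3 h1
      have := dist_triangle (D.push k (i + 1) a) (D.push k i a) a
      have := h.δ_rad_nonneg (k + i)
      rw [← add_assoc, rad_succ]
      linarith
    exact ⟨h.isNear_succ h3 h1, h4, hbd _ h4⟩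

theorem Setup.continuousOn_avgN (h : Setup D E R δ Λ) (k : ℕ) :
    ContinuousOn (D.avgN k) {a | ‖a‖ ≤ R - 1 ∧ IsNear E δ k a} := by
  have hr := rad_pos k
  have hΛ := h.Λ_ge
  refine continuousOn_finsetSum _ fun j hj => ContinuousOn.smul ?_ ?_
  · refine LipschitzOnWith.continuousOn (K := (Λ / rad k).toNNReal)
      (LipschitzOnWith.of_dist_le_mul fun a ha b hb => ?_)
    rw [Real.coe_toNNReal _ (by positivity), div_mul_eq_mul_div, le_div_iff₀ hr]
    refine le_trans ?_ ((h.part k).lip a b (h.exists_mem_dist_le ha.1 ha.2)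
      (h.exists_mem_dist_le hb.1 hb.2))
    gcongr
    exact Finset.single_le_sum (f := fun j => |D.θ k a j - D.θ k b j|)
      (fun _ _ => abs_nonneg _) hj
  · fun_prop

theorem Setup.continuousOn_push [FiniteDimensional ℝ F] (h : Setup D E R δ Λ) (k i : ℕ) :
    ContinuousOn (D.push k i) {a | ‖a‖ ≤ R - 11 / 10 ∧ IsNear E δ k a} := by
  induction i with
  | zero => exact continuousOn_id
  | succ i ih =>
    refine ih.sub ((h.continuousOn_avgN (k + i)).comp ih fun a ha => ?_)
    have := h.isNear_push ha.1 ha.2 i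
    exact ⟨this.2.2, this.1⟩

end

variable [FiniteDimensional ℝ F]

theorem PlaneSys.exists_setup {D : PlaneData F} {E : Set F} {R δ : ℝ} (h : PlaneSys D E R δ)
    (hE : IsClosed E) (hδ : 0 ≤ δ) (hs : 10000 * (8 * 5 ^ Module.finrank ℝ F) ^ 2 * δ ≤ 1) :
    ∃ X θ, Setup { D with X := X, θ := θ } E R δ (8 * 5 ^ Module.finrank ℝ F) := by
  have hK : IsCompact (E ∩ closedBall 0 R) := (isCompact_closedBall 0 R).inter_left hE
  choose X θ hX using fun k => exists_partUnity hK (rad_pos k)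
  refine ⟨X, θ, ⟨⟨h.proj, h.near_plane, h.near_set, h.b_nonneg, h.b_le, h.norm_sub_le,
    h.norm_N_sub_le⟩, hE, hX, hδ, ?_, hs⟩⟩
  have : (1 : ℝ) ≤ 5 ^ Module.finrank ℝ F := one_le_pow₀ (by norm_num)
  linarith

theorem Flat.planeSys {E : Set F} {d : ℕ} {ε : ℝ} {Q : ℕ → F → F →L[ℝ] F} (h : Flat E d ε Q)
    (X : ℕ → Finset F) (θ : ℕ → F → F → ℝ) :
    PlaneSys ⟨fun _ x => x, Q, fun _ _ => 100000 * d * ε, X, θ⟩ E 9 (100000 * d * ε) := by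
  have hε := h.nonneg
  have hd : (1 : ℝ) ≤ d := by exact_mod_cast h.dim_pos
  have hdε : ε ≤ d * ε := by nlinarith
  have key : ∀ k, 10 * (ε * rad k) ≤ 100000 * d * ε * rad k := fun k => by
    have := rad_pos k
    nlinarith
  refine ⟨fun k x hx hxR => (h.normal k x hx (by linarith)).toIsOrthProj,
    fun k x hx hxR y hy hyx => (h.near_plane k x hx (by linarith) y hy
      (by linarith [rad_pos k])).trans (key k), fun k x hx hxR z hz hzx =>
    (h.near_set k x hx (by linarith) z hz (by linarith [rad_pos k])).trans (key k),
    fun _ _ => by positivity, fun _ _ => le_rfl, fun k l hl x hx hxR p hp hpR hxp => ?_,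
    fun k l hl x hx hxR p hp hpR hxp z hz => ?_⟩
  · refine (h.norm_sub_le_of_dist hl hx (by linarith) hp (by linarith)
      (by linarith [rad_pos k])).1.trans ?_
    have : (0 : ℝ) ≤ d * ε := by positivity
    linarith
  · refine ((h.norm_sub_le_of_dist hl hx (by linarith) hp (by linarith)
      (by linarith [rad_pos k])).2 z).trans ?_
    have h1 : (0 : ℝ) ≤ d * ε := by positivity
    have h2 : dist z x ≤ 10 * rad k := by linarith [dist_triangle_right z x p]
    have := mul_le_mul_of_nonneg_left h2 h1
    have := mul_nonneg h1 (rad_pos k).le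
    dsimp only
    linarith

/-- `E` has no holes: its projection to the approximating plane covers a large ball. -/
theorem Flat.exists_proj_eq {E : Set F} {d : ℕ} {ε : ℝ} {Q : ℕ → F → F →L[ℝ] F} (h : Flat E d ε Q)
    (hs : 10000 * (8 * 5 ^ Module.finrank ℝ F) ^ 2 * (100000 * d * ε) ≤ 1) {k : ℕ} {w : F}
    (hw : w ∈ E) (hw7 : ‖w‖ ≤ 71 / 10) {H : Type*} [NormedAddCommGroup H] [InnerProductSpace ℝ H]
    [FiniteDimensional ℝ H] (ι : H →ₗᵢ[ℝ] F) (hι : ∀ s, Q k w (ι s) = 0) (T : F →L[ℝ] H)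
    (hT : ∀ z, ‖T z‖ ≤ ‖z‖) (hTι : ∀ s, T (ι s) = s) {s : H} (hsr : ‖s‖ < rad k / 2) :
    ∃ y ∈ E ∩ closedBall w (rad k), T (y - w) = s := by
  have hε := h.nonneg
  have hd : (1 : ℝ) ≤ d := by exact_mod_cast h.dim_pos
  obtain ⟨X, θ, hS⟩ := (h.planeSys (fun _ => ∅) 0).exists_setup h.closed (by positivity) hs
  set D : PlaneData F := ⟨fun _ x => x, Q, fun _ _ => 100000 * d * ε, X, θ⟩
  set δ := 100000 * d * ε
  have hr := rad_pos k
  have hδr := hS.δ_rad k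
  have hstart : ∀ t ∈ closedBall (0 : H) (3 / 4 * rad k),
      ‖w + ι t‖ ≤ 9 - 11 / 10 ∧ IsNear E δ k (w + ι t) := fun t ht => by
    rw [mem_closedBall_zero_iff] at ht
    have h1 : ‖ι t‖ = ‖t‖ := ι.norm_map t
    refine ⟨?_, ?_⟩
    · have := norm_add_le w (ι t)
      have := rad_le_one k
      linarith
    · obtain ⟨p, hp, hd⟩ := h.closed.exists_infDist_eq_dist ⟨w, hw⟩ (w + ι t)
      have := hS.near_set k w hw (by linarith) (w + ι t) (by simp [PlaneData.N, D, hι])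
        (by rw [dist_eq_norm, add_sub_cancel_left]; linarith)
      exact ⟨p, hp, by linarith [hS.δ_rad_nonneg k]⟩
  have hcl : IsClosed ((fun y => T (y - w)) '' (E ∩ closedBall w (rad k))) :=
    (((isCompact_closedBall w (rad k)).inter_left h.closed).image (by fun_prop)).isClosed
  refine hcl.closure_subset (Metric.mem_closure_iff.2 fun e he => ?_)
  obtain ⟨i, hi⟩ := ((tendsto_rad.comp (Filter.tendsto_add_atTop_nat k)).eventually
    (gt_mem_nhds he)).exists
  have hclose : ∀ t ∈ closedBall (0 : H) (3 / 4 * rad k),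
      dist (T (D.push k i (w + ι t) - w)) t ≤ rad k / 250 := fun t ht => by
    obtain ⟨-, h2, -⟩ := hS.isNear_push (hstart t ht).1 (hstart t ht).2 i
    have h3 : dist (T (D.push k i (w + ι t) - w)) t ≤ dist (D.push k i (w + ι t)) (w + ι t) := by
      calc _ = ‖T (D.push k i (w + ι t) - (w + ι t))‖ := by
            rw [dist_eq_norm, ← sub_sub, map_sub T _ (ι t), hTι]
        _ ≤ _ := by rw [dist_eq_norm]; exact hT _
    have h4 := hS.δ_rad_nonneg (k + i)
    linarith
  obtain ⟨t, ht, hts⟩ := exists_eq_of_dist_le (F := fun t => T (D.push k i (w + ι t) - w)) (c := 0)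
    (ρ := 3 / 4 * rad k) (s := rad k / 250) (y := s) (by positivity)
    (T.continuous.comp_continuousOn (((hS.continuousOn_push k i).comp
      (by fun_prop) hstart).sub continuousOn_const)) hclose
    (by rw [dist_zero_right]; linarith)
  obtain ⟨⟨p, hp, hdp⟩, h2, -⟩ := hS.isNear_push (hstart t ht).1 (hstart t ht).2 i
  have h3 := hS.δ_rad_nonneg (k + i)
  have h4 := hS.δ_rad (k + i)
  have h5 := rad_anti (Nat.le_add_right k i)
  refine ⟨T (p - w), ⟨p, ⟨hp, ?_⟩, rfl⟩, ?_⟩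
  · rw [mem_closedBall_zero_iff] at ht
    have h6 : dist (w + ι t) w ≤ 3 / 4 * rad k := by
      rw [dist_eq_norm, add_sub_cancel_left, ι.norm_map]; exact ht
    have := dist_triangle4 p (D.push k i (w + ι t)) (w + ι t) w
    rw [dist_comm] at hdp
    rw [mem_closedBall]
    linarith
  · rw [← hts, dist_eq_norm, ← map_sub, sub_sub_sub_cancel_right]
    refine (hT _).trans_lt ?_
    rw [← dist_eq_norm]
    simp only [Function.comp_apply, add_comm i k] at hi
    linarith

variable [MeasurableSpace F] [BorelSpace F]

/-- Lower Ahlfors regularity. -/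
theorem Flat.le_hausdorffMeasure {E : Set F} {d : ℕ} {ε : ℝ} {Q : ℕ → F → F →L[ℝ] F}
    (h : Flat E d ε Q) (hs : 10000 * (8 * 5 ^ Module.finrank ℝ F) ^ 2 * (100000 * d * ε) ≤ 1)
    (k : ℕ) {w : F} (hw : w ∈ E) (hw7 : ‖w‖ ≤ 71 / 10) :
    ENNReal.ofReal ((rad k / d) ^ d) ≤ μH[(d : ℝ)] (E ∩ closedBall w (rad k)) := by
  have hr := rad_pos k
  have hd : (1 : ℝ) ≤ d := by exact_mod_cast h.dim_pos
  have hN := h.normal k w hw (by linarith)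
  let K : Submodule ℝ F := LinearMap.ker (Q k w : F →ₗ[ℝ] F)
  let e : OrthonormalBasis (Fin d) ℝ K := (stdOrthonormalBasis ℝ K).reindex (finCongr hN.dim)
  let ι : EuclideanSpace ℝ (Fin d) →ₗᵢ[ℝ] F := K.subtypeₗᵢ.comp e.repr.symm.toLinearIsometry
  let T : F →L[ℝ] EuclideanSpace ℝ (Fin d) :=
    (e.repr.toContinuousLinearEquiv : K →L[ℝ] EuclideanSpace ℝ (Fin d)) ∘L K.orthogonalProjectionOnto
  have hT : ∀ z, ‖T z‖ ≤ ‖z‖ := fun z => by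
    have : ‖T z‖ = ‖K.orthogonalProjectionOnto z‖ := e.repr.norm_map _
    rw [this]
    exact K.norm_orthogonalProjectionOnto_apply_le z
  have hTι : ∀ s, T (ι s) = s := fun s => by
    have : K.orthogonalProjectionOnto (ι s) = e.repr.symm s :=
      Submodule.orthogonalProjectionOnto_mem_subspace_eq_self (e.repr.symm s)
    change e.repr (K.orthogonalProjectionOnto (ι s)) = s
    rw [this, LinearIsometryEquiv.apply_symm_apply]
  have hι : ∀ s, Q k w (ι s) = 0 := fun s => (e.repr.symm s).2
  let f : F → Fin d → ℝ := fun y => WithLp.ofLp (T (y - w))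
  have hf : LipschitzWith 1 f := by
    have h1 : LipschitzWith 1 fun y => T (y - w) := LipschitzWith.of_dist_le_mul fun x y => by
      rw [dist_eq_norm, ← map_sub, sub_sub_sub_cancel_right, NNReal.coe_one, one_mul, dist_eq_norm]
      exact hT _
    have := (PiLp.lipschitzWith_ofLp 2 (fun _ : Fin d => ℝ)).comp h1
    rwa [one_mul] at this
  have hsub : ball (0 : Fin d → ℝ) (rad k / d / 2) ⊆ f '' (E ∩ closedBall w (rad k)) := by
    intro s hs'
    rw [mem_ball_zero_iff] at hs'
    obtain ⟨y, hy, hys⟩ := h.exists_proj_eq hs hw hw7 ι hι T hT hTι (s := WithLp.toLp 2 s) (by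
      have h1 : ‖WithLp.toLp 2 s‖ ^ 2 ≤ (d * ‖s‖) ^ 2 := by
        rw [EuclideanSpace.real_norm_sq_eq]
        calc ∑ i, s i ^ 2 ≤ ∑ _i : Fin d, ‖s‖ ^ 2 := Finset.sum_le_sum fun i _ =>
              sq_le_sq.2 ((norm_le_pi_norm s i).trans (le_abs_self _))
          _ = d * ‖s‖ ^ 2 := by simp
          _ ≤ (d * ‖s‖) ^ 2 := by nlinarith [sq_nonneg ‖s‖, mul_nonneg (sub_nonneg.2 hd) (sq_nonneg ‖s‖)]
      have h2 := (sq_le_sq₀ (norm_nonneg _) (by positivity)).1 h1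
      rw [div_right_comm, lt_div_iff₀ (by positivity)] at hs'
      linarith)
    exact ⟨y, hy, congrArg WithLp.ofLp hys⟩
  have : Nonempty (Fin d) := ⟨⟨0, h.dim_pos⟩⟩
  have h1 := hf.hausdorffMeasure_image_le (d := (d : ℝ)) (by positivity) (E ∩ closedBall w (rad k))
  rw [ENNReal.coe_one, ENNReal.one_rpow, one_mul] at h1
  refine le_trans ?_ ((measure_mono hsub).trans h1)
  have h2 : (μH[(d : ℝ)] : Measure (Fin d → ℝ)) = volume := by
    have := hausdorffMeasure_pi_real (ι := Fin d)
    rwa [Fintype.card_fin] at this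
  rw [h2, Real.volume_pi_ball _ (by positivity), Fintype.card_fin]
  refine le_of_eq ?_
  congr 2
  ring

end Lower

section Candidate

variable {F : Type*} [NormedAddCommGroup F] [InnerProductSpace ℝ F] {d : ℕ}

/-- The plane through `c` with normal projection `Q` is close to the plane through `x` with normal
projection `S`, at scale `r`. -/
structure IsClosePlane (d : ℕ) (S : F →L[ℝ] F) (x : F) (r η : ℝ) (Q : F →L[ℝ] F) (c : F) : Prop
    extends IsNormal d Q where
  norm_sub_le : ‖Q - S‖ ≤ η
  norm_le : ‖Q (x - c)‖ ≤ η * r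

theorem IsClosePlane.norm_apply_sub_le {S Q : F →L[ℝ] F} {x c : F} {r η : ℝ}
    (h : IsClosePlane d S x r η Q c) (z : F) :
    ‖Q (z - c) - S (z - x)‖ ≤ η * (dist z x + r) := by
  have h1 : Q (z - c) - S (z - x) = (Q (z - x) - S (z - x)) + Q (x - c) := by
    rw [← sub_add_sub_cancel z x c, map_add]; abel
  rw [h1, mul_add, dist_eq_norm]
  exact (norm_add_le _ _).trans (add_le_add (IsOrthProj.norm_apply_sub_le h.norm_sub_le _) h.norm_le)

variable [MeasurableSpace F]

/-- There is an almost minimizing close plane. -/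
theorem exists_almost_min {S : F →L[ℝ] F} {x : F} {r η : ℝ} (hS : IsNormal d S) (hη : 0 ≤ η)
    (hr : 0 ≤ r) (μ : Measure F) {t : ℝ} (ht : 0 < t) :
    ∃ Q c, IsClosePlane d S x r η Q c ∧ ∀ Q' c', IsClosePlane d S x r η Q' c' →
      ∫⁻ y, ENNReal.ofReal ‖Q (y - c)‖ ∂μ ≤
        ∫⁻ y, ENNReal.ofReal ‖Q' (y - c')‖ ∂μ + ENNReal.ofReal t := by
  let I : {q : (F →L[ℝ] F) × F // IsClosePlane d S x r η q.1 q.2} → ℝ≥0∞ := fun q =>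
    ∫⁻ y, ENNReal.ofReal ‖q.1.1 (y - q.1.2)‖ ∂μ
  have h0 : IsClosePlane d S x r η S x :=
    { hS with
      norm_sub_le := by simpa using hη
      norm_le := by simpa using mul_nonneg hη hr }
  rcases eq_or_ne (⨅ q, I q) ⊤ with htop | hne
  · refine ⟨S, x, h0, fun Q' c' h' => ?_⟩
    have : I ⟨(Q', c'), h'⟩ = ⊤ := iInf_eq_top.1 htop _
    rw [show ∫⁻ y, ENNReal.ofReal ‖Q' (y - c')‖ ∂μ = ⊤ from this, top_add]
    exact le_top
  · have hlt : ⨅ q, I q < (⨅ q, I q) + ENNReal.ofReal t :=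
      ENNReal.lt_add_right hne (by simpa using ht)
    obtain ⟨⟨⟨Q, c⟩, h⟩, hq⟩ := iInf_lt_iff.1 hlt
    exact ⟨Q, c, h, fun Q' c' h' => hq.le.trans (add_le_add_left (iInf_le I ⟨(Q', c'), h'⟩) _)⟩

end Candidate

theorem exists_mem_le_of_setLIntegral_le {F : Type*} [MeasurableSpace F] {μ : Measure F} {A S : Set F} (hS : MeasurableSet S)
    (hSA : S ⊆ A) {f : F → ℝ≥0∞} {J m t : ℝ} (ht : 0 ≤ t) (hJ0 : 0 ≤ J) (hμ : ENNReal.ofReal m ≤ μ S)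
    (hJ : ∫⁻ y in A, f y ∂μ ≤ ENNReal.ofReal J) (hlt : J < t * m) :
    ∃ y ∈ S, f y ≤ ENNReal.ofReal t := by
  by_contra! hc
  have h1 : ENNReal.ofReal (t * m) ≤ ENNReal.ofReal J := by
    rw [ENNReal.ofReal_mul ht]
    calc _ ≤ ENNReal.ofReal t * μ S := by gcongr
      _ = ∫⁻ _ in S, ENNReal.ofReal t ∂μ := (setLIntegral_const _ _).symm
      _ ≤ ∫⁻ y in S, f y ∂μ := setLIntegral_mono' hS fun y hy => (hc y hy).le
      _ ≤ ∫⁻ y in A, f y ∂μ := lintegral_mono_set hSA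
      _ ≤ _ := hJ
  exact hlt.not_ge ((ENNReal.ofReal_le_ofReal_iff hJ0).1 h1)

/-- The constant relating mean distances to pointwise distances. -/
def chebConst (d : ℕ) : ℝ := 3 * (d / rad (32 * d)) ^ d

theorem rad_add (k l : ℕ) : rad (k + l) = rad k * rad l := pow_add _ _ _

theorem chebConst_pos {d : ℕ} (hd : 0 < d) : 0 < chebConst d := by
  have := rad_pos (32 * d)
  unfold chebConst
  positivity

theorem mul_rad_le_one (d : ℕ) : 32 * d * rad (32 * d) ≤ 1 := by
  have h1 : ((32 * d : ℕ) : ℝ) ≤ 10 ^ (32 * d) := by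
    exact_mod_cast (Nat.lt_pow_self (by norm_num)).le
  rw [rad, one_div, inv_pow, ← div_eq_mul_inv, div_le_one (by positivity)]
  exact_mod_cast h1

section Lsys

variable {F : Type*} [NormedAddCommGroup F] [InnerProductSpace ℝ F] [FiniteDimensional ℝ F]
  [MeasurableSpace F] [BorelSpace F] {E : Set F} {d : ℕ} {ε : ℝ} {Q : ℕ → F → F →L[ℝ] F}

theorem Flat.exists_mem_le (h : Flat E d ε Q)
    (hs : 10000 * (8 * 5 ^ Module.finrank ℝ F) ^ 2 * (100000 * d * ε) ≤ 1) {l : ℕ} (hl : 2 ≤ l)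
    {x : F} (hx : ‖x‖ ≤ 7) {f₁ f₂ : F → F} (hf₁ : Continuous f₁) {B : ℝ} (hB : 0 < B)
    (h₁ : ∫⁻ y in E ∩ ball x (rad l), ENNReal.ofReal ‖f₁ y‖ ∂μH[(d : ℝ)] ≤
      ENNReal.ofReal (B * rad l ^ (d + 1)))
    (h₂ : ∫⁻ y in E ∩ ball x (rad l), ENNReal.ofReal ‖f₂ y‖ ∂μH[(d : ℝ)] ≤
      ENNReal.ofReal (B * rad l ^ (d + 1))) {w : F} (hw : w ∈ E) (hwx : dist w x ≤ 9 / 10 * rad l) :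
    ∃ y ∈ E, dist y w ≤ rad (32 * d) * rad l ∧ ‖f₁ y‖ ≤ chebConst d * B * rad l ∧
      ‖f₂ y‖ ≤ chebConst d * B * rad l := by
  have hr := rad_pos l
  have hd := h.dim_pos
  have hκ := rad_pos (32 * d)
  have hd1 : (1 : ℝ) ≤ d := by exact_mod_cast hd
  have hκ1 := mul_rad_le_one d
  have hC := chebConst_pos hd
  have hr2 : rad l ≤ 1 / 100 := (rad_anti hl).trans (by norm_num [rad])
  have hrκ : rad (32 * d + l) ≤ 1 / 32 * rad l := by
    rw [rad_add]; gcongr; nlinarith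
  have hw7 : ‖w‖ ≤ 71 / 10 := by
    have : ‖w‖ ≤ ‖x‖ + dist w x := by
      rw [dist_eq_norm, norm_sub_rev]; exact norm_le_norm_add_norm_sub x w
    linarith
  obtain ⟨y, ⟨hyE, hyw⟩, hy⟩ := exists_mem_le_of_setLIntegral_le
    (μ := μH[(d : ℝ)]) (A := E ∩ ball x (rad l)) (S := E ∩ closedBall w (rad (32 * d + l)))
    (f := fun y => ENNReal.ofReal ‖f₁ y‖ + ENNReal.ofReal ‖f₂ y‖)
    (J := B * rad l ^ (d + 1) + B * rad l ^ (d + 1)) (t := chebConst d * B * rad l)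
    (m := (rad (32 * d + l) / d) ^ d)
    (h.closed.measurableSet.inter isClosed_closedBall.measurableSet)
    (inter_subset_inter_right _ fun y hy => by
      rw [mem_closedBall] at hy; rw [mem_ball]
      linarith [dist_triangle y w x]) (by positivity) (by positivity)
    (h.le_hausdorffMeasure hs _ hw hw7)
    (by
      rw [lintegral_add_left hf₁.norm.measurable.ennreal_ofReal,
        ENNReal.ofReal_add (by positivity) (by positivity)]
      exact add_le_add h₁ h₂)
    (by
      have e1 : chebConst d * B * rad l * (rad (32 * d + l) / d) ^ d =
          3 * (B * rad l ^ (d + 1)) := by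
        rw [chebConst, rad_add, div_pow, div_pow, mul_pow]
        field_simp
        ring
      have : 0 < B * rad l ^ (d + 1) := by positivity
      linarith)
  rw [← ENNReal.ofReal_add (norm_nonneg _) (norm_nonneg _),
    ENNReal.ofReal_le_ofReal_iff (by positivity)] at hy
  refine ⟨y, hyE, by rwa [← rad_add], ?_, ?_⟩
  · linarith [norm_nonneg (f₂ y)]
  · linarith [norm_nonneg (f₁ y)]

theorem Flat.isClosePlane_of_lintegral (h : Flat E d ε Q)
    (hs : 10000 * (8 * 5 ^ Module.finrank ℝ F) ^ 2 * (100000 * d * ε) ≤ 1) {l : ℕ} (hl : 2 ≤ l)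
    {x : F} (hxE : x ∈ E) (hx : ‖x‖ ≤ 7) {G : F →L[ℝ] F} {c : F} (hG : IsNormal d G)
    {B : ℝ} (hB : 0 < B)
    (hI : ∫⁻ y in E ∩ ball x (rad l), ENNReal.ofReal ‖G (y - c)‖ ∂μH[(d : ℝ)] ≤
      ENNReal.ofReal (B * rad l ^ (d + 1))) (hBε : chebConst d * B ≤ 10 * ε) :
    IsClosePlane d (Q l x) x (rad l) (640 * d * ε) G c := by
  have hr := rad_pos l
  obtain ⟨h1, h2⟩ := h.norm_sub_le (k := l) hxE (by linarith) hG (h.normal l x hxE (by linarith))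
    (c₁ := c) (c₂ := x) (B := 10 * ε) (mul_rad_le_one d) fun w hw hwx => by
      obtain ⟨y, hy, hyw, hy1, -⟩ := h.exists_mem_le hs hl hx (f₁ := fun y => G (y - c))
        (by fun_prop) hB hI hI hw hwx
      refine ⟨y, hy, hyw, hy1.trans (by gcongr), (h.near_plane l x hxE (by linarith) y hy ?_).trans
        (by linarith)⟩
      have : rad (32 * d) * rad l ≤ 1 * rad l := by gcongr; exact rad_le_one _
      linarith [dist_triangle y w x]
  have h3 := h2 x
  rw [sub_self, map_zero, sub_zero, dist_self, zero_add] at h3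
  exact { hG with
    norm_sub_le := by linarith
    norm_le := by linarith }

/-- An almost minimizing plane has almost minimal mean distance to `E`. -/
theorem Flat.lintegral_le_of_almost_min (h : Flat E d ε Q)
    (hs : 10000 * (8 * 5 ^ Module.finrank ℝ F) ^ 2 * (100000 * d * ε) ≤ 1) {k l : ℕ} (hk : 2 ≤ k)
    (hl : l = k ∨ l = k + 1) {x p : F} (hxE : x ∈ E) (hx : ‖x‖ ≤ 7) (hxp : dist x p ≤ 5 * rad k)
    {B : ℝ} (hkB : rad k ≤ B) {G : F →L[ℝ] F} {c : F} (hG : IsNormal d G)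
    (hI : ∫⁻ y in E ∩ ball p (100 * rad k), ENNReal.ofReal ‖G (y - c)‖ ∂μH[(d : ℝ)] ≤
      ENNReal.ofReal (B * (100 * rad k) ^ (d + 1)))
    (hBε : chebConst d * (B * 1000 ^ (d + 1)) ≤ 10 * ε) {Q₁ : F →L[ℝ] F} {c₁ : F}
    (h₁ : ∀ Q' c', IsClosePlane d (Q l x) x (rad l) (640 * d * ε) Q' c' →
      ∫⁻ y in E ∩ ball x (10 * rad l), ENNReal.ofReal ‖Q₁ (y - c₁)‖ ∂μH[(d : ℝ)] ≤
        ∫⁻ y in E ∩ ball x (10 * rad l), ENNReal.ofReal ‖Q' (y - c')‖ ∂μH[(d : ℝ)] +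
          ENNReal.ofReal (rad l * rad l ^ (d + 1))) :
    ∫⁻ y in E ∩ ball x (10 * rad l), ENNReal.ofReal ‖Q₁ (y - c₁)‖ ∂μH[(d : ℝ)] ≤
      ENNReal.ofReal (2 * (B * (100 * rad k) ^ (d + 1))) := by
  have hr := rad_pos k
  have hr' := rad_pos l
  have hB : 0 < B := hr.trans_le hkB
  have hrl : rad l ≤ rad k ∧ rad k ≤ 10 * rad l := by
    rcases hl with rfl | rfl
    · constructor <;> linarith
    · rw [rad_succ]; constructor <;> linarith
  have hJ : B * (100 * rad k) ^ (d + 1) ≤ B * 1000 ^ (d + 1) * rad l ^ (d + 1) := by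
    rw [mul_assoc, ← mul_pow]
    exact mul_le_mul_of_nonneg_left (pow_le_pow_left₀ (by positivity) (by linarith) _) hB.le
  have hG' : ∫⁻ y in E ∩ ball x (10 * rad l), ENNReal.ofReal ‖G (y - c)‖ ∂μH[(d : ℝ)] ≤
      ENNReal.ofReal (B * (100 * rad k) ^ (d + 1)) :=
    (lintegral_mono_set (inter_subset_inter_right _ (ball_subset_ball' (by linarith)))).trans hI
  have hcl := h.isClosePlane_of_lintegral hs (l := l) (by omega) hxE hx hG (by positivity)
    ((lintegral_mono_set (inter_subset_inter_right _
      (ball_subset_ball (by linarith)))).trans (hG'.trans (ENNReal.ofReal_le_ofReal hJ))) hBε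
  refine (h₁ G c hcl).trans ((add_le_add_left hG' _).trans ?_)
  rw [← ENNReal.ofReal_add (by positivity) (by positivity)]
  refine ENNReal.ofReal_le_ofReal ?_
  have h4 : rad l * rad l ^ (d + 1) ≤ B * (100 * rad k) ^ (d + 1) :=
    mul_le_mul (by linarith) (pow_le_pow_left₀ hr'.le (by linarith) _) (by positivity) hB.le
  linarith

/-- The constant relating the coherence of the planes to the mean flatness of `E`. -/
def betaConst (d : ℕ) : ℝ := 10000 * d * (chebConst d * 1000 ^ (d + 1))

/-- Almost minimizing planes at neighbouring points and scales are close. -/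
theorem Flat.norm_sub_le_of_almost_min (h : Flat E d ε Q)
    (hs : 10000 * (8 * 5 ^ Module.finrank ℝ F) ^ 2 * (100000 * d * ε) ≤ 1) {k l : ℕ} (hk : 2 ≤ k)
    (hl : l = k ∨ l = k + 1) {x p : F} (hxE : x ∈ E) (hx : ‖x‖ ≤ 7) (hpE : p ∈ E) (hp : ‖p‖ ≤ 7)
    (hxp : dist x p ≤ 5 * rad k)
    {B : ℝ} (hkB : rad k ≤ B) {G : F →L[ℝ] F} {c : F} (hG : IsNormal d G)
    (hI : ∫⁻ y in E ∩ ball p (100 * rad k), ENNReal.ofReal ‖G (y - c)‖ ∂μH[(d : ℝ)] ≤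
      ENNReal.ofReal (B * (100 * rad k) ^ (d + 1)))
    (hBε : chebConst d * (B * 1000 ^ (d + 1)) ≤ 10 * ε) {L : ℕ → F → F →L[ℝ] F} {e : ℕ → F → F}
    (hL : ∀ l, ∀ x ∈ E, ‖x‖ ≤ 7 → IsNormal d (L l x))
    (hm : ∀ l, ∀ x ∈ E, ‖x‖ ≤ 7 → ∀ Q' c',
      IsClosePlane d (Q l x) x (rad l) (640 * d * ε) Q' c' →
      ∫⁻ y in E ∩ ball x (10 * rad l), ENNReal.ofReal ‖L l x (y - e l x)‖ ∂μH[(d : ℝ)] ≤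
        ∫⁻ y in E ∩ ball x (10 * rad l), ENNReal.ofReal ‖Q' (y - c')‖ ∂μH[(d : ℝ)] +
          ENNReal.ofReal (rad l * rad l ^ (d + 1))) :
    ‖L l x - L k p‖ ≤ betaConst d * B ∧ ∀ z, dist z p ≤ 5 * rad k →
      ‖L l x (z - e l x) - L k p (z - e k p)‖ ≤ betaConst d * B * rad k := by
  have hr := rad_pos k
  have hr' := rad_pos l
  have hB : 0 < B := hr.trans_le hkB
  have hC := chebConst_pos h.dim_pos
  have hrl : rad l ≤ rad k ∧ rad k ≤ 10 * rad l := by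
    rcases hl with rfl | rfl
    · constructor <;> linarith
    · rw [rad_succ]; constructor <;> linarith
  have h1 := h.lintegral_le_of_almost_min hs hk hl hxE hx hxp hkB hG hI hBε (hm l x hxE hx)
  have h2 := h.lintegral_le_of_almost_min hs hk (Or.inl rfl) hpE hp (by rw [dist_self]; positivity)
    hkB hG hI hBε (hm k p hpE hp)
  have hJ : 2 * (B * (100 * rad k) ^ (d + 1)) ≤ 2 * (B * 1000 ^ (d + 1)) * rad l ^ (d + 1) := by
    rw [mul_assoc, mul_assoc B, ← mul_pow]
    have := pow_le_pow_left₀ (by positivity) (by linarith : 100 * rad k ≤ 1000 * rad l) (d + 1)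
    gcongr
  have hJ' := ENNReal.ofReal_le_ofReal hJ
  have h1' := (lintegral_mono_set (inter_subset_inter_right E (ball_subset_ball (x := x)
    (by linarith : rad l ≤ 10 * rad l)))).trans (h1.trans hJ')
  have h2' := (lintegral_mono_set (inter_subset_inter_right E (ball_subset_ball'
    (by linarith : rad l + dist x p ≤ 10 * rad k)))).trans (h2.trans hJ')
  obtain ⟨h3, h4⟩ := h.norm_sub_le (k := l) hxE (by linarith) (hL l x hxE hx) (hL k p hpE hp)
    (c₁ := e l x) (c₂ := e k p) (mul_rad_le_one d) fun w hw hwx => h.exists_mem_le hs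
      (by omega : 2 ≤ l) hx (f₁ := fun y => L l x (y - e l x)) (f₂ := fun y => L k p (y - e k p))
      (by fun_prop) (by positivity) h1' h2' hw hwx
  have hA : 64 * d * (chebConst d * (2 * (B * 1000 ^ (d + 1)))) * 12 ≤ betaConst d * B := by
    have : 0 ≤ d * (chebConst d * (B * 1000 ^ (d + 1))) := by positivity
    rw [betaConst]
    linarith
  have hA0 : 0 ≤ 64 * d * (chebConst d * (2 * (B * 1000 ^ (d + 1)))) := by positivity
  refine ⟨h3.trans (by linarith), fun z hz => (h4 z).trans ?_⟩
  have h5 : dist z x + rad l ≤ 12 * rad k := by linarith [dist_triangle_right z x p]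
  refine (mul_le_mul_of_nonneg_left h5 hA0).trans ?_
  rw [← mul_assoc]
  exact mul_le_mul_of_nonneg_right hA hr.le

/-- Almost minimizing planes form a coherent system, with coherence controlled by the mean flatness
`β` of `E`. -/
theorem Flat.exists_planeSys (h : Flat E d ε Q)
    (hs : 10000 * (8 * 5 ^ Module.finrank ℝ F) ^ 2 * (100000 * d * ε) ≤ 1) {β : ℕ → F → ℝ}
    (hβ0 : ∀ k p, 0 ≤ β k p)
    (hβ : ∀ k, ∀ p ∈ E, ‖p‖ ≤ 7 → ∀ η > 0, ∃ G c, IsNormal d G ∧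
      ∫⁻ y in E ∩ ball p (rad k), ENNReal.ofReal ‖G (y - c)‖ ∂μH[(d : ℝ)] ≤
        ENNReal.ofReal ((β k p + η) * rad k ^ (d + 1))) :
    ∃ c L b, (∀ k p, b (k + 2) p ≤ betaConst d * (β k p + rad (k + 2))) ∧ ∀ X θ,
      PlaneSys ⟨c, L, b, X, θ⟩ E 7 (100000 * d * ε) ∧
      Initial ⟨c, L, b, X, θ⟩ E (100000 * d * ε) (Q 0 0) 0 := by
  have hε := h.nonneg
  have hd : (1 : ℝ) ≤ d := by exact_mod_cast h.dim_pos
  have hdε : ε ≤ d * ε := by nlinarith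
  have hC := chebConst_pos h.dim_pos
  have hmin : ∀ k x, ∃ Q₁ c₁, x ∈ E → ‖x‖ ≤ 7 →
      IsClosePlane d (Q k x) x (rad k) (640 * d * ε) Q₁ c₁ ∧ ∀ Q' c',
      IsClosePlane d (Q k x) x (rad k) (640 * d * ε) Q' c' →
      ∫⁻ y in E ∩ ball x (10 * rad k), ENNReal.ofReal ‖Q₁ (y - c₁)‖ ∂μH[(d : ℝ)] ≤
        ∫⁻ y in E ∩ ball x (10 * rad k), ENNReal.ofReal ‖Q' (y - c')‖ ∂μH[(d : ℝ)] +
          ENNReal.ofReal (rad k * rad k ^ (d + 1)) := fun k x => by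
    by_cases hx : x ∈ E ∧ ‖x‖ ≤ 7
    · have hr := rad_pos k
      obtain ⟨Q₁, c₁, h1⟩ := exists_almost_min (h.normal k x hx.1 (by linarith [hx.2])) (x := x)
        (η := 640 * d * ε) (by positivity) hr.le (μH[(d : ℝ)].restrict (E ∩ ball x (10 * rad k)))
        (by positivity : 0 < rad k * rad k ^ (d + 1))
      exact ⟨Q₁, c₁, fun _ _ => h1⟩
    · exact ⟨0, 0, fun h1 h2 => absurd ⟨h1, h2⟩ hx⟩
  choose L e hLe using hmin
  have hclose : ∀ k, ∀ x ∈ E, ‖x‖ ≤ 7 → IsClosePlane d (Q k x) x (rad k) (640 * d * ε) (L k x)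
    (e k x) := fun k x hx hx7 => (hLe k x hx hx7).1
  let b : ℕ → F → ℝ := fun k p => if k < 2 then 100000 * d * ε else
    min (100000 * d * ε) (betaConst d * (β (k - 2) p + rad k))
  have hbc : 0 ≤ betaConst d := by unfold betaConst; positivity
  have hcoarse : ∀ k l, l = k ∨ l = k + 1 → ∀ x ∈ E, ‖x‖ ≤ 7 → ∀ p ∈ E, ‖p‖ ≤ 7 →
      dist x p ≤ 5 * rad k → ‖L l x - L k p‖ ≤ 100000 * d * ε ∧ ∀ z, dist z p ≤ 5 * rad k →
      ‖L l x (z - e l x) - L k p (z - e k p)‖ ≤ 100000 * d * ε * rad k := by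
    intro k l hl x hx hx7 p hp hp7 hxp
    have hr := rad_pos k
    have hrl : rad l ≤ rad k := by
      rcases hl with rfl | rfl
      · exact le_rfl
      · rw [rad_succ]; linarith
    obtain ⟨h1, h2⟩ := h.norm_sub_le_of_dist hl hx (by linarith) hp (by linarith)
      (by linarith : dist x p ≤ 9 * rad k)
    have h3 := hclose l x hx hx7
    have h4 := hclose k p hp hp7
    refine ⟨?_, fun z hz => ?_⟩
    · have e1 : L l x - L k p = (L l x - Q l x) + (Q l x - Q k p) - (L k p - Q k p) := by abel
      rw [e1]
      refine (_root_.norm_sub_le _ _).trans ?_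
      linarith [norm_add_le (L l x - Q l x) (Q l x - Q k p), h3.norm_sub_le, h4.norm_sub_le]
    · have e1 : L l x (z - e l x) - L k p (z - e k p) =
          (L l x (z - e l x) - Q l x (z - x)) + (Q l x (z - x) - Q k p (z - p)) -
            (L k p (z - e k p) - Q k p (z - p)) := by abel
      rw [e1]
      refine (_root_.norm_sub_le _ _).trans ?_
      have h5 := norm_add_le (L l x (z - e l x) - Q l x (z - x)) (Q l x (z - x) - Q k p (z - p))
      have h6 := h3.norm_apply_sub_le z
      have h7 := h4.norm_apply_sub_le z
      have h8 := h2 z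
      have hz' : dist z x ≤ 10 * rad k := by linarith [dist_triangle_right z x p]
      have h0 : 0 ≤ d * ε := by positivity
      have h9 := mul_le_mul_of_nonneg_left (by linarith : dist z x + rad l ≤ 11 * rad k) h0
      have h10 := mul_le_mul_of_nonneg_left (by linarith : dist z x + rad k ≤ 11 * rad k) h0
      have h11 := mul_le_mul_of_nonneg_left (by linarith : dist z p + rad k ≤ 6 * rad k) h0
      have := mul_nonneg h0 hr.le
      linarith
  have hfine : ∀ k l, l = k ∨ l = k + 1 → ∀ x ∈ E, ‖x‖ ≤ 7 → ∀ p ∈ E, ‖p‖ ≤ 7 →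
      dist x p ≤ 5 * rad k → ‖L l x - L k p‖ ≤ b k p ∧ ∀ z, dist z p ≤ 5 * rad k →
      ‖L l x (z - e l x) - L k p (z - e k p)‖ ≤ b k p * rad k := by
    intro k l hl x hx hx7 p hp hp7 hxp
    have hr := rad_pos k
    have hc := hcoarse k l hl x hx hx7 p hp hp7 hxp
    by_cases hk : k < 2
    · simpa only [b, if_pos hk] using hc
    simp only [b, if_neg hk]
    set B := β (k - 2) p + rad k with hBdef
    have hB : rad k ≤ B := le_add_of_nonneg_left (hβ0 _ _)
    rcases le_or_gt (chebConst d * (B * 1000 ^ (d + 1))) (10 * ε) with hBε | hBε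
    · obtain ⟨G, c, hG, hI⟩ := hβ (k - 2) p hp hp7 (rad k) hr
      have hrk : rad (k - 2) = 100 * rad k := by
        obtain ⟨i, rfl⟩ : ∃ i, k = i + 2 := ⟨k - 2, by omega⟩
        rw [Nat.add_sub_cancel, rad_succ, rad_succ]; ring
      rw [hrk] at hI
      have hf := h.norm_sub_le_of_almost_min hs (not_lt.1 hk) hl hx hx7 hp hp7 hxp hB hG hI hBε
        (fun l x hx hx7 => (hclose l x hx hx7).toIsNormal) fun l x hx hx7 => (hLe l x hx hx7).2
      refine ⟨le_min hc.1 hf.1, fun z hz => ?_⟩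
      rw [min_mul_of_nonneg _ _ hr.le]
      exact le_min (hc.2 z hz) (hf.2 z hz)
    · have : 100000 * d * ε ≤ betaConst d * B := by
        have := mul_le_mul_of_nonneg_left hBε.le (by positivity : (0 : ℝ) ≤ 10000 * d)
        rw [betaConst]
        linarith
      rwa [min_eq_left this]
  have hcmp : ∀ k, ∀ x ∈ E, ‖x‖ ≤ 7 → ∀ z, dist z x ≤ 5 * rad k →
      ‖L k x (z - e k x) - Q k x (z - x)‖ ≤ 3840 * (d * ε * rad k) := fun k x hx hx7 z hz => by
    refine ((hclose k x hx hx7).norm_apply_sub_le z).trans ?_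
    have := mul_le_mul_of_nonneg_left (by linarith : dist z x + rad k ≤ 6 * rad k)
      (by positivity : 0 ≤ d * ε)
    linarith
  have hrε : ∀ k, 0 ≤ d * ε * rad k ∧ ε * rad k ≤ d * ε * rad k := fun k => by
    have := rad_pos k
    exact ⟨by positivity, by gcongr⟩
  have hnear : ∀ k, ∀ x ∈ E, ‖x‖ ≤ 7 → ∀ y ∈ E, dist y x ≤ 5 * rad k →
      ‖L k x (y - e k x)‖ ≤ 100000 * d * ε * rad k := fun k x hx hx7 y hy hyx => by
    have h1 := hcmp k x hx hx7 y hyx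
    have h2 := h.near_plane k x hx (by linarith) y hy (by linarith [rad_pos k])
    have h3 := norm_le_norm_add_norm_sub (Q k x (y - x)) (L k x (y - e k x))
    rw [norm_sub_rev] at h3
    linarith [hrε k]
  have hset : ∀ k, ∀ x ∈ E, ‖x‖ ≤ 7 → ∀ z, L k x (z - e k x) = 0 → dist z x ≤ 5 * rad k →
      infDist z E ≤ 100000 * d * ε * rad k := fun k x hx hx7 z hz hzx => by
    have h1 := hcmp k x hx hx7 z hzx
    rw [hz, zero_sub, norm_neg] at h1
    have hQ := h.normal k x hx (by linarith)
    have h2 := h.near_set k x hx (by linarith) (z - Q k x (z - x))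
      (by rw [sub_right_comm, map_sub, hQ.idem, sub_self])
      (by
        rw [dist_eq_norm, sub_right_comm]
        rw [dist_eq_norm] at hzx
        linarith [hQ.norm_sub_apply_le (z - x), rad_pos k])
    have h3 := infDist_le_infDist_add_dist (s := E) (x := z) (y := z - Q k x (z - x))
    rw [dist_eq_norm, sub_sub_cancel] at h3
    linarith [hrε k]
  have hrε0 := hrε 0
  rw [rad_zero, mul_one, mul_one] at hrε0
  refine ⟨e, L, b, fun k p => by simp [b], fun X θ => ⟨⟨fun k x hx hx7 =>
    (hclose k x hx hx7).toIsOrthProj, hnear, hset, fun k p => ?_, fun k p => ?_,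
    fun k l hl x hx hx7 p hp hp7 hxp => (hfine k l hl x hx hx7 p hp hp7 hxp).1,
    fun k l hl x hx hx7 p hp hp7 hxp => (hfine k l hl x hx hx7 p hp hp7 hxp).2⟩,
    ⟨(h.normal 0 0 h.zero_mem (by simp)).toIsOrthProj, fun x hx hx7 => ?_, fun x hx hx7 z hz => ?_,
      fun a ha ha6 => ?_, fun x hx hx1 => ?_⟩⟩⟩
  · dsimp only [b]
    split_ifs
    · positivity
    · exact le_min (by positivity) (mul_nonneg hbc (add_nonneg (hβ0 _ _) (rad_pos _).le))
  · dsimp only [b]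
    split_ifs
    · exact le_rfl
    · exact min_le_left _ _
  · have h1 := (h.norm_sub_le_of_dist (k := 0) (Or.inl rfl) hx (by linarith) h.zero_mem (by simp)
      (by rw [dist_zero_right, rad_zero]; linarith)).1
    have h2 := (hclose 0 x hx hx7).norm_sub_le
    have := norm_sub_le_norm_sub_add_norm_sub (L 0 x) (Q 0 x) (Q 0 0)
    linarith
  · have h1 := (h.norm_sub_le_of_dist (k := 0) (Or.inl rfl) hx (by linarith) h.zero_mem (by simp)
      (by rw [dist_zero_right, rad_zero]; linarith)).2 z
    have h2 := hcmp 0 x hx hx7 z (by rwa [rad_zero, mul_one])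
    have := norm_sub_le_norm_sub_add_norm_sub (L 0 x (z - e 0 x)) (Q 0 x (z - x)) (Q 0 0 (z - 0))
    have := mul_le_mul_of_nonneg_left (by linarith : dist z x + 1 ≤ 6) hrε0.1
    rw [rad_zero] at h1 h2
    dsimp only [PlaneData.N]
    linarith
  · have h1 := h.near_set 0 0 h.zero_mem (by simp) a ha
      (by rw [dist_zero_right, rad_zero]; linarith)
    obtain ⟨p, hp, hap⟩ := h.closed.exists_infDist_eq_dist ⟨0, h.zero_mem⟩ a
    rw [hap, rad_zero] at h1
    exact ⟨p, hp, by rw [rad_zero]; linarith⟩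
  · have h1 := h.near_plane 0 0 h.zero_mem (by simp) x hx
      (by rw [dist_zero_right, rad_zero]; linarith)
    rw [rad_zero] at h1
    linarith

end Lsys

section Final

/-- The normal projection of an affine plane. -/
theorem IsAffinePlane.exists_isNormal {n d : ℕ} {P : Set (V n)} (hP : IsAffinePlane n d P) :
    ∃ N : V n →L[ℝ] V n, IsNormal d N ∧ ∀ c ∈ P, {z | N (z - c) = 0} = P ∧
      ∀ y, infDist y P = ‖N (y - c)‖ := by
  obtain ⟨A, rfl, hdim, -⟩ := hP
  set K := A.direction
  have hker : LinearMap.ker (Kᗮ.starProjection : V n →ₗ[ℝ] V n) = K := by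
    have := Kᗮ.ker_starProjection
    rwa [Submodule.orthogonal_orthogonal] at this
  have hker' : ∀ v, Kᗮ.starProjection v = 0 ↔ v ∈ K := fun v =>
    LinearMap.mem_ker.symm.trans (by rw [hker])
  have hN : IsNormal d Kᗮ.starProjection :=
    { symm := Kᗮ.starProjection_isSymmetric
      idem := fun x => congrArg (fun T => T x) Kᗮ.isIdempotentElem_starProjection.eq
      dim := by rw [hker, hdim] }
  refine ⟨Kᗮ.starProjection, hN, fun c hc => ?_⟩
  have hmem : ∀ z, Kᗮ.starProjection (z - c) = 0 ↔ z ∈ A := fun z => by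
    rw [hker', ← vsub_eq_sub, AffineSubspace.vsub_right_mem_direction_iff_mem hc]
  refine ⟨Set.ext hmem, fun y => le_antisymm ?_ ((le_infDist ⟨c, hc⟩).2 fun z hz => ?_)⟩
  · have h1 : y - Kᗮ.starProjection (y - c) ∈ A := by
      rw [← hmem, sub_right_comm, map_sub, hN.idem, sub_self]
    refine (infDist_le_dist_of_mem h1).trans_eq ?_
    rw [dist_eq_norm, sub_sub_cancel]
  · rw [← sub_add_sub_cancel y z c, map_add, (hmem z).2 hz, add_zero, dist_eq_norm]
    exact hN.norm_apply_le _

theorem exists_plane_of_beta1_lt {n d : ℕ} {E : Set (V n)} {x : V n} {r t : ℝ} (hr : 0 < r)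
    (ht : 0 ≤ t) (h : beta1 n d E x r < ENNReal.ofReal t) : ∃ G c, IsNormal d G ∧
      ∫⁻ y in E ∩ ball x r, ENNReal.ofReal ‖G (y - c)‖ ∂μH[(d : ℝ)] ≤
        ENNReal.ofReal (t * r ^ (d + 1)) := by
  simp only [beta1, iInf_lt_iff] at h
  obtain ⟨P, ⟨hP, c, hc, -⟩, hlt⟩ := h
  obtain ⟨G, hG, hGP⟩ := hP.exists_isNormal
  refine ⟨G, c, hG, ?_⟩
  have h1 := (ENNReal.div_le_iff (by simpa using pow_pos hr d) ENNReal.ofReal_ne_top).1 hlt.le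
  calc ∫⁻ y in E ∩ ball x r, ENNReal.ofReal ‖G (y - c)‖ ∂μH[(d : ℝ)]
      = ∫⁻ y in E ∩ ball x r, ENNReal.ofReal r * ENNReal.ofReal (infDist y P / r) ∂μH[(d : ℝ)] := by
        congr 1 with y
        rw [← ENNReal.ofReal_mul hr.le, mul_div_cancel₀ _ hr.ne', (hGP c hc).2]
    _ = ENNReal.ofReal r * ∫⁻ y in E ∩ ball x r, ENNReal.ofReal (infDist y P / r) ∂μH[(d : ℝ)] :=
        lintegral_const_mul' _ _ ENNReal.ofReal_ne_top
    _ ≤ ENNReal.ofReal r * (ENNReal.ofReal t * ENNReal.ofReal (r ^ d)) := by gcongr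
    _ = ENNReal.ofReal (t * r ^ (d + 1)) := by
        rw [← ENNReal.ofReal_mul ht, ← ENNReal.ofReal_mul hr.le]; congr 1; ring

theorem sum_rad_le (m : ℕ) : ∑ i ∈ Finset.range m, rad i ≤ 2 * (1 - rad m) := by
  induction m with
  | zero => simp [rad_zero]
  | succ m ih => rw [Finset.sum_range_succ, rad_succ]; linarith [rad_pos m]

/-- Square summability of the coherence bounds. -/
theorem sum_sq_le {b β : ℕ → ℝ} {M δ C : ℝ} (hδ : δ ≤ 1) (hb0 : ∀ k, 0 ≤ b k)
    (hb : ∀ k, b k ≤ δ) (hβ : ∀ k, b (k + 2) ≤ C * (β k + rad (k + 2)))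
    (hM : ∀ m, ∑ i ∈ Finset.range m, β i ^ 2 ≤ M) (m : ℕ) :
    ∑ i ∈ Finset.range m, b i ^ 2 ≤ 2 + 2 * C ^ 2 * (M + 2) := by
  have h1 : ∀ i, b i ^ 2 ≤ 1 := fun i => pow_le_one₀ (hb0 i) ((hb i).trans hδ)
  calc ∑ i ∈ Finset.range m, b i ^ 2 ≤ ∑ i ∈ Finset.range (m + 2), b i ^ 2 :=
        Finset.sum_le_sum_of_subset_of_nonneg (by simp) fun _ _ _ => sq_nonneg _
    _ = ∑ i ∈ Finset.range m, b (i + 2) ^ 2 + b 1 ^ 2 + b 0 ^ 2 := by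
        rw [Finset.sum_range_succ', Finset.sum_range_succ']
    _ ≤ ∑ i ∈ Finset.range m, 2 * C ^ 2 * (β i ^ 2 + rad i) + 1 + 1 := by
        gcongr with i
        · have h2 : b (i + 2) ^ 2 ≤ (C * (β i + rad (i + 2))) ^ 2 :=
            pow_le_pow_left₀ (hb0 _) (hβ i) 2
          have h3 : rad (i + 2) ^ 2 ≤ rad i := by
            have := rad_le_one (i + 2)
            have := rad_anti (Nat.le_add_right i 2)
            nlinarith [rad_pos (i + 2)]
          have h4 : (β i + rad (i + 2)) ^ 2 ≤ 2 * (β i ^ 2 + rad i) := by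
            nlinarith [sq_nonneg (β i - rad (i + 2))]
          rw [mul_pow] at h2
          nlinarith [sq_nonneg C]
        · exact h1 1
        · exact h1 0
    _ ≤ _ := by
        rw [← Finset.mul_sum, Finset.sum_add_distrib]
        have h2 : ∑ i ∈ Finset.range m, β i ^ 2 + ∑ i ∈ Finset.range m, rad i ≤ M + 2 := by
          linarith [hM m, sum_rad_le m, rad_pos m]
        nlinarith [mul_le_mul_of_nonneg_left h2 (sq_nonneg C)]

theorem rad_eq_zpow (k : ℕ) : (10 : ℝ) ^ (-(k : ℤ)) = rad k := by
  rw [zpow_neg, zpow_natCast, rad, one_div, inv_pow]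

theorem sum_toReal_sq_le {f : ℕ → ℝ≥0∞} {M : ℝ} (hf : ∑' k, f k ^ 2 ≤ ENNReal.ofReal M) (m : ℕ) :
    ∑ i ∈ Finset.range m, (f i).toReal ^ 2 ≤ max M 0 := by
  have h1 : ∑ i ∈ Finset.range m, f i ^ 2 ≤ ENNReal.ofReal M := (ENNReal.sum_le_tsum _).trans hf
  have h2 := ENNReal.toReal_mono ENNReal.ofReal_ne_top h1
  rw [ENNReal.toReal_ofReal', ENNReal.toReal_sum fun i hi =>
    ne_top_of_le_ne_top (ENNReal.ofReal_ne_top (r := M))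
      ((Finset.single_le_sum_of_canonicallyOrdered hi).trans h1)] at h2
  simpa only [ENNReal.toReal_pow] using h2

end Final

/-- **Theorem 1.18**: if `J₁(x) = Σ_k β₁(x,10^{-k})² ≤ M` on `E ∩ B(0,10)`,
the Reifenberg parameterization is bi-Lipschitz, with a constant depending
only on `n`, `d`, `M`. -/
theorem thm_1_18 (n d : ℕ) (hd : 0 < d) (hdn : d < n) :
    ∃ ε : ℝ, 0 < ε ∧
    ∀ M : ℝ, ∃ C : ℝ, 1 ≤ C ∧
      ∀ E : Set (V n), IsClosed E → (0 : V n) ∈ E →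
      ∀ P : V n → ℝ → Set (V n),
      (∀ x ∈ E ∩ ball (0 : V n) 10, ∀ r : ℝ, 0 < r → r ≤ 10 →
        IsAffinePlane n d (P x r) ∧ x ∈ P x r ∧
        (∀ y ∈ E ∩ ball x r, infDist y (P x r) ≤ ε * r) ∧
        (∀ y ∈ P x r ∩ ball x r, infDist y E ≤ ε * r)) →
      -- `J₁(x) ≤ M` on `E ∩ B(0,10)`
      (∀ x ∈ E ∩ ball (0 : V n) 10,
        (∑' k : ℕ, beta1 n d E x ((10 : ℝ) ^ (-(k : ℤ))) ^ 2) ≤ ENNReal.ofReal M) →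
      ∃ g : V n → V n, Function.Bijective g ∧
        E ∩ ball (0 : V n) 1 = g '' (P 0 10) ∩ ball (0 : V n) 1 ∧
        ∀ x y : V n,
          C⁻¹ * dist x y ≤ dist (g x) (g y) ∧ dist (g x) (g y) ≤ C * dist x y := by
  obtain ⟨Λ, hΛ⟩ : ∃ Λ : ℝ, Λ = 8 * 5 ^ Module.finrank ℝ (V n) := ⟨_, rfl⟩
  have hΛ1 : 1 ≤ Λ := by
    have : (1 : ℝ) ≤ 5 ^ Module.finrank ℝ (V n) := one_le_pow₀ (by norm_num)
    linarith
  have hd1 : (1 : ℝ) ≤ d := by exact_mod_cast hd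
  obtain ⟨ε, hε⟩ : ∃ ε : ℝ, ε = 1 / (10 ^ 10 * Λ ^ 2 * d) := ⟨_, rfl⟩
  have hε0 : 0 < ε := by rw [hε]; positivity
  have hεΛ : 10 ^ 10 * Λ ^ 2 * (d * ε) = 1 := by rw [hε]; field_simp
  have hdε : 10 ^ 10 * (d * ε) ≤ 1 := by
    nlinarith [one_le_pow₀ (n := 2) hΛ1, mul_pos (zero_lt_one.trans_le hd1) hε0]
  refine ⟨ε, hε0, fun M => ?_⟩
  obtain ⟨A, hA⟩ : ∃ A : ℝ, A = Real.exp (400 * Λ ^ 2 *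
    (1 + 2 * (2 + 2 * betaConst d ^ 2 * (max M 0 + 2)))) := ⟨_, rfl⟩
  have hA1 : 1 ≤ A := by
    rw [hA]
    have := le_max_right M 0
    exact Real.one_le_exp (by positivity)
  refine ⟨44 * A, by linarith, fun E hE h0 P hP hJ => ?_⟩
  have hNex : ∀ k x, ∃ N : V n →L[ℝ] V n, x ∈ E → ‖x‖ < 10 → IsNormal d N ∧
      {z | N (z - x) = 0} = P x (10 * rad k) ∧ ∀ y, infDist y (P x (10 * rad k)) = ‖N (y - x)‖ := by
    intro k x
    by_cases hx : x ∈ E ∧ ‖x‖ < 10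
    · obtain ⟨h1, h2, -⟩ := hP x ⟨hx.1, by simpa using hx.2⟩ (10 * rad k)
        (by linarith [rad_pos k]) (by linarith [rad_le_one k])
      obtain ⟨N, hN, h3⟩ := h1.exists_isNormal
      exact ⟨N, fun _ _ => ⟨hN, h3 x h2⟩⟩
    · exact ⟨0, fun h1 h2 => absurd ⟨h1, h2⟩ hx⟩
  choose Q hQ using hNex
  have hflat : Flat E d ε Q :=
    { closed := hE
      zero_mem := h0
      nonneg := hε0.le
      small := by linarith
      dim_pos := hd
      normal := fun k x hx hx10 => (hQ k x hx hx10).1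
      near_plane := fun k x hx hx10 y hy hyx => by
        rw [← (hQ k x hx hx10).2.2]
        refine ((hP x ⟨hx, by simpa using hx10⟩ (10 * rad k)
          (by linarith [rad_pos k]) (by linarith [rad_le_one k])).2.2.1 y ⟨hy, hyx⟩).trans_eq ?_
        ring
      near_set := fun k x hx hx10 z hz hzx => by
        have hzP : z ∈ P x (10 * rad k) := by rw [← (hQ k x hx hx10).2.1]; exact hz
        refine ((hP x ⟨hx, by simpa using hx10⟩ (10 * rad k)
          (by linarith [rad_pos k]) (by linarith [rad_le_one k])).2.2.2 z ⟨hzP, hzx⟩).trans_eq ?_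
        ring }
  have hs : 10000 * (8 * 5 ^ Module.finrank ℝ (V n)) ^ 2 * (100000 * d * ε) ≤ 1 := by
    rw [← hΛ]; linarith
  simp only [rad_eq_zpow] at hJ
  obtain ⟨c, L, b, hb, hsys⟩ := hflat.exists_planeSys hs
    (β := fun k x => (beta1 n d E x (rad k)).toReal) (fun _ _ => ENNReal.toReal_nonneg)
    fun k p hp hp7 η hη => by
      have hfin : beta1 n d E p (rad k) ≠ ⊤ := fun htop => by
        have h1 := (ENNReal.le_tsum k).trans (hJ p ⟨hp, by simpa using by linarith⟩)
        simp [htop] at h1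
      refine exists_plane_of_beta1_lt (rad_pos k) (by positivity) ?_
      rw [ENNReal.ofReal_add ENNReal.toReal_nonneg hη.le, ENNReal.ofReal_toReal hfin]
      exact ENNReal.lt_add_right hfin (by simpa using hη)
  obtain ⟨X, θ, hS⟩ := (hsys (fun _ => ∅) 0).1.exists_setup hE (by positivity) hs
  rw [← hΛ] at hS
  obtain ⟨g, hg, hgE, hgd⟩ := hS.exists_param (hsys X θ).2 h0 hA1 fun p hp hp7 m => by
    rw [hA]
    refine distortion_le hS.δ_nonneg (by linarith) (sum_sq_le (δ := 100000 * d * ε) (by linarith)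
      (fun k => hS.b_nonneg k p) (fun k => hS.b_le k p) (fun k => hb k p) (fun m => ?_) m)
    exact sum_toReal_sq_le (hJ p ⟨hp, by simpa using by linarith⟩) m
  have hP0 : {z | Q 0 0 (z - 0) = 0} = P 0 10 := by
    simpa [rad_zero] using (hQ 0 0 h0 (by simp)).2.1
  refine ⟨g, hg, by rwa [hP0] at hgE, fun x y => ⟨?_, (hgd x y).1⟩⟩
  rw [inv_mul_le_iff₀ (by positivity)]
  exact (hgd x y).2
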